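/- arXiv:1405.1165 — 2 statements merged into one kernel-verified Lean document; each statement's English description precedes it below -/
import Mathlib

section
/- Let d ≥ 1 and a > 2b > 0. Then there exists ȳ ∈ (0, π/2) such that the solution Q of the radial ODE u'' + ((d−1)/r)u' + F(u) = 0 with Q(0) = ȳ and Q'(0) = 0 satisfies: Q is positive and strictly decreasing on [0,∞), (Q(r), Q'(r)) → (0, 0) as r → ∞, and there exists a constant C > 0 such that Q(r)·r^{(d−1)/2}·e^{√b·r} → C and Q'(r)·r^{(d−1)/2}·e^{√b·r} → −√b·C as r → ∞. Moreover ȳ = arcsin(√(2b/a)) when d = 1, and ȳ ∈ (arcsin(√(2b/a)), π/2) when d ≥ 2. -/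
open Real Filter

noncomputable section

/-- The nonlinearity `F(x) = (a/2)·sin(2x)·(sin²x − b/a)`. -/
def Fnl (a b x : ℝ) : ℝ := (a / 2) * Real.sin (2 * x) * (Real.sin x ^ 2 - b / a)

/-- `u` solves the radial ODE `u'' + ((d−1)/r)u' + F(u) = 0` on `(0,∞)` with `u'(0) = 0`. -/
def IsRadialSol (d : ℕ) (a b : ℝ) (u : ℝ → ℝ) : Prop :=
  ContDiff ℝ 2 u ∧ deriv u 0 = 0 ∧
  ∀ r : ℝ, 0 < r →
    deriv (deriv u) r + (((d : ℝ) - 1) / r) * deriv u r + Fnl a b (u r) = 0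

lemma Fnl_eq {a b : ℝ} (ha : 0 < a) (x : ℝ) :
    Fnl a b x = sin x * cos x * (a * sin x ^ 2 - b) := by
  unfold Fnl
  rw [sin_two_mul]
  field_simp

lemma Fnl_cont {a b : ℝ} : Continuous (Fnl a b) := by
  unfold Fnl
  fun_prop

lemma Fnl_hasDeriv {a b : ℝ} (ha : 0 < a) (x : ℝ) :
    HasDerivAt (Fnl a b) ((cos x ^ 2 - sin x ^ 2) * (a * sin x ^ 2 - b)
      + 2 * a * sin x ^ 2 * cos x ^ 2) x := by
  have h : Fnl a b = fun x => sin x * cos x * (a * sin x ^ 2 - b) := funext (Fnl_eq ha)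
  rw [h]
  have h1 := ((hasDerivAt_sin x).mul (hasDerivAt_cos x)).mul
    ((((hasDerivAt_sin x).pow 2).const_mul a).sub_const b)
  refine h1.congr_deriv ?_
  simp
  ring

lemma Fnl_deriv_bound {a b : ℝ} (ha : 0 < a) (hb : 0 < b) (x : ℝ) :
    |(cos x ^ 2 - sin x ^ 2) * (a * sin x ^ 2 - b) + 2 * a * sin x ^ 2 * cos x ^ 2|
      ≤ 3 * a + b := by
  have h1 := sin_sq_add_cos_sq x
  have hs := sq_nonneg (sin x)
  have hc := sq_nonneg (cos x)
  generalize sin x ^ 2 = s at *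
  have hc' : cos x ^ 2 = 1 - s := by linarith
  rw [hc'] at hc ⊢
  have : 0 ≤ s * (1 - s) := mul_nonneg hs hc
  rw [abs_le]
  constructor <;> nlinarith [mul_nonneg ha.le hs, mul_nonneg ha.le hc, mul_nonneg hb.le hs, mul_nonneg hb.le hc, mul_nonneg ha.le this]

lemma Fnl_lip {a b : ℝ} (ha : 0 < a) (hb : 0 < b) (x y : ℝ) :
    |Fnl a b x - Fnl a b y| ≤ (3 * a + b) * |x - y| := by
  have := Convex.norm_image_sub_le_of_norm_hasDerivWithin_le (s := Set.univ) (f := Fnl a b)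
    (f' := fun x => ((cos x ^ 2 - sin x ^ 2) * (a * sin x ^ 2 - b)
      + 2 * a * sin x ^ 2 * cos x ^ 2)) (C := 3 * a + b) (x := y) (y := x)
    (fun x _ => (Fnl_hasDeriv ha x).hasDerivWithinAt)
    (fun x _ => Fnl_deriv_bound ha hb x) convex_univ trivial trivial
  simpa [Real.norm_eq_abs] using this

lemma Fnl_zero {a b : ℝ} : Fnl a b 0 = 0 := by simp [Fnl]

lemma Fnl_abs_le {a b : ℝ} (ha : 0 < a) (hb : 0 < b) (x : ℝ) :
    |Fnl a b x| ≤ (3 * a + b) * |x| := by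
  simpa [Fnl_zero] using Fnl_lip ha hb x 0

lemma Fnl_pi {a b : ℝ} : Fnl a b (π / 2) = 0 := by
  unfold Fnl
  rw [show 2 * (π / 2) = π by ring]
  simp

lemma Fnl_bdd {a b : ℝ} (ha : 0 < a) (hb : 0 < b) (x : ℝ) : |Fnl a b x| ≤ a + b := by
  rw [Fnl_eq ha, abs_mul, abs_mul]
  have h1 := abs_sin_le_one x
  have h2 := abs_cos_le_one x
  have h3 : |a * sin x ^ 2 - b| ≤ a + b := by
    have := sin_sq_le_one x
    have := sq_nonneg (sin x)
    rw [abs_le]; constructor <;> nlinarith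
  have h4 : |sin x| * |cos x| ≤ 1 := by
    nlinarith [abs_nonneg (sin x), abs_nonneg (cos x)]
  nlinarith [abs_nonneg (a * sin x ^ 2 - b), mul_nonneg (abs_nonneg (sin x)) (abs_nonneg (cos x))]

lemma Fnl_pos {a b : ℝ} (ha : 0 < a) {x : ℝ} (h0 : 0 < x) (h1 : x < π / 2)
    (h : b < a * sin x ^ 2) : 0 < Fnl a b x := by
  rw [Fnl_eq ha]
  have := sin_pos_of_pos_of_lt_pi h0 (by linarith [pi_pos])
  have := cos_pos_of_mem_Ioo ⟨by linarith, h1⟩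
  have : 0 < a * sin x ^ 2 - b := by linarith
  positivity

/-- primitive -/
def Gnl (a b x : ℝ) : ℝ := a / 4 * sin x ^ 4 - b / 2 * sin x ^ 2

lemma Gnl_hasDeriv {a b : ℝ} (ha : 0 < a) (x : ℝ) :
    HasDerivAt (Gnl a b) (Fnl a b x) x := by
  rw [Fnl_eq ha]
  have h1 := (((hasDerivAt_sin x).pow 4).const_mul (a / 4)).sub
    (((hasDerivAt_sin x).pow 2).const_mul (b / 2))
  refine h1.congr_deriv ?_
  simp
  ring

lemma Gnl_cont {a b : ℝ} : Continuous (Gnl a b) := by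
  unfold Gnl
  fun_prop

lemma Gnl_eq {a b : ℝ} (x : ℝ) : Gnl a b x = sin x ^ 2 * (a * sin x ^ 2 - 2 * b) / 4 := by
  unfold Gnl; ring

lemma Gnl_zero {a b : ℝ} : Gnl a b 0 = 0 := by simp [Gnl]

lemma Gnl_pi {a b : ℝ} : Gnl a b (π / 2) = (a - 2 * b) / 4 := by simp [Gnl]; ring

lemma Gnl_lower {a b : ℝ} (ha : 0 < a) (hb : 0 < b) (x : ℝ) : - b ≤ Gnl a b x := by
  rw [Gnl_eq]
  have h1 := sin_sq_le_one x
  have h2 := sq_nonneg (sin x)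
  nlinarith [mul_nonneg ha.le (mul_nonneg h2 h2)]

lemma Gnl_upper {a b : ℝ} (ha : 0 < a) (hb : 0 < b) (x : ℝ) : Gnl a b x ≤ a := by
  rw [Gnl_eq]
  have h1 := sin_sq_le_one x
  have h2 := sq_nonneg (sin x)
  nlinarith [mul_nonneg ha.le h2, mul_nonneg hb.le h2, mul_nonneg (mul_nonneg ha.le h2) (sub_nonneg.2 h1)]

lemma Gnl_neg {a b : ℝ} {x : ℝ} (h0 : 0 < x) (h1 : x ≤ π / 2)
    (h : a * sin x ^ 2 < 2 * b) : Gnl a b x < 0 := by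
  rw [Gnl_eq]
  have := sin_pos_of_pos_of_lt_pi h0 (by linarith [pi_pos])
  have : 0 < sin x ^ 2 := by positivity
  nlinarith

lemma Gnl_nonpos {a b : ℝ} {x : ℝ} (h : a * sin x ^ 2 ≤ 2 * b) : Gnl a b x ≤ 0 := by
  rw [Gnl_eq]
  nlinarith [sq_nonneg (sin x)]

lemma Fnl_cubic {a b : ℝ} (ha : 0 < a) (hb : 0 < b) {x : ℝ} (h0 : 0 < x) (h1 : x ≤ 1 / 2) :
    |Fnl a b x + b * x| ≤ (a + b) * x ^ 3 := by
  have e1 : Fnl a b x + b * x = b * (x - sin (2 * x) / 2) + a * (sin x ^ 3 * cos x) := by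
    rw [Fnl_eq ha, sin_two_mul]; ring
  have h2 := sin_gt_sub_cube (x := 2 * x) (by linarith)
  have h3 := sin_lt (x := 2 * x) (by linarith)
  have h4 := sin_lt h0
  have h5 := sin_pos_of_pos_of_le_one h0 (by linarith)
  have h6 := cos_le_one x
  have h7 := cos_pos_of_le_one (x := x) (by rw [abs_of_pos h0]; linarith)
  have h8 : sin x ^ 3 ≤ x ^ 3 := by gcongr
  have h9 : sin x ^ 3 * cos x ≤ x ^ 3 := by
    have : 0 < sin x ^ 3 := by positivity
    nlinarith
  have h10 : 0 ≤ sin x ^ 3 * cos x := by positivity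
  have h11 : 0 ≤ b * (x - sin (2 * x) / 2) := mul_nonneg hb.le (by linarith)
  have h12 : b * (x - sin (2 * x) / 2) ≤ b * x ^ 3 := by
    apply mul_le_mul_of_nonneg_left _ hb.le
    have : 0 < x ^ 3 := by positivity
    nlinarith
  have h13 : a * (sin x ^ 3 * cos x) ≤ a * x ^ 3 := mul_le_mul_of_nonneg_left h9 ha.le
  rw [e1, abs_of_nonneg (by positivity)]
  linarith

/-- increasing derivative facts -/
lemma Fnl_lower {a b : ℝ} (ha : 0 < a) (hb : 0 < b) {l x y : ℝ} (hl : 0 < l) (hlx : l ≤ x) (hxy : x ≤ y)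
    (hy : y < π / 2) (h : 2 * b ≤ a * sin l ^ 2) : sin l * cos y * b ≤ Fnl a b x := by
  rw [Fnl_eq ha]
  have h1 : sin l ≤ sin x := sin_le_sin_of_le_of_le_pi_div_two (by linarith) (by linarith) hlx
  have h2 : cos y ≤ cos x := cos_le_cos_of_nonneg_of_le_pi (by linarith) (by linarith) hxy
  have h3 : 0 < sin l := sin_pos_of_pos_of_lt_pi hl (by linarith)
  have h4 : 0 < cos y := cos_pos_of_mem_Ioo ⟨by linarith, hy⟩
  have h5 : sin l ^ 2 ≤ sin x ^ 2 := by gcongr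
  have h6 : b ≤ a * sin x ^ 2 - b := by nlinarith
  gcongr
  · exact mul_nonneg (by linarith) (by linarith)
  · linarith

lemma stay {f f' : ℝ → ℝ} {r0 m : ℝ} (hm : 0 ≤ m) (hf : ∀ r ≥ r0, HasDerivAt f (f' r) r)
    (h0 : 0 < f r0) (h : ∀ r ≥ r0, 0 < f r → m ≤ f' r) :
    ∀ r ≥ r0, f r0 + m * (r - r0) ≤ f r := by
  have key : ∀ r ≥ r0, (∀ s, r0 ≤ s → s < r → 0 < f s) → f r0 + m * (r - r0) ≤ f r := by
    intro r hr hs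
    have := (convex_Icc r0 r).mul_sub_le_image_sub_of_le_deriv (f := f) (C := m)
      (fun x hx => (hf x hx.1).continuousAt.continuousWithinAt)
      (fun x hx => by
        rw [interior_Icc] at hx
        exact (hf x hx.1.le).differentiableAt.differentiableWithinAt)
      (fun x hx => by
        rw [interior_Icc] at hx
        rw [(hf x hx.1.le).deriv]
        exact h x hx.1.le (hs x hx.1.le hx.2))
      r0 (Set.left_mem_Icc.2 hr) r (Set.right_mem_Icc.2 hr) hr
    linarith
  intro r hr
  apply key r hr
  by_contra hcon
  push Not at hcon
  obtain ⟨s, hs1, hs2, hs3⟩ := hcon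
  have hc : IsCompact (Set.Icc r0 r ∩ f ⁻¹' (Set.Iic 0)) := by
    refine isCompact_Icc.of_isClosed_subset ?_ Set.inter_subset_left
    exact ContinuousOn.preimage_isClosed_of_isClosed
      (fun x hx => (hf x hx.1).continuousAt.continuousWithinAt) isClosed_Icc isClosed_Iic
  obtain ⟨t, ht, ht'⟩ := hc.exists_isLeast ⟨s, ⟨hs1, hs2.le⟩, hs3⟩
  have h2 := key t ht.1.1 (fun s hs hst => by
    by_contra hneg
    exact absurd (ht' ⟨⟨hs, hst.le.trans ht.1.2⟩, not_lt.1 hneg⟩) (not_le.2 hst))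
  have h3 : f t ≤ 0 := ht.2
  nlinarith [ht.1.1]

lemma blowup {f f' : ℝ → ℝ} {r0 : ℝ} (hf : ∀ r ≥ r0, HasDerivAt f (f' r) r)
    (h0 : ∀ r ≥ r0, 0 < f r) (h : ∀ r ≥ r0, f r ^ 2 ≤ f' r) : False := by
  have h1 : ∀ r ≥ r0, HasDerivAt (fun r => - (f r)⁻¹) (f' r / f r ^ 2) r := fun r hr => by
    refine ((hf r hr).inv (h0 r hr).ne').neg.congr_deriv ?_
    ring
  have h2 : ∀ r ≥ r0, 1 ≤ f' r / f r ^ 2 := fun r hr => by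
    have := h0 r hr
    rw [le_div_iff₀ (by positivity)]; linarith [h r hr]
  have h3 := stay (f := fun r => 1 + (f r0)⁻¹ + - (f r)⁻¹) (m := 1) (by norm_num)
    (fun r hr => (h1 r hr).const_add _) (by norm_num) (fun r hr _ => h2 r hr)
  have h4 := inv_pos.2 (h0 r0 le_rfl)
  have h5 := h3 (r0 + (f r0)⁻¹) (by linarith)
  have h6 := inv_pos.2 (h0 (r0 + (f r0)⁻¹) (by linarith))
  simp at h5
  simp at h6
  linarith

lemma no_decline {f f' : ℝ → ℝ} {r0 c m : ℝ} (hc : 0 < c) (hf : ∀ r ≥ r0, HasDerivAt f (f' r) r)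
    (h0 : ∀ r ≥ r0, m ≤ f r) (h : ∀ r ≥ r0, f' r ≤ -c) : False := by
  have h3 := stay (f := fun r => 1 + f r0 + - (f r)) (m := c) hc.le
    (fun r hr => (hf r hr).neg.const_add _) (by simp) (fun r hr _ => by linarith [h r hr])
  have hp : 0 ≤ (f r0 - m + 1) / c := div_nonneg (by linarith [h0 r0 le_rfl]) hc.le
  have h5 := h3 (r0 + (f r0 - m + 1) / c) (by linarith)
  have h6 := h0 (r0 + (f r0 - m + 1) / c) (by linarith)
  have : c * ((f r0 - m + 1) / c) = f r0 - m + 1 := by field_simp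
  simp only [add_sub_cancel_left, this] at h5
  linarith



/-- averaged nonlinearity -/
def II (n : ℕ) (a b : ℝ) (u : ℝ → ℝ) (r : ℝ) : ℝ :=
  ∫ τ in (0:ℝ)..1, τ ^ n * Fnl a b (u (r * τ))

lemma II_cont {n : ℕ} {a b : ℝ} {u : ℝ → ℝ} (hu : Continuous u) : Continuous (II n a b u) := by
  unfold II
  apply intervalIntegral.continuous_parametric_intervalIntegral_of_continuous'
  have := Fnl_cont (a := a) (b := b)
  unfold Function.uncurry
  fun_prop

lemma II_bdd {n : ℕ} {a b : ℝ} (ha : 0 < a) (hb : 0 < b) {u : ℝ → ℝ} (r : ℝ) :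
    |II n a b u r| ≤ a + b := by
  have := intervalIntegral.norm_integral_le_of_norm_le_const (a := 0) (b := 1) (C := a + b)
    (f := fun τ : ℝ => τ ^ n * Fnl a b (u (r * τ))) (fun τ hτ => by
      rw [Set.uIoc_of_le zero_le_one] at hτ
      rw [norm_mul, Real.norm_eq_abs, Real.norm_eq_abs, abs_of_nonneg (pow_nonneg hτ.1.le n)]
      have h1 := pow_le_one₀ hτ.1.le hτ.2 (n := n)
      have h2 := Fnl_bdd ha hb (u (r * τ))
      calc _ ≤ 1 * (a + b) := by gcongr
        _ = _ := by ring)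
  simpa [II] using this

lemma II_diff {n : ℕ} {a b k C : ℝ} (ha : 0 < a) (hb : 0 < b) (hk : 0 ≤ k) (hC : 0 ≤ C) {u v : ℝ → ℝ}
    (hu : Continuous u) (hv : Continuous v) (h : ∀ x, |u x - v x| ≤ C * exp (k * x ^ 2)) (r : ℝ) :
    |II n a b u r - II n a b v r| ≤ (3 * a + b) * C * exp (k * r ^ 2) := by
  have hF := Fnl_cont (a := a) (b := b)
  unfold II
  rw [← intervalIntegral.integral_sub (Continuous.intervalIntegrable (by fun_prop) _ _)
    (Continuous.intervalIntegrable (by fun_prop) _ _)]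
  have := intervalIntegral.norm_integral_le_of_norm_le_const (a := 0) (b := 1)
    (C := (3 * a + b) * C * exp (k * r ^ 2))
    (f := fun τ : ℝ => τ ^ n * Fnl a b (u (r * τ)) - τ ^ n * Fnl a b (v (r * τ))) (fun τ hτ => by
      rw [Set.uIoc_of_le zero_le_one] at hτ
      rw [← mul_sub, norm_mul, Real.norm_eq_abs, Real.norm_eq_abs,
        abs_of_nonneg (pow_nonneg hτ.1.le n)]
      have h1 := pow_le_one₀ hτ.1.le hτ.2 (n := n)
      have h2 := Fnl_lip ha hb (u (r * τ)) (v (r * τ))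
      have h3 := h (r * τ)
      have h4 : exp (k * (r * τ) ^ 2) ≤ exp (k * r ^ 2) := by
        apply exp_le_exp.2
        apply mul_le_mul_of_nonneg_left _ hk
        have : τ ^ 2 ≤ 1 := pow_le_one₀ hτ.1.le hτ.2
        nlinarith [sq_nonneg r]
      calc _ ≤ 1 * ((3 * a + b) * (C * exp (k * r ^ 2))) := by
            gcongr
            exact h2.trans (by gcongr; exact h3.trans (by gcongr))
        _ = _ := by ring)
  simpa [Real.norm_eq_abs] using this

lemma int_bound {D : ℝ → ℝ} {C k : ℝ} (hC : 0 ≤ C) (hk : 0 < k)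
    (h : ∀ s, |D s| ≤ C * exp (k * s ^ 2)) (r : ℝ) :
    |∫ s in (0:ℝ)..r, s * D s| ≤ C / (2 * k) * exp (k * r ^ 2) := by
  have e := intervalIntegral.mul_integral_comp_mul_left (a := 0) (b := 1) (f := fun s => s * D s) r
  simp only [mul_zero, mul_one] at e
  rw [← e, ← intervalIntegral.integral_const_mul]
  have hd : ∀ s : ℝ, HasDerivAt (fun s => C / (2 * k) * exp (k * (r * s) ^ 2))
      (C * (r ^ 2 * s) * exp (k * (r * s) ^ 2)) s := by
    intro s
    have h1 : HasDerivAt (fun s : ℝ => k * (r * s) ^ 2) (k * (2 * (r * s) * r)) s := by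
      have := (((hasDerivAt_id s).const_mul r).pow 2).const_mul k
      refine this.congr_deriv ?_
      simp
    refine (h1.exp.const_mul (C / (2 * k))).congr_deriv ?_
    field_simp
  have h2 := intervalIntegral.norm_integral_le_of_norm_le (a := 0) (b := 1)
    (f := fun s : ℝ => r * (r * s * D (r * s))) (μ := MeasureTheory.volume)
    (g := fun s => C * (r ^ 2 * s) * exp (k * (r * s) ^ 2)) zero_le_one
    (MeasureTheory.ae_of_all _ fun s hs => by
      have e1 : r * (r * s * D (r * s)) = r ^ 2 * s * D (r * s) := by ring
      rw [e1, norm_mul, Real.norm_eq_abs, Real.norm_eq_abs,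
        abs_of_nonneg (mul_nonneg (sq_nonneg r) hs.1.le)]
      have := mul_le_mul_of_nonneg_left (h (r * s)) (mul_nonneg (sq_nonneg r) hs.1.le)
      linarith)
    (Continuous.intervalIntegrable (by fun_prop) _ _)
  rw [intervalIntegral.integral_eq_sub_of_hasDerivAt (fun s _ => hd s)
    (Continuous.intervalIntegrable (by fun_prop) _ _)] at h2
  have : 0 ≤ C / (2 * k) := by positivity
  simp only [Real.norm_eq_abs, mul_one, mul_zero] at h2
  refine h2.trans ?_
  have : 0 ≤ C / (2 * k) * exp (k * 0 ^ 2) := by positivity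
  linarith

lemma uphi_cont {k : ℝ} (φ : BoundedContinuousFunction ℝ ℝ) :
    Continuous (fun x => exp (k * x ^ 2) * φ x) := by fun_prop

/-- Picard operator -/
def TT (n : ℕ) (a b k : ℝ) (ha : 0 < a) (hb : 0 < b) (hk : 0 < k) (y : ℝ)
    (φ : BoundedContinuousFunction ℝ ℝ) : BoundedContinuousFunction ℝ ℝ :=
  BoundedContinuousFunction.ofNormedAddCommGroup
    (fun r => exp (-(k * r ^ 2)) *
      (y - ∫ s in (0:ℝ)..r, s * II n a b (fun x => exp (k * x ^ 2) * φ x) s))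
    (by
      have h1 := II_cont (n := n) (a := a) (b := b) (uphi_cont (k := k) φ)
      have h2 : Continuous fun r => ∫ s in (0:ℝ)..r, s * II n a b (fun x => exp (k * x ^ 2) * φ x) s :=
        intervalIntegral.continuous_primitive
          (fun _ _ => Continuous.intervalIntegrable (by fun_prop) _ _) 0
      fun_prop)
    (|y| + (a + b) / (2 * k))
    (by
      intro r
      have h1 := int_bound (D := II n a b (fun x => exp (k * x ^ 2) * φ x)) (C := a + b) (k := k)
        (by linarith) hk (fun s => by
          refine (II_bdd ha hb s).trans ?_
          have : 1 ≤ exp (k * s ^ 2) := one_le_exp (by positivity)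
          nlinarith) r
      have h0 : 1 ≤ exp (k * r ^ 2) := one_le_exp (by positivity)
      rw [norm_mul, Real.norm_eq_abs, Real.norm_eq_abs, abs_of_pos (exp_pos _), exp_neg,
        inv_mul_le_iff₀ (exp_pos _)]
      refine (abs_sub _ _).trans ?_
      nlinarith [abs_nonneg y])

lemma TT_apply {n : ℕ} {a b k : ℝ} (ha : 0 < a) (hb : 0 < b) (hk : 0 < k) (y : ℝ)
    (φ : BoundedContinuousFunction ℝ ℝ) (r : ℝ) : TT n a b k ha hb hk y φ r = exp (-(k * r ^ 2)) *
      (y - ∫ s in (0:ℝ)..r, s * II n a b (fun x => exp (k * x ^ 2) * φ x) s) := rfl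

lemma TT_contr {n : ℕ} {a b : ℝ} (ha : 0 < a) (hb : 0 < b) (hk : 0 < 3 * a + b) (y : ℝ) :
    ContractingWith (1 / 2) (TT n a b (3 * a + b) ha hb hk y) := by
  refine ⟨by rw [← NNReal.coe_lt_coe]; norm_num, LipschitzWith.of_dist_le_mul fun φ ψ => ?_⟩
  rw [BoundedContinuousFunction.dist_le (by positivity)]
  intro r
  set k := 3 * a + b
  rw [TT_apply, TT_apply, Real.dist_eq, ← mul_sub, abs_mul, abs_of_pos (exp_pos _), exp_neg,
    inv_mul_le_iff₀ (exp_pos _), sub_sub_sub_cancel_left]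
  have h1 := II_cont (n := n) (a := a) (b := b) (uphi_cont (k := k) φ)
  have h2 := II_cont (n := n) (a := a) (b := b) (uphi_cont (k := k) ψ)
  rw [← intervalIntegral.integral_sub (Continuous.intervalIntegrable (by fun_prop) _ _)
    (Continuous.intervalIntegrable (by fun_prop) _ _)]
  simp_rw [← mul_sub]
  have h3 := int_bound (D := fun s => II n a b (fun x => exp (k * x ^ 2) * ψ x) s -
      II n a b (fun x => exp (k * x ^ 2) * φ x) s) (C := k * dist φ ψ) (k := k) (by positivity) hk
    (fun s => II_diff ha hb hk.le dist_nonneg (uphi_cont ψ) (uphi_cont φ) (fun x => by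
      rw [← mul_sub, abs_mul, abs_of_pos (exp_pos _), mul_comm]
      gcongr
      rw [← Real.dist_eq, dist_comm]
      exact BoundedContinuousFunction.dist_coe_le_dist x) s) r
  refine h3.trans (le_of_eq ?_)
  have e : k * dist φ ψ / (2 * k) = 1 / 2 * dist φ ψ := by field_simp
  rw [e]
  push_cast
  ring

lemma exists_family (n : ℕ) {a b : ℝ} (ha : 0 < a) (hb : 0 < b) : ∃ U : ℝ → ℝ → ℝ,
    (∀ y, Continuous (U y)) ∧ (∀ y r, U y r = y - ∫ s in (0:ℝ)..r, s * II n a b (U y) s) ∧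
    (∀ y z r, |U y r - U z r| ≤ 2 * |y - z| * exp ((3 * a + b) * r ^ 2)) ∧
    (∀ r, U (π / 2) r = π / 2) := by
  have hk : 0 < 3 * a + b := by positivity
  have hc := TT_contr (n := n) ha hb hk
  set k := 3 * a + b with hkdef
  let Φ : ℝ → BoundedContinuousFunction ℝ ℝ := fun y => ContractingWith.fixedPoint _ (hc y)
  have hΦ : ∀ y, TT n a b k ha hb hk y (Φ y) = Φ y := fun y => (hc y).fixedPoint_isFixedPt
  refine ⟨fun y r => exp (k * r ^ 2) * Φ y r, fun y => uphi_cont _, fun y r => ?_, fun y z r => ?_, ?_⟩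
  · beta_reduce
    conv_lhs => rw [← hΦ y, TT_apply, ← mul_assoc, ← exp_add]
    simp
  · have h1 := (hc y).fixedPoint_lipschitz_in_map (hc z) (C := |y - z|) (fun φ => by
      rw [BoundedContinuousFunction.dist_le (abs_nonneg _)]
      intro r
      rw [TT_apply, TT_apply, Real.dist_eq, ← mul_sub, abs_mul, abs_of_pos (exp_pos _), exp_neg,
        inv_mul_le_iff₀ (exp_pos _), sub_sub_sub_cancel_right]
      have : 1 ≤ exp (k * r ^ 2) := one_le_exp (by positivity)
      nlinarith [abs_nonneg (y - z)])
    have h2 := (BoundedContinuousFunction.dist_coe_le_dist (f := Φ y) (g := Φ z) r).trans h1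
    rw [Real.dist_eq] at h2
    rw [← mul_sub, abs_mul, abs_of_pos (exp_pos _), mul_comm]
    gcongr
    refine h2.trans (le_of_eq ?_)
    push_cast
    ring
  · let ψ : BoundedContinuousFunction ℝ ℝ := BoundedContinuousFunction.ofNormedAddCommGroup
      (fun r => exp (-(k * r ^ 2)) * (π / 2)) (by fun_prop) (π / 2) (fun r => by
        have h1 : exp (-(k * r ^ 2)) ≤ 1 := exp_le_one_iff.2 (by
          have : 0 ≤ k * r ^ 2 := by positivity
          linarith)
        have := pi_pos
        rw [norm_mul, Real.norm_eq_abs, Real.norm_eq_abs, abs_of_pos (exp_pos _),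
          abs_of_pos (by positivity)]
        nlinarith)
    have hψa : ∀ x, ψ x = exp (-(k * x ^ 2)) * (π / 2) := fun x => rfl
    have hψ : ψ = Φ (π / 2) := (hc _).fixedPoint_unique (by
      ext r
      rw [TT_apply, hψa]
      congr 1
      have : (fun x => exp (k * x ^ 2) * ψ x) = fun x => π / 2 := by
        ext x
        rw [hψa, ← mul_assoc, ← exp_add]
        simp
      rw [this]
      simp [II, Fnl_pi])
    intro r
    change exp (k * r ^ 2) * Φ (π / 2) r = _
    rw [← hψ, hψa, ← mul_assoc, ← exp_add]
    simp

structure Sol (n : ℕ) (a b y : ℝ) (u v : ℝ → ℝ) : Prop where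
  hu : ∀ r, HasDerivAt u (v r) r
  hvc : Continuous v
  hI : ∀ r, v r = -(r * II n a b u r)
  hv : ∀ r, 0 < r → HasDerivAt v (-(n / r) * v r - Fnl a b (u r)) r
  h0 : u 0 = y
  hC : ContDiff ℝ 2 u

lemma sol_of_int {n : ℕ} {a b y : ℝ} {u : ℝ → ℝ} (hc : Continuous u)
    (h : ∀ r, u r = y - ∫ s in (0:ℝ)..r, s * II n a b u s) :
    Sol n a b y u (fun r => -(r * II n a b u r)) := by
  have hII := II_cont (n := n) (a := a) (b := b) hc
  have hF := Fnl_cont (a := a) (b := b)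
  have hu : ∀ r, HasDerivAt u (-(r * II n a b u r)) r := by
    intro r
    have e : u = fun r => y - ∫ s in (0:ℝ)..r, s * II n a b u s := funext h
    rw [e]
    conv => 
      arg 2 
      rw [← e]
    exact (intervalIntegral.integral_hasDerivAt_right (Continuous.intervalIntegrable (by fun_prop) _ _)
      (Continuous.stronglyMeasurableAtFilter (by fun_prop) _ _) (by fun_prop)).const_sub y
  have hJ : ∀ r, r ^ (n + 1) * II n a b u r = ∫ t in (0:ℝ)..r, t ^ n * Fnl a b (u t) := by
    intro r
    have e := intervalIntegral.mul_integral_comp_mul_left (a := 0) (b := 1)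
      (f := fun s => s ^ n * Fnl a b (u s)) r
    simp only [mul_zero, mul_one] at e
    rw [← e, pow_succ', mul_assoc, II, ← intervalIntegral.integral_const_mul]
    congr 2
    ext τ
    ring
  have hv0 : ∀ r, HasDerivAt (fun r => -(r * II n a b u r)) (n * II n a b u r - Fnl a b (u r)) r := by
    intro r
    rcases eq_or_ne r 0 with rfl | hr
    · have e0 : II n a b u 0 = Fnl a b (u 0) / (n + 1) := by
        simp [II]
        ring
      have e1 : n * II n a b u 0 - Fnl a b (u 0) = - II n a b u 0 := by
        rw [e0]; field_simp; ring
      rw [e1, hasDerivAt_iff_tendsto_slope]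
      have : Tendsto (fun r => - II n a b u r) (nhdsWithin 0 {0}ᶜ) (nhds (- II n a b u 0)) :=
        (hII.neg.tendsto 0).mono_left nhdsWithin_le_nhds
      refine this.congr' ?_
      filter_upwards [self_mem_nhdsWithin] with x hx
      have hx' : x ≠ 0 := hx
      simp [slope_def_field]
      field_simp
    · have h1 : HasDerivAt (fun r => ∫ t in (0:ℝ)..r, t ^ n * Fnl a b (u t))
          (r ^ n * Fnl a b (u r)) r :=
        intervalIntegral.integral_hasDerivAt_right (Continuous.intervalIntegrable (by fun_prop) _ _)
          (Continuous.stronglyMeasurableAtFilter (by fun_prop) _ _) (by fun_prop)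
      have h2 := (h1.div (hasDerivAt_pow n r) (pow_ne_zero n hr)).neg
      refine (h2.congr_of_eventuallyEq ?_).congr_deriv ?_
      · filter_upwards [isOpen_ne.mem_nhds hr] with x hx
        have hx' : x ≠ 0 := hx
        simp only [Pi.neg_apply, Pi.div_apply]
        rw [← hJ]
        field_simp
        ring
      · rw [← hJ]
        rcases n with _ | m
        · simp
        · simp only [Nat.add_sub_cancel]
          field_simp
          push_cast
          ring
  refine ⟨hu, by fun_prop, fun r => rfl, fun r hr => (hv0 r).congr_deriv ?_, by simp [h 0], ?_⟩
  · field_simp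
  · have d1 : deriv u = fun r => -(r * II n a b u r) := funext fun r => (hu r).deriv
    have d2 : deriv (fun r => -(r * II n a b u r)) = fun r => n * II n a b u r - Fnl a b (u r) :=
      funext fun r => (hv0 r).deriv
    rw [show (2 : WithTop ℕ∞) = 1 + 1 by norm_num, contDiff_succ_iff_deriv]
    refine ⟨fun r => (hu r).differentiableAt, by simp, ?_⟩
    rw [d1, contDiff_one_iff_deriv, d2]
    exact ⟨fun r => (hv0 r).differentiableAt, by fun_prop⟩



/-- energy -/
def En (a b : ℝ) (u v : ℝ → ℝ) (r : ℝ) : ℝ := v r ^ 2 / 2 + Gnl a b (u r)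

namespace Sol

variable {n : ℕ} {a b y : ℝ} {u v : ℝ → ℝ}

lemma huc (S : Sol n a b y u v) : Continuous u :=
  continuous_iff_continuousAt.2 fun r => (S.hu r).continuousAt

lemma v0 (S : Sol n a b y u v) : v 0 = 0 := by rw [S.hI]; simp

lemma En_cont (S : Sol n a b y u v) : Continuous (En a b u v) := by
  have := S.huc
  have := S.hvc
  have := Gnl_cont (a := a) (b := b)
  unfold En
  fun_prop

lemma En_deriv (S : Sol n a b y u v) (ha : 0 < a) {r : ℝ} (hr : 0 < r) :
    HasDerivAt (En a b u v) (-(n / r) * v r ^ 2) r := by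
  have h1 := (((S.hv r hr).pow 2).div_const 2).add ((Gnl_hasDeriv (b := b) ha (u r)).comp r (S.hu r))
  refine h1.congr_deriv ?_
  simp
  ring

lemma En_anti (S : Sol n a b y u v) (ha : 0 < a) : AntitoneOn (En a b u v) (Set.Ici 0) := by
  refine antitoneOn_of_deriv_nonpos (convex_Ici 0) S.En_cont.continuousOn ?_ ?_
  · intro x hx
    rw [interior_Ici] at hx
    exact (S.En_deriv ha hx).differentiableAt.differentiableWithinAt
  · intro x hx
    rw [interior_Ici] at hx
    have hx' : 0 < x := hx
    rw [(S.En_deriv ha hx).deriv]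
    have : 0 ≤ n / x * v x ^ 2 := by positivity
    linarith

lemma En_zero (S : Sol n a b y u v) : En a b u v 0 = Gnl a b y := by
  simp [En, S.v0, S.h0]

lemma v_le (S : Sol n a b y u v) {c r : ℝ} (hr : 0 < r)
    (h : ∀ s, 0 ≤ s → s ≤ r → c ≤ Fnl a b (u s)) : v r ≤ - (r * (c / (n + 1))) := by
  rw [S.hI]
  have hF := Fnl_cont (a := a) (b := b)
  have hu := S.huc
  have h1 : ∫ τ in (0:ℝ)..1, τ ^ n * c ≤ II n a b u r := by
    unfold II
    apply intervalIntegral.integral_mono_on zero_le_one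
      (Continuous.intervalIntegrable (by fun_prop) _ _)
      (Continuous.intervalIntegrable (by fun_prop) _ _)
    intro τ hτ
    apply mul_le_mul_of_nonneg_left _ (pow_nonneg hτ.1 n)
    apply h
    · exact mul_nonneg hr.le hτ.1
    · nlinarith [hτ.2]
  have h2 : ∫ τ in (0:ℝ)..1, τ ^ n * c = c / (n + 1) := by
    simp
    ring
  rw [h2] at h1
  have := mul_le_mul_of_nonneg_left h1 hr.le
  linarith

lemma v_neg (S : Sol n a b y u v) (ha : 0 < a) {r : ℝ} (hr : 0 < r)
    (h : ∀ s, 0 ≤ s → s ≤ r → 0 < u s ∧ u s < π / 2 ∧ b < a * sin (u s) ^ 2) : v r < 0 := by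
  have hF := Fnl_cont (a := a) (b := b)
  have hu := S.huc
  obtain ⟨s, hs, hm⟩ := isCompact_Icc.exists_isMinOn (Set.nonempty_Icc.2 hr.le)
    (f := fun s => Fnl a b (u s)) (by fun_prop)
  obtain ⟨g1, g2, g3⟩ := h s hs.1 hs.2
  have hp := Fnl_pos ha g1 g2 g3
  have := S.v_le hr (c := Fnl a b (u s)) (fun t h1 h2 => hm ⟨h1, h2⟩)
  have : 0 < r * (Fnl a b (u s) / (n + 1)) := by positivity
  linarith

lemma backward (S : Sol n a b y u v) (ha : 0 < a) (hb : 0 < b) (hy : y ≠ 0) {r0 : ℝ} (hr : 0 < r0)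
    (hu0 : u r0 = 0) (hv0 : v r0 = 0) : False := by
  set K := 1 + (3 * a + b)
  have hd : ∀ r, 0 < r → HasDerivAt (fun r => r ^ (2 * n) * exp (K * r) * (u r ^ 2 + v r ^ 2))
      ((((2 * n : ℕ) : ℝ) * r ^ (2 * n - 1) * exp (K * r) + r ^ (2 * n) * (exp (K * r) * K))
        * (u r ^ 2 + v r ^ 2) + r ^ (2 * n) * exp (K * r) *
        (2 * u r * v r + 2 * v r * (-(n / r) * v r - Fnl a b (u r)))) r := by
    intro r hr
    have h1 : HasDerivAt (fun r : ℝ => exp (K * r)) (exp (K * r) * K) r := by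
      simpa using ((hasDerivAt_id r).const_mul K).exp
    have h2 := ((hasDerivAt_pow (2 * n) r).mul h1).mul
      (((S.hu r).pow 2).add ((S.hv r hr).pow 2))
    refine h2.congr_deriv ?_
    simp
  have hmono : MonotoneOn (fun r => r ^ (2 * n) * exp (K * r) * (u r ^ 2 + v r ^ 2)) (Set.Ioc 0 r0) := by
    refine monotoneOn_of_deriv_nonneg (convex_Ioc 0 r0)
      (fun x hx => (hd x hx.1).continuousAt.continuousWithinAt) ?_ ?_
    · intro x hx
      rw [interior_Ioc] at hx
      exact (hd x hx.1).differentiableAt.differentiableWithinAt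
    · intro x hx
      rw [interior_Ioc] at hx
      have hx' : 0 < x := hx.1
      rw [(hd x hx.1).deriv]
      have e : ((2 * n : ℕ) : ℝ) * x ^ (2 * n - 1) = 2 * (n / x) * x ^ (2 * n) := by
        rcases n with _ | m
        · simp
        · rw [show 2 * (m + 1) - 1 = 2 * m + 1 by omega, show 2 * (m + 1) = 2 * m + 1 + 1 by ring,
            pow_succ x (2 * m + 1)]
          field_simp
          push_cast
          ring
      rw [e]
      have e2 : (2 * (n / x) * x ^ (2 * n) * exp (K * x) + x ^ (2 * n) * (exp (K * x) * K))
        * (u x ^ 2 + v x ^ 2) + x ^ (2 * n) * exp (K * x) *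
        (2 * u x * v x + 2 * v x * (-(n / x) * v x - Fnl a b (u x))) =
        x ^ (2 * n) * exp (K * x) * (2 * (n / x) * u x ^ 2 + (K * (u x ^ 2 + v x ^ 2) + 2 * u x * v x
          - 2 * v x * Fnl a b (u x))) := by ring
      rw [e2]
      have h3 : 0 ≤ K * (u x ^ 2 + v x ^ 2) + 2 * u x * v x - 2 * v x * Fnl a b (u x) := by
        have h4 := Fnl_abs_le ha hb (u x)
        have h5 : 2 * (v x * Fnl a b (u x)) ≤ (3 * a + b) * (u x ^ 2 + v x ^ 2) := by
          calc 2 * (v x * Fnl a b (u x)) ≤ 2 * (|v x| * |Fnl a b (u x)|) := by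
                rw [← abs_mul]; gcongr; exact le_abs_self _
            _ ≤ 2 * (|v x| * ((3 * a + b) * |u x|)) := by gcongr
            _ = (3 * a + b) * (2 * |v x| * |u x|) := by ring
            _ ≤ (3 * a + b) * (u x ^ 2 + v x ^ 2) := by
                gcongr
                rw [← sq_abs (u x), ← sq_abs (v x)]
                nlinarith [sq_nonneg (|v x| - |u x|)]
        have : K = 1 + (3 * a + b) := rfl
        rw [this]
        nlinarith [sq_nonneg (u x + v x)]
      positivity
  have hz : ∀ r ∈ Set.Ioc 0 r0, u r = 0 := by
    intro r hr'
    have h1 := hmono hr' ⟨hr, le_rfl⟩ hr'.2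
    simp only [hu0, hv0] at h1
    have hr1 := hr'.1
    have h2 : 0 < r ^ (2 * n) * exp (K * r) := by positivity
    have h3 : u r ^ 2 + v r ^ 2 ≤ 0 := by
      by_contra hcon
      push Not at hcon
      have := mul_pos h2 hcon
      norm_num at h1
      linarith
    have h4 : u r ^ 2 = 0 := by nlinarith [sq_nonneg (u r), sq_nonneg (v r)]
    exact pow_eq_zero_iff (two_ne_zero) |>.1 h4
  have h1 : Tendsto u (nhdsWithin 0 (Set.Ioi 0)) (nhds (u 0)) :=
    (S.huc.tendsto 0).mono_left nhdsWithin_le_nhds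
  have h2 : Tendsto u (nhdsWithin 0 (Set.Ioi 0)) (nhds 0) := by
    refine tendsto_const_nhds.congr' ?_
    filter_upwards [Ioc_mem_nhdsGT hr] with x hx
    exact (hz x hx).symm
  have := tendsto_nhds_unique h1 h2
  rw [S.h0] at this
  exact hy this

lemma anti_of_neg (S : Sol n a b y u v) {t : ℝ} (h : ∀ s, 0 < s → s < t → v s < 0) :
    StrictAntiOn u (Set.Icc 0 t) := by
  refine strictAntiOn_of_deriv_neg (convex_Icc 0 t) S.huc.continuousOn ?_
  intro x hx
  rw [interior_Icc] at hx
  rw [(S.hu x).deriv]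
  exact h x hx.1 hx.2

lemma decr (S : Sol n a b y u v) (ha : 0 < a) (hb : 0 < b) (hy0 : 0 < y) (hy1 : y < π / 2)
    (hyb : b < a * sin y ^ 2) (hu0 : ∀ r, 0 ≤ r → 0 ≤ u r)
    (hH : ∀ t, 0 < t → (∀ s, 0 < s → s < t → v s < 0) → a * sin (u t) ^ 2 ≤ b → v t = 0 → False) :
    ∀ t, 0 < t → v t < 0 := by
  have hu := S.huc
  have hv := S.hvc
  -- near zero
  have hnear : ∀ᶠ s in nhds (0:ℝ), 0 < u s ∧ u s < π / 2 ∧ b < a * sin (u s) ^ 2 := by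
    have h1 : Continuous fun s => a * sin (u s) ^ 2 := by fun_prop
    refine (hu.continuousAt.eventually_const_lt (by rw [S.h0]; exact hy0)).and
      ((hu.continuousAt.eventually_lt_const (by rw [S.h0]; exact hy1)).and
        (h1.continuousAt.eventually_const_lt (by beta_reduce; rw [S.h0]; exact hyb)))
  obtain ⟨δ, hδ, hδ'⟩ := Metric.eventually_nhds_iff.1 hnear
  have hsmall : ∀ s, 0 < s → s < δ → v s < 0 := fun s hs hsd => S.v_neg ha hs (fun x h1 h2 => by
    apply hδ'
    rw [Real.dist_eq, sub_zero, abs_of_nonneg h1]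
    linarith)
  intro r hr
  by_contra hcon
  push Not at hcon
  have hc : IsCompact (Set.Icc (δ / 2) r ∩ v ⁻¹' (Set.Ici 0)) :=
    isCompact_Icc.inter_right (isClosed_Ici.preimage hv)
  have hrδ : δ / 2 ≤ r := by
    by_contra h
    linarith [hsmall r hr (by linarith)]
  obtain ⟨t, ht, ht'⟩ := hc.exists_isLeast ⟨r, ⟨hrδ, le_rfl⟩, hcon⟩
  have htpos : 0 < t := by linarith [ht.1.1]
  have hneg : ∀ s, 0 < s → s < t → v s < 0 := by
    intro s hs hst
    by_contra h
    push Not at h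
    rcases lt_or_ge s δ with h1 | h1
    · linarith [hsmall s hs h1]
    · linarith [ht' ⟨⟨by linarith, hst.le.trans ht.1.2⟩, h⟩]
  have hvt : v t ≤ 0 := by
    have h1 : Tendsto v (nhdsWithin t (Set.Iio t)) (nhds (v t)) :=
      (hv.tendsto t).mono_left nhdsWithin_le_nhds
    refine le_of_tendsto h1 ?_
    filter_upwards [Ioo_mem_nhdsLT htpos] with x hx
    exact (hneg x hx.1 hx.2).le
  have hvt0 : v t = 0 := le_antisymm hvt ht.2
  have hanti := S.anti_of_neg hneg
  rcases le_or_gt (a * sin (u t) ^ 2) b with h1 | h1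
  · exact hH t htpos hneg h1 hvt0
  · have hut : 0 < u t := by
      rcases (hu0 t htpos.le).eq_or_lt with h2 | h2
      · exfalso
        rw [← h2] at h1
        simp at h1
        linarith
      · exact h2
    have := S.v_neg ha htpos (fun s hs1 hs2 => by
      have h2 := hanti.antitoneOn ⟨hs1, hs2⟩ (Set.right_mem_Icc.2 htpos.le) hs2
      have h3 := hanti.antitoneOn (Set.left_mem_Icc.2 htpos.le) ⟨hs1, hs2⟩ hs1
      rw [S.h0] at h3
      refine ⟨by linarith, by linarith, h1.trans_le ?_⟩
      have h4 : sin (u t) ≤ sin (u s) :=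
        sin_le_sin_of_le_of_le_pi_div_two (by linarith) (by linarith) h2
      have h5 : 0 ≤ sin (u t) := sin_nonneg_of_nonneg_of_le_pi hut.le (by linarith)
      gcongr)
    linarith

lemma tendsto_zero (S : Sol n a b y u v) (ha : 0 < a) (hb : 0 < b) (hy1 : y < π / 2)
    (hu0 : ∀ r, 0 ≤ r → 0 ≤ u r) (hv0 : ∀ t, 0 < t → v t < 0)
    (hE : ∀ t, 0 ≤ t → 0 ≤ En a b u v t) : Tendsto u atTop (nhds 0) := by
  have hanti : ∀ s t, 0 ≤ s → s ≤ t → u t ≤ u s := fun s t h1 h2 =>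
    (S.anti_of_neg (t := t) (fun s h _ => hv0 s h)).antitoneOn ⟨h1, h2⟩
      (Set.right_mem_Icc.2 (h1.trans h2)) h2
  have hmono : Antitone (fun t => u (max t 0)) := fun s t hst =>
    hanti _ _ (le_max_right _ _) (max_le_max hst le_rfl)
  have hbdd : BddBelow (Set.range (fun t => u (max t 0))) :=
    ⟨0, by rintro _ ⟨t, rfl⟩; exact hu0 _ (le_max_right _ _)⟩
  have hlim := tendsto_atTop_ciInf hmono hbdd
  set l := ⨅ t, u (max t 0)
  have hlim' : Tendsto u atTop (nhds l) := by
    refine hlim.congr' ?_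
    filter_upwards [eventually_ge_atTop 0] with t ht
    rw [max_eq_left ht]
  have hle : ∀ t, 0 ≤ t → l ≤ u t := fun t ht => by
    have := ciInf_le hbdd t
    simpa [max_eq_left ht] using this
  have hl0 : 0 ≤ l := ge_of_tendsto hlim' (by
    filter_upwards [eventually_ge_atTop 0] with t ht using hu0 t ht)
  rcases hl0.eq_or_lt with h | hlpos
  · rw [h]; exact hlim'
  exfalso
  have hly : l ≤ y := by have := hle 0 le_rfl; rwa [S.h0] at this
  rcases le_or_gt (2 * b) (a * sin l ^ 2) with h | h
  · set c := sin l * cos y * b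
    have hc : 0 < c := by
      have h3 : 0 < sin l := sin_pos_of_pos_of_lt_pi hlpos (by linarith)
      have h4 : 0 < cos y := cos_pos_of_mem_Ioo ⟨by linarith, hy1⟩
      positivity
    refine no_decline (f := u) (f' := v) (r0 := 1) (c := c / (n + 1)) (m := 0) (by positivity)
      (fun r _ => S.hu r) (fun r hr => hu0 r (by linarith)) (fun r hr => ?_)
    have h1 := S.v_le (r := r) (c := c) (by linarith) (fun s hs _ => by
      refine Fnl_lower ha hb hlpos (hle s hs) ?_ hy1 h
      have := hanti 0 s le_rfl hs
      rwa [S.h0] at this)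
    have h2 : 0 < c / (n + 1) := by positivity
    nlinarith
  · have hG := Gnl_neg hlpos (by linarith) h
    have h1 : Tendsto (fun r => Gnl a b (u r)) atTop (nhds (Gnl a b l)) :=
      (Gnl_cont.tendsto l).comp hlim'
    obtain ⟨r0, hr0⟩ := eventually_atTop.1
      (h1.eventually_lt_const (show Gnl a b l < Gnl a b l / 2 by linarith))
    set c := √(-Gnl a b l)
    have hc : 0 < c := sqrt_pos.2 (by linarith)
    have hcs : c ^ 2 = -Gnl a b l := sq_sqrt (by linarith)
    refine no_decline (f := u) (f' := v) (r0 := max r0 1) (c := c) (m := 0) hc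
      (fun r _ => S.hu r) (fun r hr => hu0 r ?_) (fun r hr => ?_)
    · have := le_max_right r0 1
      linarith
    · have hr1 : 0 < r := by
        have := le_max_right r0 1
        linarith
      have h2 := hr0 r ((le_max_left _ _).trans hr)
      have h3 := hE r hr1.le
      unfold En at h3
      have h4 : c ^ 2 ≤ v r ^ 2 := by linarith
      have h5 := hv0 r hr1
      nlinarith

end Sol



namespace Sol

variable {n : ℕ} {a b y : ℝ} {u v : ℝ → ℝ}

lemma no_pos (S : Sol n a b y u v) (ha : 0 < a) (hb : 0 < b) (hy0 : 0 < y) (hy1 : y < π / 2)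
    (hyb : b < a * sin y ^ 2) (hu0 : ∀ r, 0 ≤ r → 0 ≤ u r) {e M R : ℝ} (he : 0 < e) (hM : 0 ≤ M)
    (hM2 : 2 * (a + b) ≤ M ^ 2) (hR : 0 < R) (hR2 : n * M * (π / 2) ≤ e / 4 * R)
    (hER : 3 / 4 * e < En a b u v R) : False := by
  have hanti := S.En_anti ha
  have hvM : ∀ r, 0 ≤ r → -M ≤ v r := by
    intro r hr
    have h1 := hanti (Set.self_mem_Ici) hr hr
    rw [S.En_zero] at h1
    unfold En at h1
    have h2 := Gnl_lower ha hb (u r)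
    have h3 := Gnl_upper ha hb y
    exact (abs_le.1 (abs_le_of_sq_le_sq (by linarith) hM)).1
  have hH : ∀ t, 0 < t → (∀ s, 0 < s → s < t → v s < 0) → e / 2 ≤ En a b u v t := by
    intro t ht hneg
    rcases le_or_gt t R with h | h
    · have := hanti ht.le hR.le h
      linarith
    · have hd : ∀ r, 0 < r → HasDerivAt (fun r => En a b u v r - n * M / R * u r)
          (-(n / r) * v r ^ 2 - n * M / R * v r) r := fun r hr =>
        (S.En_deriv ha hr).sub ((S.hu r).const_mul _)
      have hmono : MonotoneOn (fun r => En a b u v r - n * M / R * u r) (Set.Icc R t) := by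
        refine monotoneOn_of_deriv_nonneg (convex_Icc R t)
          (fun x hx => (hd x (hR.trans_le hx.1)).continuousAt.continuousWithinAt) ?_ ?_
        · intro x hx
          rw [interior_Icc] at hx
          exact (hd x (hR.trans hx.1)).differentiableAt.differentiableWithinAt
        · intro x hx
          rw [interior_Icc] at hx
          have hx0 := hR.trans hx.1
          rw [(hd x hx0).deriv]
          have h1 := hneg x hx0 hx.2
          have h2 := hvM x hx0.le
          have h3 : (n:ℝ) / x ≤ n / R := by
            have := hx.1.le
            gcongr
          have h4 : (n:ℝ) / x * (- v x) ≤ n / R * M := by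
            have : (0:ℝ) ≤ n / R := by positivity
            apply mul_le_mul h3 (by linarith) (by linarith) this
          have h5 : -(n / x) * v x ^ 2 - n * M / R * v x
            = (n / R * M - (n:ℝ) / x * (- v x)) * (- v x) := by ring
          rw [h5]
          exact mul_nonneg (by linarith) (by linarith)
      have h1 := hmono (Set.left_mem_Icc.2 h.le) (Set.right_mem_Icc.2 h.le) h.le
      simp only at h1
      have hA := (S.anti_of_neg hneg).antitoneOn (Set.left_mem_Icc.2 ht.le) ⟨hR.le, h.le⟩ hR.le
      rw [S.h0] at hA
      have h2 : n * M / R * (u R - u t) ≤ n * M / R * (π / 2) := by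
        apply mul_le_mul_of_nonneg_left _ (by positivity)
        linarith [hu0 t ht.le]
      have h3 : n * M / R * (π / 2) ≤ e / 4 := by
        rw [div_mul_eq_mul_div, div_le_iff₀ hR]; exact hR2
      linarith
  have hneg := S.decr ha hb hy0 hy1 hyb hu0 (fun t ht hs hsin hvt => by
    have h1 := hH t ht hs
    have h2 := Gnl_nonpos (a := a) (b := b) (x := u t) (by linarith)
    unfold En at h1
    rw [hvt] at h1
    linarith)
  have hE : ∀ t, 0 < t → e / 2 ≤ En a b u v t := fun t ht => hH t ht (fun s hs _ => hneg s hs)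
  have hE' : ∀ t, 0 ≤ t → 0 ≤ En a b u v t := fun t ht => by
    have h1 := hanti ht (show (0:ℝ) ≤ t + 1 by linarith) (by linarith)
    have h2 := hE (t + 1) (by linarith)
    linarith
  have hlim := S.tendsto_zero ha hb hy1 hu0 hneg hE'
  have h1 : Tendsto (fun r => Gnl a b (u r)) atTop (nhds (Gnl a b 0)) :=
    (Gnl_cont.tendsto 0).comp hlim
  rw [Gnl_zero] at h1
  obtain ⟨r0, hr0⟩ := eventually_atTop.1
    (h1.eventually_lt_const (show 0 < e / 4 by linarith))
  set c := √(e / 2)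
  have hc : 0 < c := sqrt_pos.2 (by linarith)
  have hcs : c ^ 2 = e / 2 := sq_sqrt (by linarith)
  refine no_decline (f := u) (f' := v) (r0 := max r0 1) (c := c) (m := 0) hc
    (fun r _ => S.hu r) (fun r hr => hu0 r ?_) (fun r hr => ?_)
  · have := le_max_right r0 1
    linarith
  · have hr1 : 0 < r := by
      have := le_max_right r0 1
      linarith
    have h2 := hr0 r ((le_max_left _ _).trans hr)
    have h3 := hE r hr1
    unfold En at h3
    have h4 : c ^ 2 ≤ v r ^ 2 := by linarith
    have h5 := hneg r hr1
    nlinarith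

lemma P_deriv (S : Sol n a b y u v) (hu0 : ∀ r, 0 ≤ r → 0 < u r) {r : ℝ} (hr : 0 < r) :
    HasDerivAt (fun r => - v r / u r)
      ((- v r / u r) ^ 2 - n / r * (- v r / u r) + Fnl a b (u r) / u r) r := by
  have h := hu0 r hr.le
  refine ((S.hv r hr).neg.div (S.hu r) h.ne').congr_deriv ?_
  simp only [Pi.neg_apply]
  field_simp
  ring

lemma P_lower (S : Sol n a b y u v) (hb : 0 < b)
    (hu0 : ∀ r, 0 ≤ r → 0 < u r) (hv0 : ∀ r, 0 < r → v r < 0) {r1 : ℝ} (hr1 : 0 < r1)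
    (hF : ∀ r ≥ r1, Fnl a b (u r) / u r ≤ - (b / 2)) :
    ∀ r ≥ r1, √b / 2 ≤ - v r / u r := by
  intro r0 hr0
  have hP : ∀ r, 0 < r → 0 < - v r / u r := fun r hr =>
    div_pos (by linarith [hv0 r hr]) (hu0 r hr.le)
  by_contra hcon
  push Not at hcon
  set κ := √b
  have hκ : 0 < κ := sqrt_pos.2 hb
  have hκ2 : κ ^ 2 = b := sq_sqrt hb.le
  have h := stay (f := fun r => κ / 2 - (- v r / u r)) (r0 := r0) (m := b / 4) (by linarith)
    (fun r hr => (S.P_deriv hu0 (show 0 < r by linarith)).const_sub (κ / 2)) (by linarith)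
    (fun r hr hf => by
      have hr' : 0 < r := by linarith
      have h1 := hP r hr'
      have h2 := hF r (by linarith)
      generalize - v r / u r = p at *
      have : 0 ≤ n / r * p := by positivity
      nlinarith)
  have h1 := h (r0 + 2 * κ / b) (by
    have : 0 < 2 * κ / b := by positivity
    linarith)
  have h2 := hP (r0 + 2 * κ / b) (by
    have : 0 < 2 * κ / b := by positivity
    linarith)
  have e : b / 4 * (r0 + 2 * κ / b - r0) = κ / 2 := by field_simp; ring
  rw [e] at h1
  linarith

lemma D_bounds {D h : ℝ → ℝ} {κ C K r3 : ℝ} (hκ : 0 < κ) (hC : 0 ≤ C) (hK : K = 2 * C / κ) (hr3 : 0 < r3)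
    (hD : ∀ r ≥ r3, HasDerivAt D (D r * (D r + 2 * κ) - h r) r)
    (hh : ∀ r ≥ r3, |h r| ≤ C / r ^ 2)
    (hl : ∀ r ≥ r3, κ / 2 ≤ D r + 2 * κ) : ∀ r ≥ r3, |D r| ≤ K / r ^ 2 := by
  have hK0 : 0 ≤ K := by rw [hK]; positivity
  have hKC : κ / 2 * K = C := by rw [hK]; field_simp
  have hq : ∀ r ≥ r3, HasDerivAt (fun r : ℝ => K / r ^ 2) (- (2 * K / r ^ 3)) r := by
    intro r hr
    have hr' : 0 < r := by linarith
    refine ((hasDerivAt_const r K).div (hasDerivAt_pow 2 r) (by positivity)).congr_deriv ?_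
    field_simp
    simp
    ring
  have hCr : ∀ r, C / r ^ 2 = κ / 2 * (K / r ^ 2) := by
    intro r; rw [← hKC]; ring
  intro r0 hr0
  rw [abs_le]
  constructor
  · by_contra hcon
    push Not at hcon
    have hder : ∀ r ≥ r0, 0 < - D r - K / r ^ 2 → κ / 2 * (- D r - K / r ^ 2) ≤
        - (D r * (D r + 2 * κ) - h r) := by
      intro r hr hf
      have hr' : 0 < r := by linarith
      have h1 := (abs_le.1 (hh r (by linarith))).1
      rw [hCr] at h1
      have h2 := hl r (by linarith)
      have h3 : 0 ≤ K / r ^ 2 := by positivity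
      nlinarith
    have hs := stay (f := fun r => - D r - K / r ^ 2) (r0 := r0) (m := 0) le_rfl
      (fun r hr => (hD r (by linarith)).neg.sub (hq r (by linarith))) (by linarith)
      (fun r hr hf => by
        have h1 := hder r hr hf
        have hr' : 0 < r := by linarith
        have h4 : 0 ≤ 2 * K / r ^ 3 := by positivity
        have : 0 ≤ κ / 2 * (- D r - K / r ^ 2) := by
          have := mul_pos hκ hf
          linarith
        linarith)
    have hf0 : 0 < - D r0 - K / r0 ^ 2 := by linarith
    refine no_decline (f := D) (r0 := r0) (c := κ / 2 * (- D r0 - K / r0 ^ 2)) (m := κ / 2 - 2 * κ)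
      (by positivity) (fun r hr => hD r (by linarith)) (fun r hr => by linarith [hl r (by linarith)])
      (fun r hr => ?_)
    have h1 := hs r hr
    simp only [zero_mul, add_zero] at h1
    have h2 := hder r hr (by linarith)
    have h3 := mul_le_mul_of_nonneg_left h1 (show 0 ≤ κ / 2 by linarith)
    linarith
  · by_contra hcon
    push Not at hcon
    have hder : ∀ r ≥ r0, 0 < D r - K / r ^ 2 → D r ^ 2 ≤ D r * (D r + 2 * κ) - h r := by
      intro r hr hf
      have hr' : 0 < r := by linarith
      have h1 := (abs_le.1 (hh r (by linarith))).2
      rw [hCr] at h1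
      have h3 : 0 ≤ K / r ^ 2 := by positivity
      nlinarith
    have hs := stay (f := fun r => D r - K / r ^ 2) (r0 := r0) (m := 0) le_rfl
      (fun r hr => (hD r (by linarith)).sub (hq r (by linarith))) (by linarith)
      (fun r hr hf => by
        have h1 := hder r hr hf
        have hr' : 0 < r := by linarith
        have h4 : 0 ≤ 2 * K / r ^ 3 := by positivity
        nlinarith [sq_nonneg (D r)])
    have hpos : ∀ r ≥ r0, 0 < D r - K / r ^ 2 := fun r hr => by
      have := hs r hr
      simp only [zero_mul, add_zero] at this
      linarith
    refine blowup (f := D) (r0 := r0) (fun r hr => hD r (by linarith)) (fun r hr => ?_)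
      (fun r hr => hder r hr (hpos r hr))
    have hr' : 0 < r := by linarith
    have h3 : 0 ≤ K / r ^ 2 := by positivity
    linarith [hpos r hr]

lemma lim_of_deriv {Z D : ℝ → ℝ} {K r3 : ℝ} (hr3 : 0 < r3)
    (hZ : ∀ r ≥ r3, HasDerivAt Z (- D r) r) (hD : ∀ r ≥ r3, |D r| ≤ K / r ^ 2) :
    ∃ l, Tendsto Z atTop (nhds l) := by
  have hK : 0 ≤ K := by
    have := (abs_nonneg _).trans (hD r3 le_rfl)
    by_contra h
    push Not at h
    have := div_neg_of_neg_of_pos h (show 0 < r3 ^ 2 by positivity)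
    linarith
  have hq : ∀ r ≥ r3, HasDerivAt (fun r : ℝ => K / r) (- (K / r ^ 2)) r := by
    intro r hr
    have hr' : 0 < r := by linarith
    refine ((hasDerivAt_const r K).div (hasDerivAt_id r) hr'.ne').congr_deriv ?_
    simp
    ring
  have h1 : AntitoneOn (fun r => Z r + K / r) (Set.Ici r3) := by
    refine antitoneOn_of_deriv_nonpos (convex_Ici r3)
      (fun x hx => ((hZ x hx).add (hq x hx)).continuousAt.continuousWithinAt) ?_ ?_
    · intro x hx
      rw [interior_Ici] at hx
      have hx' : r3 ≤ x := le_of_lt hx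
      exact ((hZ x hx').add (hq x hx')).differentiableAt.differentiableWithinAt
    · intro x hx
      rw [interior_Ici] at hx
      have hx' : r3 ≤ x := le_of_lt hx
      refine (((hZ x hx').add (hq x hx')).deriv).trans_le ?_
      linarith [(abs_le.1 (hD x hx')).1]
  have h2 : MonotoneOn (fun r => Z r - K / r) (Set.Ici r3) := by
    refine monotoneOn_of_deriv_nonneg (convex_Ici r3)
      (fun x hx => ((hZ x hx).sub (hq x hx)).continuousAt.continuousWithinAt) ?_ ?_
    · intro x hx
      rw [interior_Ici] at hx
      have hx' : r3 ≤ x := le_of_lt hx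
      exact ((hZ x hx').sub (hq x hx')).differentiableAt.differentiableWithinAt
    · intro x hx
      rw [interior_Ici] at hx
      have hx' : r3 ≤ x := le_of_lt hx
      refine le_of_le_of_eq ?_ (((hZ x hx').sub (hq x hx')).deriv).symm
      linarith [(abs_le.1 (hD x hx')).2]
  have h3 : Antitone (fun r => Z (max r r3) + K / (max r r3)) := fun s t hst =>
    h1 (Set.mem_Ici.2 (le_max_right _ _)) (Set.mem_Ici.2 (le_max_right _ _)) (max_le_max hst le_rfl)
  have h4 : BddBelow (Set.range (fun r => Z (max r r3) + K / (max r r3))) := by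
    refine ⟨Z r3 - K / r3, ?_⟩
    rintro _ ⟨t, rfl⟩
    have h5 := h2 Set.self_mem_Ici (Set.mem_Ici.2 (le_max_right t r3)) (le_max_right _ _)
    have h6 : 0 ≤ K / max t r3 := div_nonneg hK (hr3.le.trans (le_max_right _ _))
    simp only at h5 ⊢
    linarith
  have h5 := tendsto_atTop_ciInf h3 h4
  have h6 : Tendsto (fun r : ℝ => K / r) atTop (nhds 0) := tendsto_const_nhds.div_atTop tendsto_id
  refine ⟨_, (h5.sub h6).congr' ?_⟩
  filter_upwards [eventually_ge_atTop r3] with t ht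
  rw [max_eq_left ht]
  ring

lemma asymp (S : Sol n a b y u v) (ha : 0 < a) (hb : 0 < b)
    (hu0 : ∀ r, 0 ≤ r → 0 < u r) (hv0 : ∀ r, 0 < r → v r < 0) (hlim : Tendsto u atTop (nhds 0)) :
    Tendsto v atTop (nhds 0) ∧ ∃ C : ℝ, 0 < C ∧
      Tendsto (fun r : ℝ => u r * r ^ ((n : ℝ) / 2) * exp (√b * r)) atTop (nhds C) ∧
      Tendsto (fun r : ℝ => v r * r ^ ((n : ℝ) / 2) * exp (√b * r)) atTop (nhds (-√b * C)) := by
  have hP : ∀ r, 0 < r → 0 < - v r / u r := fun r hr =>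
    div_pos (by linarith [hv0 r hr]) (hu0 r hr.le)
  set κ := √b with hκdef
  have hκ : 0 < κ := sqrt_pos.2 hb
  have hκ2 : κ ^ 2 = b := sq_sqrt hb.le
  -- step 1
  have hsm : Tendsto (fun r => (a + b) * u r ^ 2) atTop (nhds ((a + b) * 0 ^ 2)) :=
    (hlim.pow 2).const_mul _
  obtain ⟨r1', hr1'⟩ := eventually_atTop.1 ((hlim.eventually_lt_const (show (0:ℝ) < 1 / 2 by norm_num)).and
    (hsm.eventually_lt_const (show (a + b) * 0 ^ 2 < b / 2 by simp; linarith)))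
  set r1 := max r1' 1
  have hr1 : 1 ≤ r1 := le_max_right _ _
  have hcub : ∀ r ≥ r1, |Fnl a b (u r) / u r + b| ≤ (a + b) * u r ^ 2 := by
    intro r hr
    have h1 := hr1' r ((le_max_left _ _).trans hr)
    have hp := hu0 r (by linarith)
    have h2 := Fnl_cubic ha hb hp h1.1.le
    have e : Fnl a b (u r) / u r + b = (Fnl a b (u r) + b * u r) / u r := by field_simp
    rw [e, abs_div, abs_of_pos hp, div_le_iff₀ hp]
    linarith
  have hF : ∀ r ≥ r1, Fnl a b (u r) / u r ≤ - (b / 2) := by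
    intro r hr
    have h1 := (hr1' r ((le_max_left _ _).trans hr)).2
    have h2 := (abs_le.1 (hcub r hr)).2
    linarith
  have hPl := S.P_lower hb hu0 hv0 (by linarith) hF
  -- step 3
  set r2 := max r1 (2 / κ)
  have hr2 : r1 ≤ r2 := le_max_left _ _
  have hr2' : 2 / κ ≤ r2 := le_max_right _ _
  have hanti : AntitoneOn (fun r => u r * r) (Set.Ici r2) := by
    have hd : ∀ r, HasDerivAt (fun r => u r * r) (v r * r + u r * 1) r := fun r =>
      (S.hu r).mul (hasDerivAt_id r)
    refine antitoneOn_of_deriv_nonpos (convex_Ici r2)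
      (fun x hx => (hd x).continuousAt.continuousWithinAt)
      (fun x hx => (hd x).differentiableAt.differentiableWithinAt) ?_
    intro x hx
    rw [interior_Ici] at hx
    have hx' : r2 < x := hx
    rw [(hd x).deriv]
    have h1 := hPl x (by linarith)
    have hp := hu0 x (by linarith)
    rw [le_div_iff₀ hp] at h1
    have h2 : 2 ≤ x * κ := by rw [← div_le_iff₀ hκ]; linarith
    have h3 : 0 < x := by linarith
    nlinarith
  set B := u r2 * r2
  have hB : 0 < B := mul_pos (hu0 r2 (by linarith)) (by linarith)
  have huB : ∀ r ≥ r2, u r ^ 2 ≤ B ^ 2 / r ^ 2 := by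
    intro r hr
    have hr' : 0 < r := by linarith
    have h1 := hanti Set.self_mem_Ici (show r ∈ Set.Ici r2 from hr) hr
    simp only at h1
    have hp := hu0 r hr'.le
    rw [le_div_iff₀ (by positivity), ← mul_pow]
    gcongr
  -- step 4
  set D : ℝ → ℝ := fun r => - v r / u r - κ - n / 2 / r with hDdef
  set h : ℝ → ℝ := fun r => - (Fnl a b (u r) / u r + b) + ((n:ℝ) ^ 2 / 4 - n / 2) / r ^ 2 with hhdef
  set C := (a + b) * B ^ 2 + |(n:ℝ) ^ 2 / 4 - n / 2|
  have hC : 0 ≤ C := by positivity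
  set r3 := max r2 (n / κ)
  have hr3 : r2 ≤ r3 := le_max_left _ _
  have hr3' : n / κ ≤ r3 := le_max_right _ _
  have hDd : ∀ r ≥ r3, HasDerivAt D (D r * (D r + 2 * κ) - h r) r := by
    intro r hr
    have hr' : 0 < r := by linarith
    have h1 : HasDerivAt (fun r : ℝ => (n:ℝ) / 2 / r) (- (n / 2 / r ^ 2)) r := by
      refine ((hasDerivAt_const r ((n:ℝ) / 2)).div (hasDerivAt_id r) hr'.ne').congr_deriv ?_
      simp
      ring
    refine (((S.P_deriv hu0 hr').sub_const κ).sub h1).congr_deriv ?_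
    simp only [hDdef, hhdef]
    generalize - v r / u r = p
    generalize Fnl a b (u r) / u r = q
    rw [← hκ2]
    field_simp
    ring
  have hhb : ∀ r ≥ r3, |h r| ≤ C / r ^ 2 := by
    intro r hr
    have hr' : 0 < r := by linarith
    have h1 := hcub r (by linarith)
    have h2 := huB r (by linarith)
    refine (abs_add_le _ _).trans ?_
    rw [abs_neg, abs_div, abs_of_pos (show 0 < r ^ 2 by positivity)]
    have h3 : (a + b) * u r ^ 2 ≤ (a + b) * (B ^ 2 / r ^ 2) := by gcongr
    have e : C / r ^ 2 = (a + b) * (B ^ 2 / r ^ 2) + |(n:ℝ) ^ 2 / 4 - n / 2| / r ^ 2 := by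
      simp only [C]; ring
    rw [e]
    linarith
  have hnr : ∀ r ≥ r3, (n:ℝ) / 2 / r ≤ κ / 2 := by
    intro r hr
    have hr' : 0 < r := by linarith
    rw [div_le_iff₀ hr']
    have : (n:ℝ) ≤ r * κ := by rw [← div_le_iff₀ hκ]; linarith
    linarith
  have hl : ∀ r ≥ r3, κ / 2 ≤ D r + 2 * κ := by
    intro r hr
    have h1 := hnr r hr
    have h2 := hP r (by linarith)
    simp only [hDdef]
    linarith
  have hr3pos : 0 < r3 := by linarith
  have hDb := D_bounds hκ hC rfl hr3pos hDd hhb hl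
  -- step 7
  obtain ⟨l, hZ⟩ := lim_of_deriv (Z := fun r => log (u r) + n / 2 * log r + κ * r) hr3pos
    (fun r hr => by
      have hr' : 0 < r := by linarith
      have hp := hu0 r hr'.le
      refine ((((S.hu r).log hp.ne').add ((hasDerivAt_log hr'.ne').const_mul ((n:ℝ) / 2))).add
        ((hasDerivAt_id r).const_mul κ)).congr_deriv ?_
      simp only [hDdef]
      ring) hDb
  have hz : Tendsto (fun r : ℝ => u r * r ^ ((n : ℝ) / 2) * exp (κ * r)) atTop (nhds (exp l)) := by
    refine ((continuous_exp.tendsto l).comp hZ).congr' ?_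
    filter_upwards [eventually_gt_atTop 0] with r hr
    have hp := hu0 r hr.le
    simp only [Function.comp]
    rw [exp_add, exp_add, exp_log hp, rpow_def_of_pos hr, mul_comm (log r)]
  have hD0 : Tendsto D atTop (nhds 0) := by
    refine squeeze_zero_norm' (a := fun r => 2 * C / κ / r ^ 2) ?_
      (tendsto_const_nhds.div_atTop (tendsto_pow_atTop two_ne_zero))
    filter_upwards [eventually_ge_atTop r3] with r hr using hDb r hr
  have hP0 : Tendsto (fun r => - v r / u r) atTop (nhds κ) := by
    have h1 : Tendsto (fun r : ℝ => (n:ℝ) / 2 / r) atTop (nhds 0) := tendsto_const_nhds.div_atTop tendsto_id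
    have := (hD0.add_const κ).add h1
    simp only [zero_add, add_zero] at this
    refine this.congr fun r => ?_
    simp only [hDdef]
    ring
  have hvP : ∀ r, 0 < r → v r = - (- v r / u r) * u r := fun r hr => by
    have := (hu0 r hr.le).ne'
    field_simp
  refine ⟨?_, exp l, exp_pos l, hz, ?_⟩
  · have := hP0.neg.mul hlim
    rw [mul_zero] at this
    refine this.congr' ?_
    filter_upwards [eventually_gt_atTop 0] with r hr using (hvP r hr).symm
  · refine (hP0.neg.mul hz).congr' ?_
    filter_upwards [eventually_gt_atTop 0] with r hr
    conv_rhs => rw [hvP r hr]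
    ring

end Sol



lemma cont_of_bound {f : ℝ → ℝ} {C : ℝ} (hC : 0 ≤ C) (h : ∀ y z, |f y - f z| ≤ C * |y - z|) :
    Continuous f := by
  refine (LipschitzWith.of_dist_le_mul (K := ⟨C, hC⟩) fun y z => ?_).continuous
  rw [Real.dist_eq, Real.dist_eq]
  exact h y z

theorem existence_of_ground_state (d : ℕ) (hd : 1 ≤ d) (a b : ℝ)
    (hb : 0 < b) (hab : 2 * b < a) :
    ∃ ybar ∈ Set.Ioo (0 : ℝ) (Real.pi / 2), ∃ Q : ℝ → ℝ,
      IsRadialSol d a b Q ∧ Q 0 = ybar ∧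
      (∀ r : ℝ, 0 ≤ r → 0 < Q r) ∧
      StrictAntiOn Q (Set.Ici 0) ∧
      Tendsto Q atTop (nhds 0) ∧
      Tendsto (deriv Q) atTop (nhds 0) ∧
      (∃ C : ℝ, 0 < C ∧
        Tendsto (fun r : ℝ =>
          Q r * r ^ (((d : ℝ) - 1) / 2) * Real.exp (Real.sqrt b * r)) atTop (nhds C) ∧
        Tendsto (fun r : ℝ =>
          deriv Q r * r ^ (((d : ℝ) - 1) / 2) * Real.exp (Real.sqrt b * r)) atTop
          (nhds (-Real.sqrt b * C))) ∧
      (d = 1 → ybar = Real.arcsin (Real.sqrt (2 * b / a))) ∧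
      (2 ≤ d → ybar ∈ Set.Ioo (Real.arcsin (Real.sqrt (2 * b / a))) (Real.pi / 2)) := by
  obtain ⟨n, rfl⟩ : ∃ n, d = n + 1 := ⟨d - 1, by omega⟩
  have hn : (((n + 1 : ℕ) : ℝ) - 1) = n := by push_cast; ring
  rw [hn]
  have ha : 0 < a := by linarith
  have hpi := pi_pos
  obtain ⟨U, hUc, hUi, hUl, hUpi⟩ := exists_family n ha hb
  set V : ℝ → ℝ → ℝ := fun y r => -(r * II n a b (U y) r) with hV
  have S : ∀ y, Sol n a b y (U y) (V y) := fun y => sol_of_int (hUc y) (hUi y)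
  have cU : ∀ r, Continuous fun y => U y r := fun r =>
    cont_of_bound (C := 2 * exp ((3 * a + b) * r ^ 2)) (by positivity) (fun y z => by
      linarith [hUl y z r])
  have cV : ∀ r, Continuous fun y => V y r := fun r =>
    cont_of_bound (C := |r| * ((3 * a + b) * 2 * exp ((3 * a + b) * r ^ 2))) (by positivity) (fun y z => by
      have h1 := II_diff (n := n) ha hb (show 0 ≤ 3 * a + b by positivity)
        (show 0 ≤ 2 * |y - z| by positivity) (hUc y) (hUc z) (hUl y z) r
      have e : V y r - V z r = - r * (II n a b (U y) r - II n a b (U z) r) := by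
        simp only [hV]; ring
      rw [e, abs_mul, abs_neg, mul_assoc]
      refine mul_le_mul_of_nonneg_left (h1.trans (le_of_eq ?_)) (abs_nonneg r)
      ring)
  have cE : ∀ r, Continuous fun y => En a b (U y) (V y) r := fun r => by
    have := cU r
    have := cV r
    have := Gnl_cont (a := a) (b := b)
    unfold En
    fun_prop
  set Sm : Set ℝ := {y | ∃ r, 0 ≤ r ∧ U y r < 0} with hSm
  set Sp : Set ℝ := {y | ∃ R, 0 ≤ R ∧ (∀ s ∈ Set.Icc 0 R, 0 < U y s) ∧ En a b (U y) (V y) R < 0} with hSp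
  have oSm : IsOpen Sm := by
    rw [isOpen_iff_mem_nhds]
    rintro y ⟨r, hr, h⟩
    filter_upwards [(cU r).continuousAt.eventually_lt_const h] with z hz using ⟨r, hr, hz⟩
  have oSp : IsOpen Sp := by
    rw [isOpen_iff_mem_nhds]
    rintro y ⟨R, hR, hpos, hE⟩
    obtain ⟨s0, hs0, hm⟩ := isCompact_Icc.exists_isMinOn (Set.nonempty_Icc.2 hR) (f := U y)
      (hUc y).continuousOn
    have c1 : Continuous fun z : ℝ => 2 * |z - y| * exp ((3 * a + b) * R ^ 2) := by fun_prop
    filter_upwards [(cE R).continuousAt.eventually_lt_const hE,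
      c1.continuousAt.eventually_lt_const (show _ < U y s0 by simpa using hpos s0 hs0)] with z hz1 hz2
    refine ⟨R, hR, fun s hs => ?_, hz1⟩
    have h1 := hUl z y s
    have h2 : exp ((3 * a + b) * s ^ 2) ≤ exp ((3 * a + b) * R ^ 2) := by
      have := hs.1
      have := hs.2
      gcongr
    have h3 : 2 * |z - y| * exp ((3 * a + b) * s ^ 2) ≤ 2 * |z - y| * exp ((3 * a + b) * R ^ 2) := by
      gcongr
    have h4 : U y s0 ≤ U y s := hm hs
    have h5 := (abs_le.1 h1).1
    linarith
  -- small data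
  have hsmall : ∀ y, 0 < y → y ≤ π / 2 → a * sin y ^ 2 < 2 * b → y ∈ Sp := by
    intro y h0 h1 h2
    refine ⟨0, le_rfl, ?_, ?_⟩
    · intro s hs
      have : s = 0 := le_antisymm hs.2 hs.1
      rw [this, (S y).h0]; exact h0
    · rw [(S y).En_zero]; exact Gnl_neg h0 h1 h2
  have nSp : (Set.Ioo 0 (π / 2) ∩ Sp).Nonempty := by
    have c1 : Continuous fun y : ℝ => a * sin y ^ 2 := by fun_prop
    have h1 : ∀ᶠ y in nhdsWithin (0:ℝ) (Set.Ioi 0), a * sin y ^ 2 < 2 * b :=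
      nhdsWithin_le_nhds (c1.continuousAt.eventually_lt_const (by simpa using hb))
    obtain ⟨y, hy1, hy2⟩ := (h1.and (Ioo_mem_nhdsGT (show (0:ℝ) < π / 2 by linarith))).exists
    exact ⟨y, hy2, hsmall y hy2.1 hy2.2.le hy1⟩
  have nSm : (Set.Ioo 0 (π / 2) ∩ Sm).Nonempty := by
    set e := (a - 2 * b) / 4 with he
    have he0 : 0 < e := by rw [he]; linarith
    set M := 1 + 2 * (a + b)
    have hM : 0 < M := by positivity
    set R := 1 + n * M * π * 2 / e
    have hR : 0 < R := by positivity
    have c1 : Continuous fun y : ℝ => a * sin y ^ 2 := by fun_prop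
    have hVpi : V (π / 2) R = 0 := by
      have : U (π / 2) = fun _ => π / 2 := funext hUpi
      simp [hV, II, this, Fnl_pi]
    have hEpi : En a b (U (π / 2)) (V (π / 2)) R = e := by
      unfold En
      rw [hVpi, hUpi, Gnl_pi]; simp [he]
    have h1 : ∀ᶠ y in nhdsWithin (π / 2) (Set.Iio (π / 2)), b < a * sin y ^ 2 ∧
        3 / 4 * e < En a b (U y) (V y) R :=
      nhdsWithin_le_nhds ((c1.continuousAt.eventually_const_lt (by simp; linarith)).and
        ((cE R).continuousAt.eventually_const_lt (by beta_reduce; rw [hEpi]; linarith)))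
    obtain ⟨y, ⟨hy1, hy2⟩, hy3⟩ := (h1.and (Ioo_mem_nhdsLT (show (0:ℝ) < π / 2 by linarith))).exists
    refine ⟨y, hy3, ?_⟩
    by_contra hcon
    have hu0 : ∀ r, 0 ≤ r → 0 ≤ U y r := by
      intro r hr
      by_contra h
      exact hcon ⟨r, hr, not_le.1 h⟩
    refine (S y).no_pos ha hb hy3.1 hy3.2 hy1 hu0 he0 hM.le (by nlinarith) hR ?_ hy2
    have : e / 4 * R = e / 4 + n * M * (π / 2) := by
      simp only [R]; field_simp; ring
    linarith
  have hdisj : ∀ y, y ∈ Sp → y ∈ Sm → False := by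
    rintro y ⟨R, hR, hpos, hE⟩ ⟨r, hr, hneg⟩
    have hRr : R < r := by
      by_contra h
      linarith [hpos r ⟨hr, not_lt.1 h⟩]
    obtain ⟨t, ht, ht0⟩ := intermediate_value_Icc' hRr.le (hUc y).continuousOn
      ⟨hneg.le, (hpos R ⟨hR, le_rfl⟩).le⟩
    have h1 := (S y).En_anti ha hR (hR.trans ht.1) ht.1
    unfold En at h1 hE
    rw [ht0, Gnl_zero] at h1
    nlinarith [sq_nonneg (V y t)]
  obtain ⟨y, hy, hyn⟩ : ∃ y ∈ Set.Ioo 0 (π / 2), y ∉ Sp ∪ Sm := by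
    by_contra hcon
    push Not at hcon
    obtain ⟨y, _, h1, h2⟩ := isPreconnected_Ioo Sp Sm oSp oSm hcon nSp nSm
    exact hdisj y h1 h2
  have hyp : y ∉ Sp := fun h => hyn (Or.inl h)
  have hym : y ∉ Sm := fun h => hyn (Or.inr h)
  have hS := S y
  set u := U y
  set v := V y
  have hu0 : ∀ r, 0 ≤ r → 0 ≤ u r := by
    intro r hr
    by_contra h
    exact hym ⟨r, hr, not_le.1 h⟩
  have hupos : ∀ r, 0 ≤ r → 0 < u r := by
    intro r hr
    rcases (hu0 r hr).eq_or_lt with h | h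
    · exfalso
      have hr' : 0 < r := by
        rcases hr.eq_or_lt with h1 | h1
        · rw [← h1, hS.h0] at h
          linarith [hy.1]
        · exact h1
      have hmin : IsLocalMin u r := by
        filter_upwards [lt_mem_nhds hr'] with x hx
        rw [← h]; exact hu0 x hx.le
      exact hS.backward ha hb hy.1.ne' hr' h.symm (hmin.hasDerivAt_eq_zero (hS.hu r))
    · exact h
  have hE : ∀ r, 0 ≤ r → 0 ≤ En a b u v r := by
    intro r hr
    by_contra h
    exact hyp ⟨r, hr, fun s hs => hupos s hs.1, not_le.1 h⟩
  have hyb : 2 * b ≤ a * sin y ^ 2 := by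
    by_contra h
    exact hyp (hsmall y hy.1 hy.2.le (not_le.1 h))
  have hneg := hS.decr ha hb hy.1 hy.2 (by linarith) hu0 (fun t ht hs hsin hvt => by
    have h1 := hE t ht.le
    have hle : u t ≤ y := by
      have := (hS.anti_of_neg hs).antitoneOn (Set.left_mem_Icc.2 ht.le) (Set.right_mem_Icc.2 ht.le) ht.le
      rwa [hS.h0] at this
    have h2 := Gnl_neg (a := a) (b := b) (hupos t ht.le) (by linarith [hy.2]) (by linarith)
    unfold En at h1
    rw [hvt] at h1
    linarith)
  have hlim := hS.tendsto_zero ha hb hy.2 hu0 hneg hE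
  obtain ⟨hvlim, C, hC, hA1, hA2⟩ := hS.asymp ha hb hupos hneg hlim
  have hder : deriv u = v := funext fun r => (hS.hu r).deriv
  have hsy : 0 < sin y := sin_pos_of_pos_of_lt_pi hy.1 (by linarith [hy.2])
  have harc : arcsin (sin y) = y := arcsin_sin (by linarith [hy.1]) hy.2.le
  refine ⟨y, hy, u, ⟨hS.hC, ?_, ?_⟩, hS.h0, hupos, ?_, hlim, ?_, ⟨C, hC, hA1, ?_⟩, ?_, ?_⟩
  · rw [hder, hS.v0]
  · intro r hr
    rw [hder, (hS.hv r hr).deriv, hn]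
    ring
  · refine strictAntiOn_of_deriv_neg (convex_Ici 0) hS.huc.continuousOn ?_
    intro x hx
    rw [interior_Ici] at hx
    rw [hder]
    exact hneg x hx
  · rw [hder]; exact hvlim
  · rw [hder]; exact hA2
  · intro h1
    have hn0 : n = 0 := by omega
    have hconst : ∀ r, 0 < r → HasDerivAt (En a b u v) 0 r := fun r hr => by
      have := hS.En_deriv ha hr
      rw [hn0] at this
      simpa using this
    have hElim : Tendsto (En a b u v) atTop (nhds 0) := by
      have h2 := ((hvlim.pow 2).div_const 2).add ((Gnl_cont (a := a) (b := b).tendsto 0).comp hlim)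
      rw [Gnl_zero] at h2
      show Tendsto (fun r => v r ^ 2 / 2 + Gnl a b (u r)) atTop (nhds 0)
      simpa using h2
    have hmono : MonotoneOn (En a b u v) (Set.Ici 0) := by
      refine monotoneOn_of_deriv_nonneg (convex_Ici 0) hS.En_cont.continuousOn ?_ ?_
      · intro x hx
        rw [interior_Ici] at hx
        exact (hconst x hx).differentiableAt.differentiableWithinAt
      · intro x hx
        rw [interior_Ici] at hx
        rw [(hconst x hx).deriv]
    have h3 : En a b u v 0 ≤ 0 := ge_of_tendsto hElim (by
      filter_upwards [eventually_ge_atTop 0] with r hr using hmono Set.self_mem_Ici hr hr)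
    rw [hS.En_zero, Gnl_eq] at h3
    have h4 : a * sin y ^ 2 = 2 * b := by
      refine le_antisymm ?_ hyb
      by_contra h
      push Not at h
      have : 0 < sin y ^ 2 * (a * sin y ^ 2 - 2 * b) := mul_pos (by positivity) (by linarith)
      linarith
    have h5 : 2 * b / a = sin y ^ 2 := by rw [← h4]; field_simp
    rw [h5, sqrt_sq hsy.le, harc]
  · intro h2
    refine ⟨?_, hy.2⟩
    have hn1 : 1 ≤ n := by omega
    have hlt : 2 * b < a * sin y ^ 2 := by
      refine lt_of_le_of_ne hyb fun heq => ?_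
      have hE0 : En a b u v 0 = 0 := by
        rw [hS.En_zero, Gnl_eq, ← heq]; simp
      have hst : StrictAntiOn (En a b u v) (Set.Ici 0) := by
        refine strictAntiOn_of_deriv_neg (convex_Ici 0) hS.En_cont.continuousOn ?_
        intro x hx
        rw [interior_Ici] at hx
        have hx' : 0 < x := hx
        rw [(hS.En_deriv ha hx).deriv]
        have h3 : 0 < v x ^ 2 := by
          have := (hneg x hx).ne
          positivity
        have h4 : (0:ℝ) < n / x := div_pos (by exact_mod_cast hn1) hx'
        have := mul_pos h4 h3
        linarith
      have h5 := hst Set.self_mem_Ici (Set.mem_Ici.2 zero_le_one) zero_lt_one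
      linarith [hE 1 zero_le_one]
    have h3 : √(2 * b / a) < sin y := by
      rw [sqrt_lt' hsy, div_lt_iff₀ ha]
      linarith
    calc arcsin √(2 * b / a) < arcsin (sin y) := by
          apply strictMonoOn_arcsin _ _ h3
          · exact ⟨by linarith [sqrt_nonneg (2 * b / a)], by linarith [sin_le_one y]⟩
          · exact ⟨neg_one_le_sin y, sin_le_one y⟩
      _ = y := harc
end
end

section
/- Let d ≥ 1 and a > 2b > 0, and let Q be the positive strictly decreasing solution of the radial ODE with Q'(0) = 0 and (Q, Q') → (0,0) at infinity. Then Q is the unique such solution: if u : [0,∞) → ℝ is any positive solution of u'' + ((d−1)/r)u' + F(u) = 0 with u'(0) = 0 and (u(r), u'(r)) → (0, 0) as r → ∞, then u = Q. -/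
open Real Filter

noncomputable section

namespace RGS
open Set Topology

/-- antiderivative of the nonlinearity -/
def Gnl (a b x : ℝ) : ℝ := sin x ^ 2 / 4 * (a * sin x ^ 2 - 2 * b)

/-- derivative of the nonlinearity -/
def fp (a b x : ℝ) : ℝ :=
  (cos x ^ 2 - sin x ^ 2) * (a * sin x ^ 2 - b) + 2 * a * sin x ^ 2 * cos x ^ 2

/-- the zero of the nonlinearity -/
def al (a b : ℝ) : ℝ := arcsin (√(b / a))

/-- logarithmic slope -/
def Kf (a b y : ℝ) : ℝ := y * fp a b y / Fnl a b y

lemma Fnl_eq {a b : ℝ} (ha : a ≠ 0) (x : ℝ) :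
    Fnl a b x = sin x * cos x * (a * sin x ^ 2 - b) := by
  unfold Fnl; rw [sin_two_mul]; field_simp

lemma hasDerivAt_Gnl {a b : ℝ} (ha : a ≠ 0) (x : ℝ) :
    HasDerivAt (Gnl a b) (Fnl a b x) x := by
  rw [Fnl_eq ha]
  have h := hasDerivAt_sin x
  have h2 := h.pow 2
  have := (h2.div_const 4).mul ((h2.const_mul a).sub_const (2*b))
  refine this.congr_deriv ?_
  simp; ring

lemma hasDerivAt_Fnl {a b : ℝ} (ha : a ≠ 0) (x : ℝ) :
    HasDerivAt (Fnl a b) (fp a b x) x := by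
  have e : Fnl a b = fun x => sin x * cos x * (a * sin x ^ 2 - b) := by
    funext x; exact Fnl_eq ha x
  rw [e]
  have h := hasDerivAt_sin x
  have h2 := h.pow 2
  have := (h.mul (hasDerivAt_cos x)).mul ((h2.const_mul a).sub_const b)
  refine this.congr_deriv ?_
  unfold fp
  simp; ring

lemma cont_Fnl (a b : ℝ) : Continuous (Fnl a b) := by
  unfold Fnl; fun_prop

lemma cont_Gnl (a b : ℝ) : Continuous (Gnl a b) := by
  unfold Gnl; fun_prop

section
variable {a b : ℝ} (hb : 0 < b) (hab : 2 * b < a)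
include hb hab

lemma al_mem : 0 < al a b ∧ al a b < π / 2 ∧ sin (al a b) ^ 2 = b / a := by
  have ha : 0 < a := by linarith
  have h1 : 0 < b / a := by positivity
  have h2 : b / a < 1 := by rw [div_lt_one ha]; linarith
  have h3 : √(b/a) < 1 := by rw [sqrt_lt' one_pos]; simpa using h2
  have h4 : 0 < √(b/a) := sqrt_pos.2 h1
  refine ⟨?_, ?_, ?_⟩
  · unfold al; exact arcsin_pos.2 h4
  · unfold al; exact arcsin_lt_pi_div_two.2 h3
  · unfold al; rw [sin_arcsin (by linarith) h3.le, sq_sqrt h1.le]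

lemma X_lt {y : ℝ} (h0 : 0 < y) (h1 : y < al a b) : a * sin y ^ 2 - b < 0 := by
  obtain ⟨h2, h3, h4⟩ := al_mem hb hab
  have ha : 0 < a := by linarith
  have hs : sin y < sin (al a b) := sin_lt_sin_of_lt_of_le_pi_div_two (by linarith) h3.le h1
  have hs0 : 0 < sin y := sin_pos_of_pos_of_lt_pi h0 (by linarith [pi_pos])
  have : sin y ^ 2 < b / a := by rw [← h4]; gcongr
  rw [lt_div_iff₀ ha] at this; linarith

lemma X_gt {y : ℝ} (h0 : al a b < y) (h1 : y < π / 2) : 0 < a * sin y ^ 2 - b := by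
  obtain ⟨h2, h3, h4⟩ := al_mem hb hab
  have ha : 0 < a := by linarith
  have hs : sin (al a b) < sin y := sin_lt_sin_of_lt_of_le_pi_div_two (by linarith) h1.le h0
  have hs0 : 0 < sin (al a b) := sin_pos_of_pos_of_lt_pi h2 (by linarith [pi_pos])
  have : b / a < sin y ^ 2 := by rw [← h4]; gcongr
  rw [div_lt_iff₀ ha] at this; linarith

lemma F_neg {y : ℝ} (h0 : 0 < y) (h1 : y < al a b) : Fnl a b y < 0 := by
  obtain ⟨h2, h3, h4⟩ := al_mem hb hab
  rw [Fnl_eq (by linarith)]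
  have := X_lt hb hab h0 h1
  have s0 : 0 < sin y := sin_pos_of_pos_of_lt_pi h0 (by linarith [pi_pos])
  have c0 : 0 < cos y := cos_pos_of_mem_Ioo ⟨by linarith, by linarith⟩
  exact mul_neg_of_pos_of_neg (by positivity) this

lemma F_al : Fnl a b (al a b) = 0 := by
  obtain ⟨h2, h3, h4⟩ := al_mem hb hab
  have ha : a ≠ 0 := by linarith
  rw [Fnl_eq ha, h4]; field_simp; ring

lemma F_pos {y : ℝ} (h0 : al a b < y) (h1 : y < π / 2) : 0 < Fnl a b y := by
  obtain ⟨h2, h3, h4⟩ := al_mem hb hab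
  rw [Fnl_eq (by linarith)]
  have := X_gt hb hab h0 h1
  have s0 : 0 < sin y := sin_pos_of_pos_of_lt_pi (by linarith) (by linarith [pi_pos])
  have c0 : 0 < cos y := cos_pos_of_mem_Ioo ⟨by linarith, by linarith⟩
  positivity

omit hb hab in
lemma ycot {x y : ℝ} (h0 : 0 < x) (hxy : x < y) (h1 : y < π / 2) :
    y * cos y / sin y < x * cos x / sin x := by
  have hanti : StrictAntiOn (fun t : ℝ => t * cos t / sin t) (Icc x y) := by
    apply strictAntiOn_of_deriv_neg (convex_Icc x y)
    · intro t ht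
      have s0 : 0 < sin t := sin_pos_of_pos_of_lt_pi (by linarith [ht.1]) (by linarith [pi_pos, ht.2])
      apply ContinuousAt.continuousWithinAt
      exact ContinuousAt.div (by fun_prop) (by fun_prop) s0.ne'
    · intro t ht
      rw [interior_Icc] at ht
      have t0 : 0 < t := by linarith [ht.1]
      have t1 : t < π / 2 := by linarith [ht.2]
      have s0 : 0 < sin t := sin_pos_of_pos_of_lt_pi t0 (by linarith [pi_pos, ht.2])
      have c0 : 0 < cos t := cos_pos_of_mem_Ioo ⟨by linarith, by linarith⟩
      have hd : HasDerivAt (fun t : ℝ => t * cos t / sin t) _ t :=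
        ((hasDerivAt_id t).mul (hasDerivAt_cos t)).div (hasDerivAt_sin t) s0.ne'
      rw [hd.deriv]
      apply div_neg_of_neg_of_pos _ (by positivity)
      have h3 : sin t < t := sin_lt t0
      have h4 := sin_sq_add_cos_sq t
      have h5 := cos_le_one t
      simp only [Pi.mul_apply, id]
      have e : (1 * cos t + t * -sin t) * sin t - t * cos t * cos t = sin t * cos t - t := by
        linear_combination (-t) * h4
      rw [e]; nlinarith
  exact hanti ⟨le_rfl, hxy.le⟩ ⟨hxy.le, le_rfl⟩ hxy

lemma Kf_eq {y : ℝ} (h0 : al a b < y) (h1 : y < π / 2) :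
    Kf a b y = (y * cos y / sin y) * (3 + 2 * b / (a * sin y ^ 2 - b)) - y * sin y / cos y := by
  obtain ⟨h2, h3, h4⟩ := al_mem hb hab
  have hX := X_gt hb hab h0 h1
  have s0 : 0 < sin y := sin_pos_of_pos_of_lt_pi (by linarith) (by linarith [pi_pos])
  have c0 : 0 < cos y := cos_pos_of_mem_Ioo ⟨by linarith, by linarith⟩
  have hX' := hX.ne'
  unfold Kf fp
  rw [Fnl_eq (by linarith)]
  have hX2 : 2 * b / (a * sin y ^ 2 - b) = 2 * (a * sin y ^ 2) / (a * sin y ^ 2 - b) - 2 := by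
    field_simp; ring
  rw [hX2]
  set X := a * sin y ^ 2 - b with hXd
  have e : a * sin y ^ 2 = X + b := by rw [hXd]; ring
  have e' : 2 * a * sin y ^ 2 * cos y ^ 2 = 2 * (X + b) * cos y ^ 2 := by rw [← e]; ring
  rw [e, e']
  field_simp
  ring

lemma Kf_anti {x y : ℝ} (h0 : al a b < x) (hxy : x < y) (h1 : y < π / 2) :
    Kf a b y < Kf a b x := by
  obtain ⟨h2, h3, h4⟩ := al_mem hb hab
  have ha : 0 < a := by linarith
  rw [Kf_eq hb hab h0 (by linarith), Kf_eq hb hab (by linarith) h1]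
  have hc := ycot (by linarith) hxy h1
  have hX := X_gt hb hab h0 (by linarith)
  have s0 : 0 < sin x := sin_pos_of_pos_of_lt_pi (by linarith) (by linarith [pi_pos])
  have c0 : 0 < cos x := cos_pos_of_mem_Ioo ⟨by linarith, by linarith⟩
  have s1 : 0 < sin y := sin_pos_of_pos_of_lt_pi (by linarith) (by linarith [pi_pos])
  have c1 : 0 < cos y := cos_pos_of_mem_Ioo ⟨by linarith, by linarith⟩
  have hs : sin x < sin y := sin_lt_sin_of_lt_of_le_pi_div_two (by linarith) h1.le hxy
  have hcc : cos y < cos x := cos_lt_cos_of_nonneg_of_le_pi (by linarith) (by linarith) hxy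
  have e1 : a * sin x ^ 2 - b < a * sin y ^ 2 - b := by gcongr
  have e2 : 2 * b / (a * sin y ^ 2 - b) ≤ 2 * b / (a * sin x ^ 2 - b) := by gcongr
  have e3 : x * sin x / cos x ≤ y * sin y / cos y := by
    have x0 : 0 < x := by linarith
    have y0 : 0 < y := by linarith
    gcongr
  have y0 : 0 < y := by linarith
  have e4 : 0 < 2 * b / (a * sin y ^ 2 - b) := by
    have : 0 < a * sin y ^ 2 - b := by linarith
    positivity
  have e5 : (y * cos y / sin y) * (3 + 2 * b / (a * sin y ^ 2 - b))
      < (x * cos x / sin x) * (3 + 2 * b / (a * sin x ^ 2 - b)) := by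
    apply mul_lt_mul hc (by linarith) (by linarith)
    have x0 : 0 < x := by linarith
    positivity
  linarith

/-- Pohozaev density -/
lemma H_sign (m : ℕ) (hm : 1 ≤ m) {x y : ℝ} (h0 : 0 < x) (hxy : x ≤ y) (h1 : y < π / 2) (hy : al a b < y)
    (hH : (m + 1) * Gnl a b y - ((m - 1) / 2) * (y * Fnl a b y) < 0) :
    (m + 1) * Gnl a b x - ((m - 1) / 2) * (x * Fnl a b x) ≤ 0 := by
  obtain ⟨h2, h3, h4⟩ := al_mem hb hab
  have ha : 0 < a := by linarith
  have hm' : (1 : ℝ) ≤ m := by exact_mod_cast hm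
  rcases hxy.eq_or_lt with rfl | hxy
  · exact hH.le
  have s0 : 0 < sin x := sin_pos_of_pos_of_lt_pi (by linarith) (by linarith [pi_pos])
  have c0 : 0 < cos x := cos_pos_of_mem_Ioo ⟨by linarith, by linarith⟩
  have s1 : 0 < sin y := sin_pos_of_pos_of_lt_pi (by linarith) (by linarith [pi_pos])
  have c1 : 0 < cos y := cos_pos_of_mem_Ioo ⟨by linarith, by linarith⟩
  have hs : sin x < sin y := sin_lt_sin_of_lt_of_le_pi_div_two (by linarith) h1.le hxy
  rw [Fnl_eq ha.ne'] at hH ⊢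
  unfold Gnl at hH ⊢
  have key : ∀ t : ℝ, (m + 1) * (sin t ^ 2 / 4 * (a * sin t ^ 2 - 2 * b)) -
      (m - 1) / 2 * (t * (sin t * cos t * (a * sin t ^ 2 - b)))
      = sin t / 4 * ((m + 1) * (sin t * (a * sin t ^ 2 - 2 * b)) -
        2 * (m - 1) * (t * cos t * (a * sin t ^ 2 - b))) := by intro t; ring
  rw [key] at hH ⊢
  have hH' : (m + 1) * (sin y * (a * sin y ^ 2 - 2 * b)) -
        2 * (m - 1) * (y * cos y * (a * sin y ^ 2 - b)) < 0 := by
    by_contra hcon; push Not at hcon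
    have : 0 ≤ sin y / 4 * ((m + 1) * (sin y * (a * sin y ^ 2 - 2 * b)) -
        2 * (m - 1) * (y * cos y * (a * sin y ^ 2 - b))) := by positivity
    linarith
  suffices (m + 1) * (sin x * (a * sin x ^ 2 - 2 * b)) -
        2 * (m - 1) * (x * cos x * (a * sin x ^ 2 - b)) ≤ 0 from
    mul_nonpos_of_nonneg_of_nonpos (by positivity) this
  have hxc : x * cos x < sin x := by
    have := tan_eq_sin_div_cos x ▸ lt_tan h0 (by linarith)
    rw [lt_div_iff₀ c0] at this; exact this
  rcases le_or_gt (a * sin x ^ 2 - b) 0 with hX | hX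
  · have t1 : 0 ≤ (b - a * sin x ^ 2) := by linarith
    have t2 : x * cos x * (b - a * sin x ^ 2) ≤ sin x * (b - a * sin x ^ 2) := by gcongr
    have t3 : sin x * (a * sin x ^ 2 - 2 * b) ≤ - 2 * (sin x * (b - a * sin x ^ 2)) := by
      have : 0 < sin x * (a * sin x ^ 2) := by positivity
      nlinarith
    have t4 : 0 ≤ x * cos x * (b - a * sin x ^ 2) := by positivity
    have t5 := mul_le_mul_of_nonneg_left t2 (by linarith : (0:ℝ) ≤ 2 * (m - 1))
    have t6 := mul_le_mul_of_nonneg_left t3 (by linarith : (0:ℝ) ≤ m + 1)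
    have t7 : 0 ≤ sin x * (b - a * sin x ^ 2) := by positivity
    nlinarith
  · rcases le_or_gt (a * sin x ^ 2 - 2 * b) 0 with hX2 | hX2
    · have t1 : 0 ≤ 2 * ((m:ℝ) - 1) * (x * cos x * (a * sin x ^ 2 - b)) := by
        have : (0:ℝ) ≤ m - 1 := by linarith
        positivity
      have t2 : ((m:ℝ) + 1) * (sin x * (a * sin x ^ 2 - 2 * b)) ≤ 0 :=
        mul_nonpos_of_nonneg_of_nonpos (by positivity)
          (mul_nonpos_of_nonneg_of_nonpos (by positivity) hX2)
      linarith
    · by_contra hcon; push Not at hcon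
      have hc := ycot (by linarith) hxy h1
      have e1 : a * sin x ^ 2 < a * sin y ^ 2 := by gcongr
      set Xx := a * sin x ^ 2
      set Xy := a * sin y ^ 2
      have m0 : (0:ℝ) ≤ m - 1 := by linarith
      rw [div_lt_div_iff₀ s1 s0] at hc
      -- multiply out
      have q1 : (m + 1) * (sin y * (Xy - 2 * b)) < 2 * (m - 1) * (y * cos y * (Xy - b)) := by linarith
      have q2 : 2 * (m - 1) * (x * cos x * (Xx - b)) < (m + 1) * (sin x * (Xx - 2 * b)) := by linarith
      have r1 : (m + 1) * (Xy - 2 * b) * (sin x * sin y) ≤ 2 * (m - 1) * (Xy - b) * (y * cos y * sin x) := by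
        have := mul_le_mul_of_nonneg_right q1.le s0.le
        nlinarith
      have r2 : 2 * (m - 1) * (Xx - b) * (x * cos x * sin y) < (m + 1) * (Xx - 2 * b) * (sin x * sin y) := by
        have := mul_lt_mul_of_pos_right q2 s1
        nlinarith
      set T := sin x * sin y with hT
      have T0 : 0 < T := by positivity
      set U := y * cos y * sin x
      set V := x * cos x * sin y
      have V0 : 0 < V := by positivity
      have hb0 : 0 < Xy - b := by linarith
      have w1 : (m + 1) * (Xy - 2 * b) * T ≤ 2 * (m - 1) * (Xy - b) * V := by
        refine r1.trans ?_
        gcongr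
      have w2 := mul_le_mul_of_nonneg_right w1 hX.le
      have w3 := mul_lt_mul_of_pos_right r2 hb0
      have w4 : ((m:ℝ) + 1) * T * ((Xy - 2 * b) * (Xx - b) - (Xx - 2 * b) * (Xy - b)) < 0 := by
        linarith only [w2, w3]
      have w5 : (Xy - 2 * b) * (Xx - b) - (Xx - 2 * b) * (Xy - b) = b * (Xy - Xx) := by ring
      rw [w5] at w4
      have : 0 < ((m:ℝ) + 1) * T * (b * (Xy - Xx)) := by
        have : 0 < Xy - Xx := by linarith
        positivity
      linarith

/-- if `K ≥ 1` then `y f - 2 G > 0` -/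
lemma yf_gt {y : ℝ} (h0 : al a b < y) (h1 : y < π / 2) (hK : 1 ≤ Kf a b y) :
    0 < y * Fnl a b y - 2 * Gnl a b y := by
  obtain ⟨h2, h3, h4⟩ := al_mem hb hab
  have ha : 0 < a := by linarith
  have hmono : MonotoneOn (fun t => t * Fnl a b t - 2 * Gnl a b t) (Icc (al a b) y) := by
    have hd : ∀ t, HasDerivAt (fun t => t * Fnl a b t - 2 * Gnl a b t)
        (t * fp a b t - Fnl a b t) t := by
      intro t
      have := ((hasDerivAt_id t).mul (hasDerivAt_Fnl (b := b) ha.ne' t)).sub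
        ((hasDerivAt_Gnl (b := b) ha.ne' t).const_mul 2)
      refine this.congr_deriv ?_
      simp; ring
    apply monotoneOn_of_deriv_nonneg (convex_Icc _ _)
    · intro t _; exact (hd t).continuousAt.continuousWithinAt
    · intro t _; exact (hd t).differentiableAt.differentiableWithinAt
    · intro t ht
      rw [interior_Icc] at ht
      rw [(hd t).deriv]
      have hF := F_pos hb hab ht.1 (by linarith [ht.2])
      have hk : 1 ≤ Kf a b t := hK.trans (Kf_anti hb hab ht.1 ht.2 h1).le
      unfold Kf at hk
      rw [le_div_iff₀ hF] at hk; linarith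
  have := hmono ⟨le_rfl, h0.le⟩ ⟨h0.le, le_rfl⟩ h0.le
  simp only [F_al hb hab] at this
  have hG : Gnl a b (al a b) < 0 := by
    unfold Gnl; rw [h4]
    have : a * (b / a) - 2 * b < 0 := by field_simp; linarith
    exact mul_neg_of_pos_of_neg (by positivity) this
  linarith

end
end RGS

namespace RGS
open Set Topology

lemma mono_Ioo {g g' : ℝ → ℝ} {l c : ℝ} (hd : ∀ y ∈ Ioo l c, HasDerivAt g (g' y) y)
    (h : ∀ y ∈ Ioo l c, 0 ≤ g' y) : MonotoneOn g (Ioo l c) := by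
  apply monotoneOn_of_deriv_nonneg (convex_Ioo _ _)
  · intro t ht; exact (hd t ht).continuousAt.continuousWithinAt
  · intro t ht; rw [interior_Ioo] at ht; exact (hd t ht).differentiableAt.differentiableWithinAt
  · intro t ht; rw [interior_Ioo] at ht; rw [(hd t ht).deriv]; exact h t ht

lemma smono_Ioo {g g' : ℝ → ℝ} {l c : ℝ} (hd : ∀ y ∈ Ioo l c, HasDerivAt g (g' y) y)
    (h : ∀ y ∈ Ioo l c, 0 < g' y) : StrictMonoOn g (Ioo l c) := by
  apply strictMonoOn_of_deriv_pos (convex_Ioo _ _)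
  · intro t ht; exact (hd t ht).continuousAt.continuousWithinAt
  · intro t ht; rw [interior_Ioo] at ht; rw [(hd t ht).deriv]; exact h t ht

lemma ge_lim {g : ℝ → ℝ} {l c L : ℝ} (hm : MonotoneOn g (Ioo l c))
    (hl : Tendsto g (𝓝[>] l) (𝓝 L)) {y : ℝ} (hy : y ∈ Ioo l c) : L ≤ g y := by
  apply le_of_tendsto hl
  filter_upwards [Ioo_mem_nhdsGT hy.1] with t ht
  exact hm ⟨ht.1, ht.2.trans hy.2⟩ hy ht.2.le

structure Prof (m : ℕ) (a b M : ℝ) (r p : ℝ → ℝ) : Prop where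
  alM : al a b < M
  Mpi : M < π / 2
  rpos : ∀ y ∈ Ioo 0 M, 0 < r y
  ppos : ∀ y ∈ Ioo 0 M, 0 < p y
  dr : ∀ y ∈ Ioo 0 M, HasDerivAt r (-(1 / p y)) y
  dp : ∀ y ∈ Ioo 0 M, HasDerivAt p (m / r y - Fnl a b y / p y) y
  r_top : Tendsto r (𝓝[<] M) (𝓝 0)
  p_top : Tendsto p (𝓝[<] M) (𝓝 0)
  A_top : Tendsto (fun y => r y * Fnl a b y / p y) (𝓝[<] M) (𝓝 (m + 1))
  r_bot : Tendsto r (𝓝[>] 0) atTop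
  p_bot : Tendsto p (𝓝[>] 0) (𝓝 0)

section
variable {m : ℕ} {a b M : ℝ} {r p : ℝ → ℝ} (hb : 0 < b) (hab : 2 * b < a) (h : Prof m a b M r p)
include hb hab h

lemma Prof.E_deriv {y : ℝ} (hy : y ∈ Ioo 0 M) :
    HasDerivAt (fun y => p y ^ 2 / 2 + Gnl a b y) (m * p y / r y) y := by
  have ha : a ≠ 0 := by linarith
  have h1 := (((h.dp y hy).pow 2).div_const 2).add (hasDerivAt_Gnl (b := b) ha y)
  refine h1.congr_deriv ?_
  have := h.ppos y hy
  have := h.rpos y hy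
  field_simp
  simp
  ring

lemma Prof.E_bot : Tendsto (fun y => p y ^ 2 / 2 + Gnl a b y) (𝓝[>] 0) (𝓝 0) := by
  have h1 : Tendsto (Gnl a b) (𝓝[>] 0) (𝓝 (Gnl a b 0)) :=
    ((cont_Gnl a b).tendsto 0).mono_left nhdsWithin_le_nhds
  have h2 := ((h.p_bot.pow 2).div_const 2).add h1
  simpa [Gnl] using h2

lemma Prof.E_nonneg {y : ℝ} (hy : y ∈ Ioo 0 M) : 0 ≤ p y ^ 2 / 2 + Gnl a b y := by
  refine ge_lim (mono_Ioo (fun y hy => h.E_deriv hb hab hy) ?_) (h.E_bot hb hab) hy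
  intro t ht
  have := h.ppos t ht
  have := h.rpos t ht
  positivity

lemma Prof.E_le {y : ℝ} (hy : y ∈ Ioo 0 (al a b)) :
    p y ^ 2 / 2 + Gnl a b y ≤ m * (y * (p y / r y)) := by
  have hM := h.alM
  have sub : ∀ t ∈ Ioo 0 (al a b), t ∈ Ioo 0 M := fun t ht => ⟨ht.1, ht.2.trans hM⟩
  have hpr : ∀ t ∈ Ioo 0 (al a b), HasDerivAt (fun y => p y / r y)
      (((m / r t - Fnl a b t / p t) * r t - p t * (-(1 / p t))) / r t ^ 2) t := fun t ht =>
    (h.dp t (sub t ht)).div (h.dr t (sub t ht)) (h.rpos t (sub t ht)).ne'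
  have hN : ∀ t ∈ Ioo 0 (al a b), HasDerivAt (fun y => m * (y * (p y / r y)) - (p y ^ 2 / 2 + Gnl a b y))
      (m * (1 * (p t / r t) + t * (((m / r t - Fnl a b t / p t) * r t - p t * (-(1 / p t))) / r t ^ 2))
        - m * p t / r t) t := fun t ht =>
    (((hasDerivAt_id t).mul (hpr t ht)).const_mul (m:ℝ)).sub (h.E_deriv hb hab (sub t ht))
  have hlim : Tendsto (fun y => m * (y * (p y / r y)) - (p y ^ 2 / 2 + Gnl a b y)) (𝓝[>] 0) (𝓝 0) := by
    have h1 : Tendsto (fun y : ℝ => y) (𝓝[>] 0) (𝓝 0) := tendsto_id.mono_left nhdsWithin_le_nhds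
    have h2 := ((h1.mul (h.p_bot.mul h.r_bot.inv_tendsto_atTop)).const_mul (m:ℝ)).sub (h.E_bot hb hab)
    simpa [div_eq_mul_inv] using h2
  have := ge_lim (mono_Ioo hN ?_) hlim hy
  · linarith
  intro t ht
  have p0 := h.ppos t (sub t ht)
  have r0 := h.rpos t (sub t ht)
  have f0 := F_neg hb hab ht.1 ht.2
  have t0 := ht.1
  have e : m * (1 * (p t / r t) + t * (((m / r t - Fnl a b t / p t) * r t - p t * (-(1 / p t))) / r t ^ 2))
        - m * p t / r t = m * (t * ((m + (-Fnl a b t) * r t / p t + 1) / r t ^ 2)) := by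
    field_simp; ring
  rw [e]
  have : 0 < - Fnl a b t := by linarith
  positivity

lemma Prof.q_bot : Tendsto (fun y => p y / y) (𝓝[>] 0) (𝓝 (√b)) := by
  have ha : 0 < a := by linarith
  have hM := h.alM
  obtain ⟨al0, al1, _⟩ := al_mem hb hab
  have hc : Tendsto (fun y => -2 * Gnl a b y / y ^ 2) (𝓝[>] 0) (𝓝 b) := by
    have h1 : Tendsto (fun y : ℝ => sin y / y) (𝓝[>] 0) (𝓝 1) := by
      have := (hasDerivAt_sin 0).tendsto_slope_zero_right
      simpa [div_eq_inv_mul] using this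
    have h2 : Tendsto (fun y : ℝ => b - a * sin y ^ 2 / 2) (𝓝[>] 0) (𝓝 b) := by
      have : Continuous (fun y : ℝ => b - a * sin y ^ 2 / 2) := by fun_prop
      have := (this.tendsto 0).mono_left (nhdsWithin_le_nhds (s := Ioi 0))
      simpa using this
    have h3 := (h1.pow 2).mul h2
    simp only [one_pow, one_mul] at h3
    refine h3.congr' ?_
    filter_upwards [self_mem_nhdsWithin] with y hy
    have : y ≠ 0 := ne_of_gt hy
    unfold Gnl; field_simp; ring
  have he : Tendsto (fun y => m * (r y)⁻¹) (𝓝[>] 0) (𝓝 0) := by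
    simpa using h.r_bot.inv_tendsto_atTop.const_mul (m:ℝ)
  have lo : Tendsto (fun y => √(-2 * Gnl a b y / y ^ 2)) (𝓝[>] 0) (𝓝 (√b)) :=
    (continuous_sqrt.tendsto b).comp hc
  have hi : Tendsto (fun y => m * (r y)⁻¹ + √(-2 * Gnl a b y / y ^ 2 + (m * (r y)⁻¹) ^ 2))
      (𝓝[>] 0) (𝓝 (√b)) := by
    have h1 := hc.add (he.pow 2)
    have h2 := he.add ((continuous_sqrt.tendsto _).comp h1)
    simpa using h2
  refine tendsto_of_tendsto_of_tendsto_of_le_of_le' lo hi ?_ ?_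
  · filter_upwards [Ioo_mem_nhdsGT al0] with y hy
    have hyM : y ∈ Ioo 0 M := ⟨hy.1, hy.2.trans hM⟩
    have p0 := h.ppos y hyM
    have y0 := hy.1
    apply sqrt_le_iff.2 ⟨by positivity, ?_⟩
    rw [div_pow]
    gcongr
    linarith [h.E_nonneg hb hab hyM]
  · filter_upwards [Ioo_mem_nhdsGT al0] with y hy
    have hyM : y ∈ Ioo 0 M := ⟨hy.1, hy.2.trans hM⟩
    have p0 := h.ppos y hyM
    have r0 := h.rpos y hyM
    have y0 := hy.1
    have := h.E_le hb hab hy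
    have key : p y / y - m * (r y)⁻¹ ≤ √(-2 * Gnl a b y / y ^ 2 + (m * (r y)⁻¹) ^ 2) := by
      apply le_sqrt_of_sq_le
      have e : (p y / y - m * (r y)⁻¹) ^ 2 - (m * (r y)⁻¹) ^ 2
          = 2 * (p y ^ 2 / 2 - m * (y * (p y / r y))) / y ^ 2 := by
        field_simp; ring
      have e2 : 2 * (p y ^ 2 / 2 - m * (y * (p y / r y))) / y ^ 2 ≤ -2 * Gnl a b y / y ^ 2 := by
        exact div_le_div_of_nonneg_right (by linarith) (by positivity)
      linarith
    linarith

lemma Prof.rk_bot (k : ℕ) : Tendsto (fun y => r y ^ k * y) (𝓝[>] 0) (𝓝 0) := by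
  have hM := h.alM
  obtain ⟨al0, al1, _⟩ := al_mem hb hab
  have hB : Tendsto (fun y => r y * (p y / y)) (𝓝[>] 0) atTop :=
    h.r_bot.atTop_mul_pos (sqrt_pos.2 hb) (h.q_bot hb hab)
  have hev := (hB.eventually_ge_atTop ((k:ℝ) + 1)).and (Ioo_mem_nhdsGT (al0.trans hM))
  obtain ⟨δ, δ0, hδ⟩ := (mem_nhdsGT_iff_exists_Ioo_subset).1 hev
  have hδ0 : (0:ℝ) < δ := δ0
  have hd : ∀ y ∈ Ioo 0 δ, HasDerivAt (fun y => r y ^ (k+1) * y)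
      (((k + 1 : ℕ) * r y ^ k * (-(1 / p y))) * y + r y ^ (k+1) * 1) y := fun y hy =>
    ((h.dr y (hδ hy).2).pow (k+1)).mul (hasDerivAt_id y)
  have hm : MonotoneOn (fun y => r y ^ (k+1) * y) (Ioo 0 δ) := by
    apply mono_Ioo hd
    intro y hy
    have p0 := h.ppos y (hδ hy).2
    have r0 := h.rpos y (hδ hy).2
    have y0 := hy.1
    have h1 : (k:ℝ) + 1 ≤ r y * (p y / y) := (hδ hy).1
    have e : ((k + 1 : ℕ) * r y ^ k * (-(1 / p y))) * y + r y ^ (k+1) * 1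
      = r y ^ k * (y / p y) * (r y * (p y / y) - (k + 1)) := by
      push_cast; field_simp; ring
    rw [e]
    have : 0 ≤ r y * (p y / y) - (k + 1) := by linarith
    positivity
  have hz : Tendsto (fun y => (r (δ/2) ^ (k+1) * (δ/2)) * (r y)⁻¹) (𝓝[>] 0) (𝓝 0) := by
    simpa using h.r_bot.inv_tendsto_atTop.const_mul (r (δ/2) ^ (k+1) * (δ/2))
  refine tendsto_of_tendsto_of_tendsto_of_le_of_le' tendsto_const_nhds hz ?_ ?_
  · filter_upwards [Ioo_mem_nhdsGT hδ0] with y hy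
    have r0 := h.rpos y (hδ hy).2
    have y0 := hy.1
    positivity
  · filter_upwards [Ioo_mem_nhdsGT (half_pos hδ0)] with y hy
    have hy' : y ∈ Ioo 0 δ := ⟨hy.1, by linarith [hy.2]⟩
    have r0 := h.rpos y (hδ hy').2
    have := hm hy' ⟨half_pos hδ0, by linarith⟩ hy.2.le
    simp only at this
    rw [← div_eq_mul_inv, le_div_iff₀ r0]
    calc r y ^ k * y * r y = r y ^ (k+1) * y := by ring
      _ ≤ _ := this

lemma Prof.rho_bot : Tendsto (fun y => r y * p y) (𝓝[>] 0) (𝓝 0) := by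
  have h1 := (h.rk_bot hb hab 1).mul (h.q_bot hb hab)
  simp only [zero_mul] at h1
  refine h1.congr' ?_
  filter_upwards [self_mem_nhdsWithin] with y hy
  have : y ≠ 0 := ne_of_gt hy
  field_simp

end
end RGS

namespace RGS
open Set Topology

lemma last_zero {g : ℝ → ℝ} {x c : ℝ} (hxc : x < c) (hg : ContinuousOn g (Icc x c))
    (h0 : g x ≤ 0) (h1 : 0 < g c) : ∃ y ∈ Ico x c, g y = 0 ∧ ∀ t ∈ Ioc y c, 0 < g t := by
  have hcl : IsClosed (Icc x c ∩ g ⁻¹' Iic 0) := hg.preimage_isClosed_of_isClosed isClosed_Icc isClosed_Iic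
  have hcp : IsCompact (Icc x c ∩ g ⁻¹' Iic 0) :=
    isCompact_Icc.of_isClosed_subset hcl inter_subset_left
  obtain ⟨y, ⟨hy1, hy2⟩, hy3⟩ := hcp.exists_isGreatest ⟨x, ⟨le_rfl, hxc.le⟩, h0⟩
  have hyc : y < c := by
    rcases hy1.2.lt_or_eq with h | h
    · exact h
    · subst h; exact absurd (show g y ≤ 0 from hy2) (not_le.2 h1)
  have hpos : ∀ t ∈ Ioc y c, 0 < g t := by
    intro t ht
    by_contra hn
    have := hy3 ⟨⟨hy1.1.trans ht.1.le, ht.2⟩, (not_lt.1 hn : g t ≤ 0)⟩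
    exact absurd ht.1 (not_lt.2 this)
  refine ⟨y, ⟨hy1.1, hyc⟩, le_antisymm hy2 ?_, hpos⟩
  have hc : ContinuousWithinAt g (Ioc y c) y :=
    (hg y hy1).mono (fun t ht => ⟨hy1.1.trans ht.1.le, ht.2⟩)
  have : (𝓝[Ioc y c] y).NeBot := by
    rw [nhdsWithin_Ioc_eq_nhdsGT hyc]; infer_instance
  apply ge_of_tendsto hc
  filter_upwards [self_mem_nhdsWithin] with t ht using (hpos t ht).le

lemma first_zero {g : ℝ → ℝ} {x c : ℝ} (hxc : x < c) (hg : ContinuousOn g (Icc x c))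
    (h0 : g c ≤ 0) (h1 : 0 < g x) : ∃ y ∈ Ioc x c, g y = 0 ∧ ∀ t ∈ Ico x y, 0 < g t := by
  obtain ⟨y, hy, hy0, hyp⟩ := last_zero (g := fun t => g (-t)) (x := -c) (c := -x) (by linarith)
    (hg.comp continuousOn_neg (fun t ht => ⟨by linarith [ht.2], by linarith [ht.1]⟩))
    (by simpa using h0) (by simpa using h1)
  refine ⟨-y, ⟨by linarith [hy.2], by linarith [hy.1]⟩, hy0, fun t ht => ?_⟩
  have := hyp (-t) ⟨by linarith [ht.2], by linarith [ht.1]⟩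
  simpa using this

lemma deriv_right {g : ℝ → ℝ} {y c d : ℝ} (hyc : y < c) (hd : HasDerivAt g d y) (h0 : g y = 0)
    (hp : ∀ t ∈ Ioo y c, 0 < g t) : 0 ≤ d := by
  have h1 := hd.tendsto_slope_zero_right
  apply ge_of_tendsto h1
  filter_upwards [Ioo_mem_nhdsGT (show (0:ℝ) < c - y by linarith)] with t ht
  rw [h0, sub_zero, smul_eq_mul]
  have := hp (y + t) ⟨by linarith [ht.1], by linarith [ht.2]⟩
  have := ht.1
  positivity

lemma deriv_left {g : ℝ → ℝ} {y c d : ℝ} (hyc : c < y) (hd : HasDerivAt g d y) (h0 : g y = 0)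
    (hp : ∀ t ∈ Ioo c y, 0 < g t) : d ≤ 0 := by
  have h1 : HasDerivAt (fun t => g (-t)) (-d) (-y) := by
    have h2 : HasDerivAt g d (-(-y)) := by simpa using hd
    exact (h2.comp (-y) (hasDerivAt_neg (-y))).congr_deriv (by ring)
  have := deriv_right (c := -c) (by linarith) h1 (by simpa using h0)
    (fun t ht => hp (-t) ⟨by linarith [ht.2], by linarith [ht.1]⟩)
  linarith

section
variable {m : ℕ} {a b M N : ℝ} {r p s q : ℝ → ℝ}

lemma Prof.L_deriv (h : Prof m a b M r p) {y : ℝ} (hy : y ∈ Ioo 0 M) :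
    HasDerivAt (fun y => m * log (r y) + log (p y)) (- Fnl a b y / p y ^ 2) y := by
  have p0 := h.ppos y hy
  have r0 := h.rpos y hy
  refine (((h.dr y hy).log r0.ne').const_mul (m:ℝ) |>.add ((h.dp y hy).log p0.ne')).congr_deriv ?_
  field_simp
  ring

lemma Prof.g_deriv (h : Prof m a b M r p) (k : Prof m a b N s q) {y : ℝ} (hy : y ∈ Ioo 0 M)
    (hy' : y ∈ Ioo 0 N) :
    HasDerivAt (fun y => q y ^ 2 / 2 - p y ^ 2 / 2) (m * (q y / s y - p y / r y)) y := by
  have p0 := h.ppos y hy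
  have r0 := h.rpos y hy
  have q0 := k.ppos y hy'
  have s0 := k.rpos y hy'
  refine ((((k.dp y hy').pow 2).div_const 2).sub (((h.dp y hy).pow 2).div_const 2)).congr_deriv ?_
  simp
  field_simp
  ring

lemma Prof.tailA (hm : 1 ≤ m) (hb : 0 < b) (hab : 2 * b < a)
    (h : Prof m a b M r p) (k : Prof m a b N s q) {Y : ℝ} (hY0 : 0 < Y) (hY : Y ≤ al a b)
    (hrs : r Y ≤ s Y) : q Y ≤ p Y := by
  by_contra! hlt
  have m0 : (0:ℝ) < m := by exact_mod_cast hm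
  have iM : ∀ y ∈ Ioc 0 Y, y ∈ Ioo 0 M := fun y hy => ⟨hy.1, (hy.2.trans hY).trans_lt h.alM⟩
  have iN : ∀ y ∈ Ioc 0 Y, y ∈ Ioo 0 N := fun y hy => ⟨hy.1, (hy.2.trans hY).trans_lt k.alM⟩
  have gd := fun y (hy : y ∈ Ioc 0 Y) => h.g_deriv k (iM y hy) (iN y hy)
  have Ld := fun y (hy : y ∈ Ioc 0 Y) => (h.L_deriv (iM y hy)).sub (k.L_deriv (iN y hy))
  set L := (fun y => m * log (r y) + log (p y)) - (fun y => m * log (s y) + log (q y)) with hL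
  have hYY : Y ∈ Ioc 0 Y := ⟨hY0, le_rfl⟩
  have gpos : ∀ y ∈ Ioc 0 Y, 0 < q y ^ 2 / 2 - p y ^ 2 / 2 → p y < q y := by
    intro y hy hg
    have q0 := k.ppos y (iN y hy)
    exact lt_of_pow_lt_pow_left₀ 2 q0.le (by linarith)
  have gposY : 0 < q Y ^ 2 / 2 - p Y ^ 2 / 2 := by
    have := h.ppos Y (iM Y hYY)
    nlinarith
  have LY : L Y < 0 := by
    have p0 := h.ppos Y (iM Y hYY)
    have r0 := h.rpos Y (iM Y hYY)
    have h1 := log_le_log r0 hrs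
    have h2 := log_lt_log p0 hlt
    have : L Y = (m * log (r Y) + log (p Y)) - (m * log (s Y) + log (q Y)) := rfl
    nlinarith
  have Lmono : ∀ x, 0 < x → x ≤ Y → (∀ y ∈ Ioc x Y, 0 < q y ^ 2 / 2 - p y ^ 2 / 2) →
      L x ≤ L Y := by
    intro x x0 xY hx
    have : MonotoneOn L (Icc x Y) := by
      apply monotoneOn_of_deriv_nonneg (convex_Icc _ _)
      · intro t ht; exact (Ld t ⟨x0.trans_le ht.1, ht.2⟩).continuousAt.continuousWithinAt
      · intro t ht; rw [interior_Icc] at ht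
        exact (Ld t ⟨x0.trans ht.1, ht.2.le⟩).differentiableAt.differentiableWithinAt
      · intro t ht; rw [interior_Icc] at ht
        have ht' : t ∈ Ioc 0 Y := ⟨x0.trans ht.1, ht.2.le⟩
        rw [(Ld t ht').deriv]
        have f0 := F_neg hb hab ht'.1 (ht.2.trans_le hY)
        have g0 := hx t ⟨ht.1, ht.2.le⟩
        have p0 := h.ppos t (iM t ht')
        have q0 := k.ppos t (iN t ht')
        have := div_le_div_of_nonneg_left (show 0 ≤ -Fnl a b t by linarith)
          (show 0 < p t ^ 2 by positivity) (show p t ^ 2 ≤ q t ^ 2 by linarith)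
        linarith
    exact this ⟨le_rfl, xY⟩ ⟨xY, le_rfl⟩ xY
  by_cases hex : ∃ x ∈ Ioo 0 Y, q x ^ 2 / 2 - p x ^ 2 / 2 ≤ 0
  · obtain ⟨x, hx, hx0⟩ := hex
    obtain ⟨y, hy, hy0, hyp⟩ := last_zero (g := fun y => q y ^ 2 / 2 - p y ^ 2 / 2) hx.2
      (fun t ht => (gd t ⟨hx.1.trans_le ht.1, ht.2⟩).continuousAt.continuousWithinAt) hx0 gposY
    have hy' : y ∈ Ioc 0 Y := ⟨hx.1.trans_le hy.1, hy.2.le⟩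
    have d0 := deriv_right hy.2 (gd y hy') hy0 (fun t ht => hyp t ⟨ht.1, ht.2.le⟩)
    have p0 := h.ppos y (iM y hy')
    have q0 := k.ppos y (iN y hy')
    have r0 := h.rpos y (iM y hy')
    have s0 := k.rpos y (iN y hy')
    have hpq : p y = q y := by
      have : p y ^ 2 = q y ^ 2 := by linarith
      exact (pow_left_inj₀ p0.le q0.le two_ne_zero).1 this
    have d1 : p y / r y ≤ q y / s y := by
      by_contra! hc
      have : m * (q y / s y - p y / r y) < 0 := mul_neg_of_pos_of_neg m0 (by linarith)
      linarith
    rw [hpq, div_le_div_iff_of_pos_left q0 r0 s0] at d1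
    have h1 := Lmono y hy'.1 hy'.2 hyp
    have h2 := log_le_log s0 d1
    have : L y = (m * log (r y) + log (p y)) - (m * log (s y) + log (q y)) := rfl
    rw [hpq] at this
    nlinarith
  · push Not at hex
    have gp : ∀ y ∈ Ioc 0 Y, 0 < q y ^ 2 / 2 - p y ^ 2 / 2 := by
      intro y hy
      rcases hy.2.lt_or_eq with h | h
      · exact hex y ⟨hy.1, h⟩
      · rw [h]; exact gposY
    set D := s Y - r Y with hD
    have Dm : ∀ y ∈ Ioc 0 Y, s y - r y ≤ D := by
      intro y hy
      have : MonotoneOn (fun y => s y - r y) (Icc y Y) := by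
        have dd := fun t (ht : t ∈ Ioc 0 Y) => (k.dr t (iN t ht)).sub (h.dr t (iM t ht))
        apply monotoneOn_of_deriv_nonneg (convex_Icc _ _)
        · intro t ht; exact (dd t ⟨hy.1.trans_le ht.1, ht.2⟩).continuousAt.continuousWithinAt
        · intro t ht; rw [interior_Icc] at ht
          exact (dd t ⟨hy.1.trans ht.1, ht.2.le⟩).differentiableAt.differentiableWithinAt
        · intro t ht; rw [interior_Icc] at ht
          have ht' : t ∈ Ioc 0 Y := ⟨hy.1.trans ht.1, ht.2.le⟩
          have e := (dd t ht').deriv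
          have p0 := h.ppos t (iM t ht')
          have := one_div_le_one_div_of_le p0 (gpos t ht' (gp t ht')).le
          have e2 : deriv (fun y => s y - r y) t = -(1 / q t) - -(1 / p t) := e
          rw [e2]; linarith
      exact this ⟨le_rfl, hy.2⟩ ⟨hy.2, le_rfl⟩ hy.2
    have lim : Tendsto (fun y => m * log (1 - D * (s y)⁻¹) + log ((p y / y) / (q y / y)))
        (𝓝[>] 0) (𝓝 0) := by
      have sb := sqrt_pos.2 hb
      have h1 : Tendsto (fun y => 1 - D * (s y)⁻¹) (𝓝[>] 0) (𝓝 1) := by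
        simpa using (k.r_bot.inv_tendsto_atTop.const_mul D).const_sub 1
      have h2 : Tendsto (fun y => (p y / y) / (q y / y)) (𝓝[>] 0) (𝓝 1) := by
        have := (h.q_bot hb hab).div (k.q_bot hb hab) sb.ne'
        rw [div_self sb.ne'] at this
        exact this
      simpa using ((h1.log one_ne_zero).const_mul (m:ℝ)).add (h2.log one_ne_zero)
    have : (0:ℝ) ≤ L Y := by
      apply le_of_tendsto lim
      filter_upwards [Ioo_mem_nhdsGT hY0, k.r_bot.eventually_gt_atTop D] with y hy hys
      have hy' : y ∈ Ioc 0 Y := ⟨hy.1, hy.2.le⟩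
      have p0 := h.ppos y (iM y hy')
      have q0 := k.ppos y (iN y hy')
      have r0 := h.rpos y (iM y hy')
      have s0 := k.rpos y (iN y hy')
      have y0 := hy.1
      have h1 := Lmono y hy.1 hy.2.le (fun t ht => gp t ⟨hy.1.trans ht.1, ht.2⟩)
      have h2 := Dm y hy'
      have e1 : (p y / y) / (q y / y) = p y / q y := by field_simp
      have e2 : 1 - D * (s y)⁻¹ = (s y - D) / s y := by field_simp
      rw [e1, e2, log_div p0.ne' q0.ne', log_div (by linarith) s0.ne']
      have h3 := log_le_log (show 0 < s y - D by linarith) (show s y - D ≤ r y by linarith)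
      have : L y = (m * log (r y) + log (p y)) - (m * log (s y) + log (q y)) := rfl
      nlinarith
    linarith

lemma Prof.tailA2 (hm : 1 ≤ m) (hb : 0 < b) (hab : 2 * b < a)
    (h : Prof m a b M r p) (k : Prof m a b N s q)
    (hrs : r (al a b) ≤ s (al a b)) : r (al a b) * p (al a b) ≤ s (al a b) * q (al a b) := by
  obtain ⟨al0, al1, -⟩ := al_mem hb hab
  set Y := al a b with hY
  rcases hrs.eq_or_lt with he | hlt
  · have h1 := h.tailA hm hb hab k al0 le_rfl he.le
    have h2 := k.tailA hm hb hab h al0 le_rfl he.ge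
    rw [he, le_antisymm h1 h2]
  have iM : ∀ y ∈ Ioc 0 Y, y ∈ Ioo 0 M := fun y hy => ⟨hy.1, hy.2.trans_lt h.alM⟩
  have iN : ∀ y ∈ Ioc 0 Y, y ∈ Ioo 0 N := fun y hy => ⟨hy.1, hy.2.trans_lt k.alM⟩
  have dd : ∀ t ∈ Ioc 0 Y, HasDerivAt (fun y => s y - r y) (-(1 / q t) - -(1 / p t)) t :=
    fun t ht => (k.dr t (iN t ht)).sub (h.dr t (iM t ht))
  have Dp : ∀ x ∈ Ioc 0 Y, 0 < s x - r x := by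
    intro x hx
    rcases hx.2.eq_or_lt with he | hxY
    · rw [he]; linarith
    by_contra! hn
    obtain ⟨y, hy, hy0, hyp⟩ := last_zero (g := fun y => s y - r y) hxY
      (fun t ht => (dd t ⟨hx.1.trans_le ht.1, ht.2⟩).continuousAt.continuousWithinAt) hn
      (by linarith)
    have y0 : 0 < y := hx.1.trans_le hy.1
    have : AntitoneOn (fun y => s y - r y) (Icc y Y) := by
      apply antitoneOn_of_deriv_nonpos (convex_Icc _ _)
      · intro t ht; exact (dd t ⟨y0.trans_le ht.1, ht.2⟩).continuousAt.continuousWithinAt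
      · intro t ht; rw [interior_Icc] at ht
        exact (dd t ⟨y0.trans ht.1, ht.2.le⟩).differentiableAt.differentiableWithinAt
      · intro t ht; rw [interior_Icc] at ht
        have ht' : t ∈ Ioc 0 Y := ⟨y0.trans ht.1, ht.2.le⟩
        rw [(dd t ht').deriv]
        have q0 := k.ppos t (iN t ht')
        have := hyp t ⟨ht.1, ht.2.le⟩
        have := one_div_le_one_div_of_le q0 (h.tailA hm hb hab k ht'.1 ht'.2 (by linarith))
        linarith
    have := this ⟨le_rfl, hy.2.le⟩ ⟨hy.2.le, le_rfl⟩ hy.2.le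
    simp only at this hy0
    linarith
  have rd : ∀ t ∈ Ioc 0 Y, HasDerivAt (fun y => s y * q y - r y * p y)
      ((-(1 / q t) * q t + s t * (m / s t - Fnl a b t / q t)) -
       (-(1 / p t) * p t + r t * (m / r t - Fnl a b t / p t))) t :=
    fun t ht => ((k.dr t (iN t ht)).mul (k.dp t (iN t ht))).sub
      ((h.dr t (iM t ht)).mul (h.dp t (iM t ht)))
  have mono : MonotoneOn (fun y => s y * q y - r y * p y) (Ioc 0 Y) := by
    apply monotoneOn_of_deriv_nonneg (convex_Ioc _ _)
    · intro t ht; exact (rd t ht).continuousAt.continuousWithinAt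
    · intro t ht; rw [interior_Ioc] at ht
      exact (rd t ⟨ht.1, ht.2.le⟩).differentiableAt.differentiableWithinAt
    · intro t ht; rw [interior_Ioc] at ht
      have ht' : t ∈ Ioc 0 Y := ⟨ht.1, ht.2.le⟩
      rw [(rd t ht').deriv]
      have p0 := h.ppos t (iM t ht')
      have q0 := k.ppos t (iN t ht')
      have r0 := h.rpos t (iM t ht')
      have s0 := k.rpos t (iN t ht')
      have f0 := F_neg hb hab ht.1 ht.2
      have D0 := Dp t ht'
      have hpq := h.tailA hm hb hab k ht'.1 ht'.2 (by linarith)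
      have e : ((-(1 / q t) * q t + s t * (m / s t - Fnl a b t / q t)) -
       (-(1 / p t) * p t + r t * (m / r t - Fnl a b t / p t))) = (-Fnl a b t) * (s t / q t - r t / p t) := by
        field_simp; ring
      rw [e]
      have : r t / p t ≤ s t / q t := div_le_div₀ s0.le (by linarith) q0 hpq
      exact mul_nonneg (by linarith) (by linarith)
  have lim := (k.rho_bot hb hab).sub (h.rho_bot hb hab)
  simp only [sub_zero] at lim
  have : 0 ≤ s Y * q Y - r Y * p Y := by
    apply le_of_tendsto lim
    filter_upwards [Ioo_mem_nhdsGT al0] with t ht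
    exact mono ⟨ht.1, ht.2.le⟩ ⟨al0, le_rfl⟩ ht.2.le
  linarith

end
end RGS

namespace RGS
open Set Topology

def Af (a b : ℝ) (r p : ℝ → ℝ) (y : ℝ) : ℝ := r y * Fnl a b y / p y
def Bf (r p : ℝ → ℝ) (y : ℝ) : ℝ := r y * p y / y
def Om (m : ℕ) (a b : ℝ) (r p : ℝ → ℝ) (y : ℝ) : ℝ := Af a b r p y + Bf r p y - (m - 1)

section
variable {m : ℕ} {a b M : ℝ} {r p : ℝ → ℝ}

lemma Prof.B_deriv (h : Prof m a b M r p) {y : ℝ} (hy : y ∈ Ioo 0 M) :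
    HasDerivAt (Bf r p) (-(Om m a b r p y / y)) y := by
  have p0 := h.ppos y hy
  have r0 := h.rpos y hy
  have y0 := hy.1
  refine (((h.dr y hy).mul (h.dp y hy)).div (hasDerivAt_id y) y0.ne').congr_deriv ?_
  simp [Om, Af, Bf]
  field_simp
  ring

lemma Prof.A_deriv (hb : 0 < b) (hab : 2 * b < a) (h : Prof m a b M r p) {y : ℝ} (hy : y ∈ Ioo (al a b) M) :
    HasDerivAt (Af a b r p)
      (Af a b r p y / y * (Kf a b y - (m + 1 - Af a b r p y) / Bf r p y)) y := by
  have ha : a ≠ 0 := by linarith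
  obtain ⟨al0, al1, -⟩ := al_mem hb hab
  have hy' : y ∈ Ioo 0 M := ⟨al0.trans hy.1, hy.2⟩
  have p0 := h.ppos y hy'
  have r0 := h.rpos y hy'
  have y0 := hy'.1
  have f0 := F_pos hb hab hy.1 (hy.2.trans h.Mpi)
  refine (((h.dr y hy').mul (hasDerivAt_Fnl (b := b) ha y)).div (h.dp y hy') p0.ne').congr_deriv ?_
  simp [Af, Bf, Kf]
  field_simp
  ring

lemma Prof.B_top (hb : 0 < b) (hab : 2 * b < a) (h : Prof m a b M r p) :
    Tendsto (Bf r p) (𝓝[<] M) (𝓝 0) := by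
  obtain ⟨al0, al1, -⟩ := al_mem hb hab
  have hM := al0.trans h.alM
  have h1 : Tendsto (fun y : ℝ => y) (𝓝[<] M) (𝓝 M) := tendsto_id.mono_left nhdsWithin_le_nhds
  have := (h.r_top.mul h.p_top).div h1 hM.ne'
  rw [mul_zero, zero_div] at this
  exact this

lemma Prof.Om_top (hb : 0 < b) (hab : 2 * b < a) (h : Prof m a b M r p) :
    Tendsto (Om m a b r p) (𝓝[<] M) (𝓝 2) := by
  have := (h.A_top.add (h.B_top hb hab)).sub_const ((m:ℝ) - 1)
  have e : (m:ℝ) + 1 + 0 - (m - 1) = 2 := by ring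
  rw [e] at this
  exact this

def Pz (m : ℕ) (a b : ℝ) (r p : ℝ → ℝ) (y : ℝ) : ℝ :=
  r y ^ m * (r y * p y ^ 2 / 2 + r y * Gnl a b y - (m - 1) / 2 * (y * p y))

lemma Prof.P_deriv (hb : 0 < b) (hab : 2 * b < a) (h : Prof m a b M r p) {y : ℝ} (hy : y ∈ Ioo 0 M) :
    HasDerivAt (Pz m a b r p)
      (-(r y ^ m / p y * ((m + 1) * Gnl a b y - (m - 1) / 2 * (y * Fnl a b y)))) y := by
  have ha : a ≠ 0 := by linarith
  have p0 := h.ppos y hy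
  have r0 := h.rpos y hy
  have h1 : HasDerivAt (fun y => r y ^ m) (-(m * r y ^ m / (r y * p y))) y := by
    refine ((h.dr y hy).pow m).congr_deriv ?_
    rcases m with _ | m
    · simp
    · simp only [Nat.add_sub_cancel]
      field_simp
      ring
  refine (h1.mul (((((h.dr y hy).mul ((h.dp y hy).pow 2)).div_const 2).add
    ((h.dr y hy).mul (hasDerivAt_Gnl (b := b) ha y))).sub
    (((hasDerivAt_id y).mul (h.dp y hy)).const_mul (((m:ℝ) - 1) / 2)))).congr_deriv ?_
  simp
  field_simp
  ring

lemma Prof.P_top (h : Prof m a b M r p) :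
    Tendsto (Pz m a b r p) (𝓝[<] M) (𝓝 0) := by
  have h1 : Tendsto (fun y : ℝ => y) (𝓝[<] M) (𝓝 M) := tendsto_id.mono_left nhdsWithin_le_nhds
  have h2 : Tendsto (Gnl a b) (𝓝[<] M) (𝓝 (Gnl a b M)) :=
    ((cont_Gnl a b).tendsto M).mono_left nhdsWithin_le_nhds
  have := (h.r_top.pow m).mul ((((h.r_top.mul (h.p_top.pow 2)).div_const 2).add (h.r_top.mul h2)).sub
    ((h1.mul h.p_top).const_mul (((m:ℝ)-1)/2)))
  simp only [zero_mul, mul_zero, ne_eq, OfNat.ofNat_ne_zero, not_false_eq_true, zero_pow, zero_div, add_zero, sub_zero] at this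
  exact this

lemma Prof.P_bot (hb : 0 < b) (hab : 2 * b < a) (h : Prof m a b M r p) :
    Tendsto (Pz m a b r p) (𝓝[>] 0) (𝓝 0) := by
  have ha : a ≠ 0 := by linarith
  have h2 : Tendsto (fun y => y⁻¹ * Gnl a b y) (𝓝[>] 0) (𝓝 0) := by
    have := (hasDerivAt_Gnl (b := b) ha 0).tendsto_slope_zero_right
    simpa [Gnl, Fnl] using this
  have h3 := (((((h.rk_bot hb hab (m+1)).mul (h.q_bot hb hab)).mul h.p_bot).div_const 2).add
    ((h.rk_bot hb hab (m+1)).mul h2)).sub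
    (((h.rk_bot hb hab m).mul h.p_bot).const_mul (((m:ℝ)-1)/2))
  simp only [zero_mul, mul_zero, zero_div, add_zero, sub_zero] at h3
  refine h3.congr' ?_
  filter_upwards [self_mem_nhdsWithin] with y hy
  have : y ≠ 0 := ne_of_gt hy
  unfold Pz
  field_simp
  ring

lemma Prof.Om_pos (hm : 1 ≤ m) (hb : 0 < b) (hab : 2 * b < a) (h : Prof m a b M r p) {x : ℝ}
    (hx : x ∈ Ioo (al a b) M) : 0 < Om m a b r p x := by
  by_contra! hn
  obtain ⟨al0, al1, -⟩ := al_mem hb hab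
  have m1 : (1:ℝ) ≤ m := by exact_mod_cast hm
  have iM : ∀ y ∈ Ioo (al a b) M, y ∈ Ioo 0 M := fun y hy => ⟨al0.trans hy.1, hy.2⟩
  have Od : ∀ y ∈ Ioo (al a b) M, HasDerivAt (Om m a b r p)
      (Af a b r p y / y * (Kf a b y - (m + 1 - Af a b r p y) / Bf r p y) + -(Om m a b r p y / y)) y :=
    fun y hy => ((h.A_deriv hb hab hy).add (h.B_deriv (iM y hy))).sub_const ((m:ℝ) - 1)
  obtain ⟨c, hc0, hc⟩ := (((h.Om_top hb hab).eventually_const_lt (show (0:ℝ) < 2 by norm_num)).and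
    (Ioo_mem_nhdsLT hx.2)).exists
  obtain ⟨y, hy, hy0, hyp⟩ := last_zero hc.1 (fun t ht =>
    (Od t ⟨hx.1.trans_le ht.1, ht.2.trans_lt hc.2⟩).continuousAt.continuousWithinAt) hn hc0
  have hyM : y ∈ Ioo (al a b) M := ⟨hx.1.trans_le hy.1, hy.2.trans hc.2⟩
  have d0 := deriv_right hy.2 (Od y hyM) hy0 (fun t ht => hyp t ⟨ht.1, ht.2.le⟩)
  have p0 := h.ppos y (iM y hyM)
  have r0 := h.rpos y (iM y hyM)
  have y0 := (iM y hyM).1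
  have f0 := F_pos hb hab hyM.1 (hyM.2.trans h.Mpi)
  have A0 : 0 < Af a b r p y := by unfold Af; positivity
  have B0 : 0 < Bf r p y := by unfold Bf; positivity
  have K1 : 1 ≤ Kf a b y := by
    rw [hy0] at d0
    have e : (m:ℝ) + 1 - Af a b r p y = 2 + Bf r p y := by unfold Om at hy0; linarith
    rw [e] at d0
    have h1 : 0 ≤ Kf a b y - (2 + Bf r p y) / Bf r p y := by
      by_contra! hc
      have : Af a b r p y / y * (Kf a b y - (2 + Bf r p y) / Bf r p y) < 0 :=
        mul_neg_of_pos_of_neg (by positivity) hc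
      simp at d0
      linarith
    have : 1 ≤ (2 + Bf r p y) / Bf r p y := by
      rw [le_div_iff₀ B0]; linarith
    linarith
  have hP : Pz m a b r p y < 0 := by
    have h1 := yf_gt hb hab hyM.1 (hyM.2.trans h.Mpi) K1
    have h2 : (m:ℝ) - 1 = Af a b r p y + Bf r p y := by unfold Om at hy0; linarith
    have e : Pz m a b r p y = -(r y ^ m * r y / 2 * (y * Fnl a b y - 2 * Gnl a b y)) := by
      unfold Pz
      rw [h2]
      unfold Af Bf
      field_simp
      ring
    rw [e]
    have : 0 < r y ^ m * r y / 2 * (y * Fnl a b y - 2 * Gnl a b y) := by positivity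
    linarith
  obtain ⟨z, hz, hHz⟩ : ∃ z ∈ Ioo y M, (m + 1) * Gnl a b z - (m - 1) / 2 * (z * Fnl a b z) < 0 := by
    by_contra! hc
    have sub : ∀ t ∈ Ioo y M, t ∈ Ioo 0 M := fun t ht => ⟨y0.trans ht.1, ht.2⟩
    have : AntitoneOn (Pz m a b r p) (Ico y M) := by
      apply antitoneOn_of_deriv_nonpos (convex_Ico _ _)
      · intro t ht
        exact (h.P_deriv hb hab ⟨y0.trans_le ht.1, ht.2⟩).continuousAt.continuousWithinAt
      · intro t ht; rw [interior_Ico] at ht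
        exact (h.P_deriv hb hab (sub t ht)).differentiableAt.differentiableWithinAt
      · intro t ht; rw [interior_Ico] at ht
        rw [(h.P_deriv hb hab (sub t ht)).deriv]
        have := h.ppos t (sub t ht)
        have := h.rpos t (sub t ht)
        have := mul_nonneg (show 0 ≤ r t ^ m / p t by positivity) (hc t ht)
        linarith
    have : 0 ≤ Pz m a b r p y := by
      apply le_of_tendsto h.P_top
      filter_upwards [Ioo_mem_nhdsLT hyM.2] with t ht
      exact this ⟨le_rfl, hyM.2⟩ ⟨ht.1.le, ht.2⟩ ht.1.le
    linarith
  have sub : ∀ t ∈ Ioo 0 z, t ∈ Ioo 0 M := fun t ht => ⟨ht.1, ht.2.trans hz.2⟩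
  have := ge_lim (mono_Ioo (fun t ht => h.P_deriv hb hab (sub t ht)) (fun t ht => by
    have H := H_sign hb hab m hm ht.1 ht.2.le (hz.2.trans h.Mpi) (hyM.1.trans hz.1) hHz
    have := h.ppos t (sub t ht)
    have := h.rpos t (sub t ht)
    have := mul_nonneg (show 0 ≤ r t ^ m / p t by positivity) (neg_nonneg.2 H)
    linarith)) (h.P_bot hb hab) ⟨y0, hz.1⟩
  linarith

end
end RGS

namespace RGS
open Set Topology

lemma inv_exists {g g' : ℝ → ℝ} {s : Set ℝ} (hs : IsOpen s) (hc : s.OrdConnected)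
    (hd : ∀ x ∈ s, HasDerivAt g (g' x) x) (hn : ∀ x ∈ s, g' x < 0) :
    StrictAntiOn g s ∧
    ∃ h : ℝ → ℝ, (∀ y ∈ g '' s, h y ∈ s ∧ g (h y) = y ∧ HasDerivAt h (g' (h y))⁻¹ y) := by
  have hanti : StrictAntiOn g s := by
    apply strictAntiOn_of_deriv_neg hc.convex
    · intro t ht; exact (hd t ht).continuousAt.continuousWithinAt
    · intro t ht; rw [hs.interior_eq] at ht; rw [(hd t ht).deriv]; exact hn t ht
  refine ⟨hanti, Function.invFunOn g s, ?_⟩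
  set h := Function.invFunOn g s with hh
  have h1 : ∀ y ∈ g '' s, h y ∈ s := fun y hy => Function.invFunOn_mem hy
  have h2 : ∀ y ∈ g '' s, g (h y) = y := fun y hy => Function.invFunOn_eq hy
  have h3 : ∀ x ∈ s, h (g x) = x := fun x hx =>
    hanti.injOn (h1 _ ⟨x, hx, rfl⟩) hx (h2 _ ⟨x, hx, rfl⟩)
  have him : ∀ x ∈ s, g '' s ∈ 𝓝 (g x) := by
    intro x hx
    obtain ⟨ε, ε0, hε⟩ := Metric.isOpen_iff.1 hs x hx
    have m1 : x - ε/2 ∈ s := hε (by rw [Metric.mem_ball, Real.dist_eq, abs_lt]; constructor <;> linarith)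
    have m2 : x + ε/2 ∈ s := hε (by rw [Metric.mem_ball, Real.dist_eq, abs_lt]; constructor <;> linarith)
    have hsub : Icc (x - ε/2) (x + ε/2) ⊆ s := hc.out m1 m2
    have hiv := intermediate_value_Icc' (f := g) (show x - ε/2 ≤ x + ε/2 by linarith)
      (fun t ht => (hd t (hsub ht)).continuousAt.continuousWithinAt)
    have l1 : g (x + ε/2) < g x := hanti hx m2 (by linarith)
    have l2 : g x < g (x - ε/2) := hanti m1 hx (by linarith)
    exact mem_of_superset (Icc_mem_nhds l1 l2) (hiv.trans (image_mono hsub))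
  have hanti2 : StrictAntiOn h (g '' s) := by
    rintro _ ⟨x, hx, rfl⟩ _ ⟨z, hz, rfl⟩ hxz
    rw [h3 x hx, h3 z hz]
    by_contra! hc
    exact absurd (hanti.antitoneOn hx hz hc) (not_le.2 hxz)
  intro y hy
  refine ⟨h1 y hy, h2 y hy, ?_⟩
  have hcont : ContinuousAt h y := by
    have hm : StrictMonoOn (fun t => -h t) (g '' s) := fun x hx z hz hxz => neg_lt_neg (hanti2 hx hz hxz)
    have hy' : g '' s ∈ 𝓝 y := by
      obtain ⟨x, hx, rfl⟩ := hy; exact him x hx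
    have e : (fun t => -h t) '' (g '' s) = Neg.neg ⁻¹' s := by
      ext t
      constructor
      · rintro ⟨z, hz, rfl⟩
        simpa using h1 z hz
      · intro ht
        exact ⟨g (-t), ⟨-t, ht, rfl⟩, by simp only; rw [h3 _ ht]; ring⟩
    have : ContinuousAt (fun t => -h t) y := by
      apply hm.continuousAt_of_image_mem_nhds hy'
      rw [e]
      exact (hs.preimage continuous_neg).mem_nhds (by simpa using h1 y hy)
    have h5 : h = fun t => -(-h t) := by funext t; ring
    rw [h5]
    exact this.neg
  have hy' : g '' s ∈ 𝓝 y := by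
    obtain ⟨x, hx, rfl⟩ := hy; exact him x hx
  exact (hd (h y) (h1 y hy)).of_local_left_inverse hcont (hn _ (h1 y hy)).ne
    (by filter_upwards [hy'] with z hz using h2 z hz)

lemma Delta_pos {n e c : ℝ} {a1 a2 K1 K2 : ℝ → ℝ} (hn : 0 < n) (hen : e = 2 - n)
    (p1 : ∀ t ∈ Ioo 0 c, 0 < a1 t) (p2 : ∀ t ∈ Ioo 0 c, 0 < a2 t)
    (o1 : ∀ t ∈ Ioo 0 c, 0 < a1 t + t + e) (o2 : ∀ t ∈ Ioo 0 c, 0 < a2 t + t + e)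
    (hK : ∀ t ∈ Ioo 0 c, K1 t < K2 t)
    (d1 : ∀ t ∈ Ioo 0 c, HasDerivAt a1 (a1 t * ((n - a1 t) / t - K1 t) / (a1 t + t + e)) t)
    (d2 : ∀ t ∈ Ioo 0 c, HasDerivAt a2 (a2 t * ((n - a2 t) / t - K2 t) / (a2 t + t + e)) t)
    (l1 : Tendsto a1 (𝓝[>] 0) (𝓝 n)) (l2 : Tendsto a2 (𝓝[>] 0) (𝓝 n))
    {k : ℝ} (lK : Tendsto K1 (𝓝[>] 0) (𝓝 k)) : ∀ t ∈ Ioo 0 c, a2 t < a1 t := by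
  have dd := fun t ht => (d1 t ht).sub (d2 t ht)
  have ee : ∀ t ∈ Ioo 0 c, a1 t * ((n - a1 t) / t - K1 t) / (a1 t + t + e)
      - a2 t * ((n - a2 t) / t - K2 t) / (a2 t + t + e) =
      ((a2 t - a1 t) * (a2 t * (a1 t + t + e) - (t + e) * (n - a1 t - t * K1 t))
        + a2 t * (a1 t + t + e) * t * (K2 t - K1 t)) / (t * (a1 t + t + e) * (a2 t + t + e)) := by
    intro t ht
    have t0 := ht.1
    have h1 := (o1 t ht).ne'
    have h2 := (o2 t ht).ne'
    field_simp
    ring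
  have pos : ∀ t ∈ Ioo 0 c, a1 t ≤ a2 t →
      (a1 t = a2 t ∨ 0 < a2 t * (a1 t + t + e) - (t + e) * (n - a1 t - t * K1 t)) →
      0 < a1 t * ((n - a1 t) / t - K1 t) / (a1 t + t + e)
      - a2 t * ((n - a2 t) / t - K2 t) / (a2 t + t + e) := by
    intro t ht hle hor
    rw [ee t ht]
    have t0 := ht.1
    have h1 := o1 t ht
    have h2 := o2 t ht
    have h3 := p2 t ht
    have h4 : 0 < K2 t - K1 t := by linarith [hK t ht]
    have h5 : 0 ≤ (a2 t - a1 t) * (a2 t * (a1 t + t + e) - (t + e) * (n - a1 t - t * K1 t)) := by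
      rcases hor with h | h
      · rw [h]; simp
      · exact mul_nonneg (by linarith) h.le
    have h6 : 0 < a2 t * (a1 t + t + e) * t * (K2 t - K1 t) := by positivity
    positivity
  have lbr : Tendsto (fun t => a2 t * (a1 t + t + e) - (t + e) * (n - a1 t - t * K1 t)) (𝓝[>] 0)
      (𝓝 (n * (n + 0 + e) - (0 + e) * (n - n - 0 * k))) := by
    have ht : Tendsto (fun t : ℝ => t) (𝓝[>] 0) (𝓝 0) := tendsto_id.mono_left nhdsWithin_le_nhds
    exact (l2.mul ((l1.add ht).add_const e)).sub ((ht.add_const e).mul ((l1.const_sub n).sub (ht.mul lK)))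
  have lbr' := lbr.eventually_const_lt (show (0:ℝ) < _ by rw [hen]; ring_nf; linarith)
  obtain ⟨δ, δ0, hδ⟩ := (mem_nhdsGT_iff_exists_Ioo_subset).1 lbr'
  have δ0' : (0:ℝ) < δ := δ0
  intro x hx
  by_contra! hle
  have allneg : ∀ z ∈ Ioc 0 x, a1 z ≤ a2 z := by
    intro z hz
    rcases hz.2.eq_or_lt with h | h
    · rw [h]; exact hle
    by_contra! hlt
    obtain ⟨y, hy, hy0, hyp⟩ := first_zero (g := a1 - a2) h (fun t ht =>
      (dd t ⟨hz.1.trans_le ht.1, ht.2.trans_lt hx.2⟩).continuousAt.continuousWithinAt)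
      (by simp [hle]) (by simp [hlt])
    have hyc : y ∈ Ioo 0 c := ⟨hz.1.trans hy.1, hy.2.trans_lt hx.2⟩
    have h1 := deriv_left hy.1 (dd y hyc) hy0 (fun t ht => hyp t ⟨ht.1.le, ht.2⟩)
    have h2 : a1 y = a2 y := by simp only [Pi.sub_apply] at hy0; linarith
    linarith [pos y hyc h2.le (Or.inl h2)]
  set w := min x δ with hw
  have w0 : 0 < w := lt_min hx.1 δ0'
  have wsub : ∀ t ∈ Ioo 0 w, t ∈ Ioo 0 c := fun t ht =>
    ⟨ht.1, (ht.2.trans_le (min_le_left _ _)).trans hx.2⟩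
  have sm : StrictMonoOn (a1 - a2) (Ioo 0 w) := by
    apply smono_Ioo (fun t ht => dd t (wsub t ht))
    intro t ht
    exact pos t (wsub t ht) (allneg t ⟨ht.1, (ht.2.trans_le (min_le_left _ _)).le⟩)
      (Or.inr (hδ ⟨ht.1, ht.2.trans_le (min_le_right _ _)⟩))
  have ll : Tendsto (a1 - a2) (𝓝[>] 0) (𝓝 0) := by
    have := l1.sub l2
    rw [sub_self] at this
    exact this
  have q1 : w / 4 ∈ Ioo 0 w := ⟨by linarith, by linarith⟩
  have q2 : w / 2 ∈ Ioo 0 w := ⟨by linarith, by linarith⟩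
  have h1 := ge_lim sm.monotoneOn ll q1
  have h2 := sm q1 q2 (by linarith)
  have h3 := allneg (w/2) ⟨by linarith, by linarith [min_le_left x δ]⟩
  simp only [Pi.sub_apply] at h1 h2
  linarith

section
variable {m : ℕ} {a b M N : ℝ} {r p s q : ℝ → ℝ}

lemma Prof.B_inv (hm : 1 ≤ m) (hb : 0 < b) (hab : 2 * b < a) (h : Prof m a b M r p) {x : ℝ}
    (hx : x ∈ Ico (al a b) M) : StrictAntiOn (Bf r p) (Ico x M) ∧ ∃ Y : ℝ → ℝ,
    (∀ β ∈ Ioo 0 (Bf r p x), Y β ∈ Ioo x M ∧ Bf r p (Y β) = β ∧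
      HasDerivAt Y (-(Y β / Om m a b r p (Y β))) β) ∧
    Tendsto Y (𝓝[>] 0) (𝓝[<] M) ∧ Tendsto Y (𝓝[<] (Bf r p x)) (𝓝 x) := by
  obtain ⟨al0, al1, -⟩ := al_mem hb hab
  have x0 := al0.trans_le hx.1
  have sub : ∀ t ∈ Ico x M, t ∈ Ioo 0 M := fun t ht => ⟨x0.trans_le ht.1, ht.2⟩
  have sub1 : ∀ t ∈ Ioo x M, t ∈ Ioo (al a b) M := fun t ht => ⟨hx.1.trans_lt ht.1, ht.2⟩
  have sub2 : ∀ t ∈ Ioo x M, t ∈ Ico x M := fun t ht => ⟨ht.1.le, ht.2⟩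
  have hneg : ∀ t ∈ Ioo x M, -(Om m a b r p t / t) < 0 := fun t ht => by
    have := h.Om_pos hm hb hab (sub1 t ht)
    have := (sub t (sub2 t ht)).1
    have : 0 < Om m a b r p t / t := by positivity
    linarith
  have hA : StrictAntiOn (Bf r p) (Ico x M) := by
    apply strictAntiOn_of_deriv_neg (convex_Ico _ _)
    · intro t ht; exact (h.B_deriv (sub t ht)).continuousAt.continuousWithinAt
    · intro t ht; rw [interior_Ico] at ht
      rw [(h.B_deriv (sub t (sub2 t ht))).deriv]; exact hneg t ht
  obtain ⟨-, Y, hY⟩ := inv_exists (s := Ioo x M) isOpen_Ioo ordConnected_Ioo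
    (fun t ht => h.B_deriv (sub t (sub2 t ht))) hneg
  have hxx : x ∈ Ico x M := ⟨le_rfl, hx.2⟩
  have Bpos : ∀ t ∈ Ioo x M, 0 < Bf r p t := fun t ht => by
    have := h.ppos t (sub t (sub2 t ht))
    have := h.rpos t (sub t (sub2 t ht))
    have := (sub t (sub2 t ht)).1
    unfold Bf; positivity
  have hsurj : ∀ β ∈ Ioo 0 (Bf r p x), β ∈ Bf r p '' Ioo x M := by
    intro β hβ
    obtain ⟨c, hc, hcM⟩ := (((h.B_top hb hab).eventually_lt_const hβ.1).and (Ioo_mem_nhdsLT hx.2)).exists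
    have := intermediate_value_Ioo' hcM.1.le (f := Bf r p)
      (fun t ht => (h.B_deriv (sub t ⟨ht.1, ht.2.trans_lt hcM.2⟩)).continuousAt.continuousWithinAt)
    exact image_mono (Ioo_subset_Ioo le_rfl hcM.2.le) (this ⟨hc, hβ.2⟩)
  have hY' : ∀ β ∈ Ioo 0 (Bf r p x), Y β ∈ Ioo x M ∧ Bf r p (Y β) = β ∧
      HasDerivAt Y (-(Y β / Om m a b r p (Y β))) β := by
    intro β hβ
    obtain ⟨h1, h2, h3⟩ := hY β (hsurj β hβ)
    refine ⟨h1, h2, h3.congr_deriv ?_⟩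
    rw [← inv_neg.symm, inv_div]
  have Bx0 : 0 < Bf r p x := by
    have h1 : (x + M)/2 ∈ Ioo x M := ⟨by linarith [hx.2], by linarith [hx.2]⟩
    exact (Bpos _ h1).trans (hA hxx (sub2 _ h1) h1.1)
  refine ⟨hA, Y, hY', ?_, ?_⟩
  · apply tendsto_nhdsWithin_of_tendsto_nhds_of_eventually_within
    · rw [tendsto_order]
      constructor
      · intro z hz
        set z' := max z ((x+M)/2) with hz'
        have hzM : z' ∈ Ioo x M := ⟨lt_max_of_lt_right (by linarith [hx.2]), max_lt hz (by linarith [hx.2])⟩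
        filter_upwards [Ioo_mem_nhdsGT (Bpos z' hzM)] with β hβ
        have hβ' : β ∈ Ioo 0 (Bf r p x) := ⟨hβ.1, hβ.2.trans (hA hxx (sub2 _ hzM) hzM.1)⟩
        obtain ⟨h1, h2, -⟩ := hY' β hβ'
        have : z' < Y β := by
          by_contra! hc
          have := hA.antitoneOn (sub2 _ h1) (sub2 _ hzM) hc
          rw [h2] at this
          linarith [hβ.2]
        exact (le_max_left _ _).trans_lt this
      · intro z hz
        filter_upwards [Ioo_mem_nhdsGT Bx0] with β hβ
        exact (hY' β hβ).1.2.trans hz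
    · filter_upwards [Ioo_mem_nhdsGT Bx0] with β hβ
      exact (hY' β hβ).1.2
  · rw [tendsto_order]
    constructor
    · intro z hz
      filter_upwards [Ioo_mem_nhdsLT Bx0] with β hβ
      exact hz.trans (hY' β hβ).1.1
    · intro z hz
      set z' := min z ((x+M)/2) with hz'
      have hzM : z' ∈ Ioo x M := ⟨lt_min hz (by linarith [hx.2]), min_lt_of_right_lt (by linarith [hx.2])⟩
      filter_upwards [Ioo_mem_nhdsLT (hA hxx (sub2 _ hzM) hzM.1)] with β hβ
      have hβ' : β ∈ Ioo 0 (Bf r p x) := ⟨(Bpos z' hzM).trans hβ.1, hβ.2⟩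
      obtain ⟨h1, h2, -⟩ := hY' β hβ'
      have : Y β < z' := by
        by_contra! hc
        have := hA.antitoneOn (sub2 _ hzM) (sub2 _ h1) hc
        rw [h2] at this
        linarith [hβ.1]
      exact this.trans_le (min_le_left _ _)

lemma Prof.top_cmp (hm : 1 ≤ m) (hb : 0 < b) (hab : 2 * b < a) (h : Prof m a b M r p)
    (k : Prof m a b N s q) (hNM : N < M) {x : ℝ} (hx : x ∈ Ico (al a b) N) :
    Bf s q x < Bf r p x := by
  obtain ⟨al0, al1, -⟩ := al_mem hb hab
  by_contra! hle
  have dd : ∀ t ∈ Ioo 0 N, ContinuousAt (fun t => Bf r p t - Bf s q t) t := fun t ht =>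
    (h.B_deriv ⟨ht.1, ht.2.trans hNM⟩).continuousAt.sub (k.B_deriv ht).continuousAt
  have hN0 : N ∈ Ioo 0 M := ⟨al0.trans k.alM, hNM⟩
  have BN : 0 < Bf r p N := by
    have := h.ppos N hN0
    have := h.rpos N hN0
    have := hN0.1
    unfold Bf; positivity
  have lim : Tendsto (fun t => Bf r p t - Bf s q t) (𝓝[<] N) (𝓝 (Bf r p N)) := by
    have h1 : Tendsto (Bf r p) (𝓝[<] N) (𝓝 (Bf r p N)) :=
      (h.B_deriv hN0).continuousAt.tendsto.mono_left nhdsWithin_le_nhds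
    simpa using h1.sub (k.B_top hb hab)
  obtain ⟨l, hl, hlN⟩ := (mem_nhdsLT_iff_exists_Ioo_subset).1 (lim.eventually_const_lt BN)
  have hl' : l < N := hl
  set c := (max l x + N) / 2 with hc
  have hmx : max l x < N := max_lt hl' hx.2
  have hc1 : c ∈ Ioo l N := ⟨by linarith [le_max_left l x], by linarith⟩
  have hxc : x < c := by linarith [le_max_right l x]
  have x0 : 0 < x := al0.trans_le hx.1
  obtain ⟨y, hy, hy0, hyp⟩ := last_zero (g := fun t => Bf r p t - Bf s q t) hxc
    (fun t ht => (dd t ⟨x0.trans_le ht.1, ht.2.trans_lt hc1.2⟩).continuousWithinAt)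
    (by linarith) (hlN hc1)
  have hlt : ∀ t ∈ Ioo y N, Bf s q t < Bf r p t := by
    intro t ht
    rcases le_or_gt t c with hh | hh
    · have := hyp t ⟨ht.1, hh⟩
      linarith
    · have : 0 < Bf r p t - Bf s q t := hlN ⟨hc1.1.trans hh, ht.2⟩
      linarith
  have hyN : y ∈ Ico (al a b) N := ⟨hx.1.trans hy.1, hy.2.trans hc1.2⟩
  have hyM : y ∈ Ico (al a b) M := ⟨hyN.1, hyN.2.trans hNM⟩
  obtain ⟨hA, Y, hY, Y0, Y1⟩ := h.B_inv hm hb hab hyM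
  obtain ⟨kA, Z, hZ, Z0, Z1⟩ := k.B_inv hm hb hab hyN
  have hB : Bf s q y = Bf r p y := by linarith
  rw [hB] at hZ Z1
  set C := Bf r p y with hC
  have y0 : 0 < y := al0.trans_le hyN.1
  have hYa : ∀ t ∈ Ioo 0 C, Y t ∈ Ioo (al a b) M := fun t ht =>
    ⟨hyN.1.trans_lt (hY t ht).1.1, (hY t ht).1.2⟩
  have hZa : ∀ t ∈ Ioo 0 C, Z t ∈ Ioo (al a b) N := fun t ht =>
    ⟨hyN.1.trans_lt (hZ t ht).1.1, (hZ t ht).1.2⟩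
  have hZY : ∀ t ∈ Ioo 0 C, Z t < Y t := by
    intro t ht
    obtain ⟨h1, h2, -⟩ := hY t ht
    obtain ⟨h3, h4, -⟩ := hZ t ht
    by_contra! hcon
    have hm1 : Y t ∈ Ioo y N := ⟨h1.1, hcon.trans_lt h3.2⟩
    have := hlt _ hm1
    have := kA.antitoneOn ⟨hm1.1.le, hm1.2⟩ ⟨h3.1.le, h3.2⟩ hcon
    linarith
  have Apos : ∀ {M : ℝ} {r p : ℝ → ℝ}, Prof m a b M r p → ∀ t ∈ Ioo (al a b) M, 0 < Af a b r p t := by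
    intro M r p h t ht
    have ht' : t ∈ Ioo 0 M := ⟨al0.trans ht.1, ht.2⟩
    have := h.ppos t ht'
    have := h.rpos t ht'
    have := F_pos hb hab ht.1 (ht.2.trans h.Mpi)
    unfold Af; positivity
  have key : ∀ {M : ℝ} {r p Y : ℝ → ℝ}, Prof m a b M r p → (∀ t ∈ Ioo 0 C, Y t ∈ Ioo (al a b) M) →
      (∀ β ∈ Ioo 0 C, Bf r p (Y β) = β ∧ HasDerivAt Y (-(Y β / Om m a b r p (Y β))) β) →
      ∀ t ∈ Ioo 0 C, 0 < Af a b r p (Y t) + t + (2 - (m + 1)) ∧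
      HasDerivAt (fun t => Af a b r p (Y t)) (Af a b r p (Y t) *
        (((m + 1) - Af a b r p (Y t)) / t - Kf a b (Y t)) / (Af a b r p (Y t) + t + (2 - (m + 1)))) t := by
    intro M r p Y h hYa hY t ht
    obtain ⟨h1, h2⟩ := hY t ht
    have O := h.Om_pos hm hb hab (hYa t ht)
    have eO : Om m a b r p (Y t) = Af a b r p (Y t) + t + (2 - (m + 1)) := by
      unfold Om; rw [h1]; ring
    rw [eO] at h2 O
    refine ⟨O, ?_⟩
    refine ((h.A_deriv hb hab (hYa t ht)).comp t h2).congr_deriv ?_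
    rw [h1]
    have := al0.trans (hYa t ht).1
    have := O.ne'
    have := ht.1
    field_simp
    ring
  have kY := key h hYa (fun β hβ => (hY β hβ).2)
  have kZ := key k hZa (fun β hβ => (hZ β hβ).2)
  have KM : Tendsto (Kf a b) (𝓝 M) (𝓝 (Kf a b M)) := by
    have ha : a ≠ 0 := by linarith
    have hF := F_pos hb hab h.alM h.Mpi
    have : ContinuousAt (Kf a b) M := by
      unfold Kf
      apply ContinuousAt.div _ (cont_Fnl a b).continuousAt hF.ne'
      unfold fp
      fun_prop
    exact this
  have hD := Delta_pos (n := m + 1) (c := C) (by positivity) rfl (fun t ht => Apos h _ (hYa t ht))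
    (fun t ht => Apos k _ (hZa t ht)) (fun t ht => (kY t ht).1) (fun t ht => (kZ t ht).1)
    (fun t ht => Kf_anti hb hab (hZa t ht).1 (hZY t ht) ((hYa t ht).2.trans h.Mpi))
    (fun t ht => (kY t ht).2) (fun t ht => (kZ t ht).2)
    (h.A_top.comp Y0) (k.A_top.comp Z0) (KM.comp (Y0.mono_right nhdsWithin_le_nhds))
  have C0 : 0 < C := by
    have hy' : y ∈ Ioo 0 M := ⟨y0, hyM.2⟩
    have := h.ppos y hy'
    have := h.rpos y hy'
    rw [hC]; unfold Bf; positivity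
  have md : ∀ t ∈ Ioo 0 C, HasDerivAt (fun t => log (Y t) - log (Z t))
      (-(Y t / Om m a b r p (Y t)) / Y t - -(Z t / Om m a b s q (Z t)) / Z t) t := fun t ht =>
    ((hY t ht).2.2.log (al0.trans (hYa t ht).1).ne').sub ((hZ t ht).2.2.log (al0.trans (hZa t ht).1).ne')
  have mono : MonotoneOn (fun t => log (Y t) - log (Z t)) (Ioo 0 C) := by
    apply mono_Ioo md
    intro t ht
    have Oy := h.Om_pos hm hb hab (hYa t ht)
    have Oz := k.Om_pos hm hb hab (hZa t ht)
    have Yp := al0.trans (hYa t ht).1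
    have Zp := al0.trans (hZa t ht).1
    have hlt : Om m a b s q (Z t) ≤ Om m a b r p (Y t) := by
      have := hD t ht
      unfold Om
      rw [(hY t ht).2.1, (hZ t ht).2.1]; linarith
    have e : (-(Y t / Om m a b r p (Y t)) / Y t - -(Z t / Om m a b s q (Z t)) / Z t)
      = 1 / Om m a b s q (Z t) - 1 / Om m a b r p (Y t) := by
      field_simp; ring
    rw [e]
    have := one_div_le_one_div_of_le Oz hlt
    linarith
  have lim2 : Tendsto (fun t => log (Y t) - log (Z t)) (𝓝[<] C) (𝓝 0) := by
    simpa using (Y1.log y0.ne').sub (Z1.log y0.ne')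
  have hC2 : C / 2 ∈ Ioo 0 C := ⟨by linarith, by linarith⟩
  have : log (Y (C/2)) - log (Z (C/2)) ≤ 0 := by
    apply ge_of_tendsto lim2
    filter_upwards [Ioo_mem_nhdsLT hC2.2] with t ht
    exact mono hC2 ⟨hC2.1.trans ht.1, ht.2⟩ ht.1.le
  have := log_lt_log (al0.trans (hZa _ hC2).1) (hZY _ hC2)
  linarith

end
end RGS

namespace RGS
open Set Topology

lemma Prof.not_lt {m : ℕ} {a b M N : ℝ} {r p s q : ℝ → ℝ}
    (hm : 1 ≤ m) (hb : 0 < b) (hab : 2 * b < a) (h : Prof m a b M r p)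
    (k : Prof m a b N s q) : ¬ N < M := by
  intro hNM
  obtain ⟨al0, al1, -⟩ := al_mem hb hab
  have m0 : (0:ℝ) < m := by exact_mod_cast hm
  have alN := k.alM
  have iN : ∀ t ∈ Ico (al a b) N, t ∈ Ioo 0 N := fun t ht => ⟨al0.trans_le ht.1, ht.2⟩
  have iM : ∀ t ∈ Ico (al a b) N, t ∈ Ioo 0 M := fun t ht => ⟨al0.trans_le ht.1, ht.2.trans hNM⟩
  have hB : ∀ t ∈ Ico (al a b) N, s t * q t < r t * p t := by
    intro t ht
    have := h.top_cmp hm hb hab k hNM ht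
    unfold Bf at this
    exact (div_lt_div_iff_of_pos_right (iN t ht).1).1 this
  have hal : al a b ∈ Ico (al a b) N := ⟨le_rfl, alN⟩
  have C0 : s (al a b) < r (al a b) := by
    by_contra! hc
    exact absurd (h.tailA2 hm hb hab k hc) (not_le.2 (hB _ hal))
  have Cpos : ∀ x ∈ Ico (al a b) N, s x < r x := by
    intro x hx
    rcases hx.1.eq_or_lt with he | hlt
    · rw [← he]; exact C0
    by_contra! hc
    have dd : ∀ t ∈ Ico (al a b) N, HasDerivAt (fun t => r t - s t) (-(1 / p t) - -(1 / q t)) t :=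
      fun t ht => (h.dr t (iM t ht)).sub (k.dr t (iN t ht))
    obtain ⟨y, hy, hy0, hyp⟩ := first_zero (g := fun t => r t - s t) hlt
      (fun t ht => (dd t ⟨ht.1, ht.2.trans_lt hx.2⟩).continuousAt.continuousWithinAt)
      (by linarith) (by linarith)
    have hy' : y ∈ Ico (al a b) N := ⟨hy.1.le, hy.2.trans_lt hx.2⟩
    have h1 := deriv_left hy.1 (dd y hy') hy0 (fun t ht => hyp t ⟨ht.1.le, ht.2⟩)
    have hrs : r y = s y := by linarith
    have h2 := hB y hy'
    rw [hrs] at h2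
    have h3 := lt_of_mul_lt_mul_left h2 (k.rpos y (iN y hy')).le
    have := one_div_lt_one_div_of_lt (k.ppos y (iN y hy')) h3
    linarith
  have hNM' : N ∈ Ioo 0 M := ⟨al0.trans alN, hNM⟩
  have pN := h.ppos N hNM'
  have hpq : q (al a b) < p (al a b) := by
    have gg : 0 < p (al a b) ^ 2 / 2 - q (al a b) ^ 2 / 2 := by
      by_contra! hc
      have lim : Tendsto (fun t => p t ^ 2 / 2 - q t ^ 2 / 2) (𝓝[<] N) (𝓝 (p N ^ 2 / 2)) := by
        have h1 : Tendsto p (𝓝[<] N) (𝓝 (p N)) :=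
          (h.dp N hNM').continuousAt.tendsto.mono_left nhdsWithin_le_nhds
        simpa using ((h1.pow 2).div_const 2).sub ((k.p_top.pow 2).div_const 2)
      obtain ⟨c, hc0, hcN⟩ := ((lim.eventually_const_lt (show 0 < p N ^ 2 / 2 by positivity)).and
        (Ioo_mem_nhdsLT alN)).exists
      have dd := fun t (ht : t ∈ Ico (al a b) N) => k.g_deriv h (iN t ht) (iM t ht)
      obtain ⟨y, hy, hy0, hyp⟩ := last_zero (g := fun t => p t ^ 2 / 2 - q t ^ 2 / 2) hcN.1
        (fun t ht => (dd t ⟨ht.1, ht.2.trans_lt hcN.2⟩).continuousAt.continuousWithinAt) hc hc0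
      have hy' : y ∈ Ico (al a b) N := ⟨hy.1, hy.2.trans hcN.2⟩
      have h1 := deriv_right hy.2 (dd y hy') hy0 (fun t ht => hyp t ⟨ht.1, ht.2.le⟩)
      have p0 := h.ppos y (iM y hy')
      have q0 := k.ppos y (iN y hy')
      have s0 := k.rpos y (iN y hy')
      have e : p y = q y := by
        have : p y ^ 2 = q y ^ 2 := by linarith
        exact (pow_left_inj₀ p0.le q0.le two_ne_zero).1 this
      rw [e] at h1
      have h2 := div_lt_div_of_pos_left q0 s0 (Cpos y hy')
      have : m * (q y / r y - q y / s y) < 0 := mul_neg_of_pos_of_neg m0 (by linarith)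
      linarith
    exact lt_of_pow_lt_pow_left₀ 2 (h.ppos _ (iM _ hal)).le (by linarith)
  have := k.tailA hm hb hab h al0 le_rfl C0.le
  linarith

lemma fp_bound {a b : ℝ} (hb : 0 < b) (hab : 2 * b < a) (x : ℝ) : |fp a b x| ≤ 4 * a := by
  have h1 := sin_sq_add_cos_sq x
  have h2 : 0 ≤ sin x ^ 2 := sq_nonneg _
  have h3 : 0 ≤ cos x ^ 2 := sq_nonneg _
  have ha : 0 < a := by linarith
  have e : fp a b x = 3 * (a * (sin x ^ 2 * cos x ^ 2)) - a * (sin x ^ 2 * sin x ^ 2)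
      - b * cos x ^ 2 + b * sin x ^ 2 := by unfold fp; ring
  have s1 : sin x ^ 2 ≤ 1 := by linarith
  have c1 : cos x ^ 2 ≤ 1 := by linarith
  have k1 : a * (sin x ^ 2 * cos x ^ 2) ≤ a * 1 :=
    mul_le_mul_of_nonneg_left (mul_le_one₀ s1 h3 c1) ha.le
  have k2 : a * (sin x ^ 2 * sin x ^ 2) ≤ a * 1 :=
    mul_le_mul_of_nonneg_left (mul_le_one₀ s1 h2 s1) ha.le
  have k3 : b * sin x ^ 2 ≤ b * 1 := mul_le_mul_of_nonneg_left s1 hb.le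
  have k4 : b * cos x ^ 2 ≤ b * 1 := mul_le_mul_of_nonneg_left c1 hb.le
  have j1 : 0 ≤ a * (sin x ^ 2 * cos x ^ 2) := by positivity
  have j2 : 0 ≤ a * (sin x ^ 2 * sin x ^ 2) := by positivity
  have j3 : 0 ≤ b * sin x ^ 2 := by positivity
  have j4 : 0 ≤ b * cos x ^ 2 := by positivity
  rw [e, abs_le]
  constructor <;> linarith

lemma F_lip {a b : ℝ} (hb : 0 < b) (hab : 2 * b < a) (x y : ℝ) :
    |Fnl a b x - Fnl a b y| ≤ 4 * a * |x - y| := by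
  have ha : a ≠ 0 := by linarith
  have := convex_univ.norm_image_sub_le_of_norm_hasDerivWithin_le (f := Fnl a b) (f' := fp a b)
    (C := 4 * a) (fun z _ => (hasDerivAt_Fnl ha z).hasDerivWithinAt) (fun z _ => fp_bound hb hab z)
    (mem_univ y) (mem_univ x)
  simpa using this

lemma sol_d {m : ℕ} {a b : ℝ} {u : ℝ → ℝ} (hu : IsRadialSol (m+1) a b u) :
    (∀ x, HasDerivAt u (deriv u x) x) ∧ (∀ x, HasDerivAt (deriv u) (deriv (deriv u) x) x) ∧
    Continuous (deriv (deriv u)) ∧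
    (∀ r, 0 < r → deriv (deriv u) r = -(m / r) * deriv u r - Fnl a b (u r)) := by
  obtain ⟨h1, h2, h3⟩ := hu
  have c1 : ContDiff ℝ 1 (deriv u) := by
    have : ContDiff ℝ (1 + 1) u := by simpa [one_add_one_eq_two] using h1
    exact (contDiff_succ_iff_deriv.1 this).2.2
  refine ⟨fun x => (h1.differentiable (by norm_num) x).hasDerivAt,
    fun x => (c1.differentiable (by norm_num) x).hasDerivAt, ?_, ?_⟩
  · exact c1.continuous_deriv (by norm_num)
  · intro r hr
    have := h3 r hr
    push_cast at this
    have e : ((m:ℝ) + 1 - 1) = m := by ring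
    rw [e] at this
    linarith

lemma ivp {m : ℕ} {a b : ℝ} (hb : 0 < b) (hab : 2 * b < a) {u v : ℝ → ℝ}
    (hu : IsRadialSol (m+1) a b u) (hv : IsRadialSol (m+1) a b v) (h0 : u 0 = v 0) :
    EqOn u v (Ici 0) := by
  obtain ⟨u1, u2, -, u3⟩ := sol_d hu
  obtain ⟨v1, v2, -, v3⟩ := sol_d hv
  set L := 4 * a + 1 with hL
  have hd : ∀ x, HasDerivAt (fun x => ((u x - v x) ^ 2 + (deriv u x - deriv v x) ^ 2) * exp (-(L * x)))
      ((2 * (u x - v x) * (deriv u x - deriv v x) +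
        2 * (deriv u x - deriv v x) * (deriv (deriv u) x - deriv (deriv v) x)) * exp (-(L * x)) +
        ((u x - v x) ^ 2 + (deriv u x - deriv v x) ^ 2) * (exp (-(L * x)) * (-(L * 1)))) x := by
    intro x
    refine (((((u1 x).sub (v1 x)).pow 2).add (((u2 x).sub (v2 x)).pow 2)).mul
      (((hasDerivAt_id x).const_mul L).neg.exp)).congr_deriv ?_
    simp
  have anti : AntitoneOn (fun x => ((u x - v x) ^ 2 + (deriv u x - deriv v x) ^ 2) * exp (-(L * x))) (Ici 0) := by
    apply antitoneOn_of_deriv_nonpos (convex_Ici _)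
    · intro t _; exact (hd t).continuousAt.continuousWithinAt
    · intro t _; exact (hd t).differentiableAt.differentiableWithinAt
    · intro t ht; rw [interior_Ici] at ht
      have t0 : 0 < t := ht
      rw [(hd t).deriv, u3 t t0, v3 t t0]
      have e0 := exp_pos (-(L * t))
      have hF := F_lip hb hab (u t) (v t)
      set w := u t - v t
      set z := deriv u t - deriv v t with hz
      set f := Fnl a b (u t) - Fnl a b (v t) with hf
      have e1 : (-(m / t) * deriv u t - Fnl a b (u t)) - (-(m / t) * deriv v t - Fnl a b (v t))
        = -(m / t) * z - f := by rw [hz, hf]; ring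
      rw [e1]
      have hm : 0 ≤ (m:ℝ) / t * z ^ 2 := by positivity
      have k1 : -(z * f) ≤ |z| * (4 * a * |w|) := by
        calc -(z * f) ≤ |z * f| := neg_le_abs _
          _ = |z| * |f| := abs_mul _ _
          _ ≤ _ := by gcongr
      have k2 : 2 * (|z| * |w|) ≤ w ^ 2 + z ^ 2 := by
        have := sq_nonneg (|z| - |w|)
        have := sq_abs z
        have := sq_abs w
        nlinarith
      have k3 : w * z ≤ |z| * |w| := by rw [← abs_mul, mul_comm]; exact le_abs_self _
      have k4 : 2 * w * z + 2 * z * (-(m / t) * z - f) - L * (w ^ 2 + z ^ 2) ≤ 0 := by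
        have : 2 * w * z + 2 * z * (-(m / t) * z - f) = 2 * (w * z) - 2 * (m / t * z ^ 2) + 2 * -(z * f) := by ring
        rw [this, hL]
        have := mul_le_mul_of_nonneg_left k2 (show 0 ≤ 4 * a by linarith)
        linarith
      have : (2 * w * z + 2 * z * (-(m / t) * z - f)) * exp (-(L * t)) +
        (w ^ 2 + z ^ 2) * (exp (-(L * t)) * (-(L * 1))) =
        (2 * w * z + 2 * z * (-(m / t) * z - f) - L * (w ^ 2 + z ^ 2)) * exp (-(L * t)) := by ring
      rw [this]
      exact mul_nonpos_of_nonpos_of_nonneg k4 e0.le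
  intro x hx
  have hx0 : (0:ℝ) ≤ x := hx
  have h1 := anti (mem_Ici.2 le_rfl) hx hx0
  simp only at h1
  rw [h0, hu.2.1, hv.2.1] at h1
  simp only [sub_self] at h1
  have e0 := exp_pos (-(L * x))
  have h2 : (u x - v x) ^ 2 + (deriv u x - deriv v x) ^ 2 ≤ 0 := by
    by_contra! hc
    have := mul_pos hc e0
    norm_num at h1
    linarith
  have : (u x - v x) ^ 2 ≤ 0 := by nlinarith [sq_nonneg (deriv u x - deriv v x)]
  have := pow_eq_zero_iff two_ne_zero |>.1 (le_antisymm this (sq_nonneg _))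
  linarith

end RGS

namespace RGS
open Set Topology

section
variable {m : ℕ} {a b : ℝ} {u : ℝ → ℝ}

def En (a b : ℝ) (u : ℝ → ℝ) (x : ℝ) : ℝ := deriv u x ^ 2 / 2 + Gnl a b (u x)

lemma En_d (ha : a ≠ 0) (hu : IsRadialSol (m+1) a b u) (x : ℝ) :
    HasDerivAt (En a b u) (deriv u x * (deriv (deriv u) x + Fnl a b (u x))) x := by
  obtain ⟨u1, u2, -, u3⟩ := sol_d hu
  refine ((((u2 x).pow 2).div_const 2).add ((hasDerivAt_Gnl (b := b) ha (u x)).comp x (u1 x))).congr_deriv ?_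
  simp
  ring

lemma En_lim (hl : Tendsto u atTop (𝓝 0)) (hl' : Tendsto (deriv u) atTop (𝓝 0)) :
    Tendsto (En a b u) atTop (𝓝 0) := by
  have h1 : Tendsto (fun x => Gnl a b (u x)) atTop (𝓝 (Gnl a b 0)) := ((cont_Gnl a b).tendsto 0).comp hl
  have h2 := ((hl'.pow 2).div_const 2).add h1
  have e : (0:ℝ) ^ 2 / 2 + Gnl a b 0 = 0 := by simp [Gnl]
  rw [e] at h2
  exact h2

lemma En_anti (ha : a ≠ 0) (hu : IsRadialSol (m+1) a b u) : AntitoneOn (En a b u) (Ici 0) := by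
  obtain ⟨u1, u2, -, u3⟩ := sol_d hu
  apply antitoneOn_of_deriv_nonpos (convex_Ici _)
  · intro t _; exact (En_d ha hu t).continuousAt.continuousWithinAt
  · intro t _; exact (En_d ha hu t).differentiableAt.differentiableWithinAt
  · intro t ht; rw [interior_Ici] at ht
    have t0 : 0 < t := ht
    rw [(En_d ha hu t).deriv, u3 t t0]
    have : deriv u t * (-(m / t) * deriv u t - Fnl a b (u t) + Fnl a b (u t)) = -(m / t * deriv u t ^ 2) := by ring
    rw [this]
    have : 0 ≤ m / t * deriv u t ^ 2 := by positivity
    linarith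

lemma En_nonneg (ha : a ≠ 0) (hu : IsRadialSol (m+1) a b u) (hl : Tendsto u atTop (𝓝 0))
    (hl' : Tendsto (deriv u) atTop (𝓝 0)) {x : ℝ} (hx : 0 ≤ x) : 0 ≤ En a b u x := by
  apply le_of_tendsto (En_lim hl hl')
  filter_upwards [eventually_ge_atTop x] with t ht
  exact En_anti ha hu hx (hx.trans ht) ht

lemma En_zero (ha : a ≠ 0) (hu : IsRadialSol (0+1) a b u) (hl : Tendsto u atTop (𝓝 0))
    (hl' : Tendsto (deriv u) atTop (𝓝 0)) : Gnl a b (u 0) = 0 := by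
  have h0 := En_nonneg ha hu hl hl' le_rfl
  have hm : MonotoneOn (En a b u) (Ici 0) := by
    obtain ⟨u1, u2, -, u3⟩ := sol_d hu
    apply monotoneOn_of_deriv_nonneg (convex_Ici _)
    · intro t _; exact (En_d ha hu t).continuousAt.continuousWithinAt
    · intro t _; exact (En_d ha hu t).differentiableAt.differentiableWithinAt
    · intro t ht; rw [interior_Ici] at ht
      have t0 : 0 < t := ht
      rw [(En_d ha hu t).deriv, u3 t t0]
      simp
  have h1 : En a b u 0 ≤ 0 := by
    apply ge_of_tendsto (En_lim hl hl')
    filter_upwards [eventually_ge_atTop 0] with t ht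
    exact hm (mem_Ici.2 le_rfl) ht ht
  have : En a b u 0 = Gnl a b (u 0) := by unfold En; rw [hu.2.1]; ring
  linarith

lemma lt_half_pi (hb : 0 < b) (hab : 2 * b < a) (hu : IsRadialSol (m+1) a b u)
    (hp : ∀ r, 0 ≤ r → 0 < u r) (hl : Tendsto u atTop (𝓝 0)) {x : ℝ} (hx : 0 ≤ x) : u x < π / 2 := by
  by_contra! hge
  have ha : a ≠ 0 := by linarith
  have ha0 : 0 < a := by linarith
  obtain ⟨u1, u2, -, u3⟩ := sol_d hu
  have hpi := pi_pos
  obtain ⟨t, ht1, ht2⟩ := ((hl.eventually_lt_const (show (0:ℝ) < π / 2 by linarith)).and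
    (eventually_ge_atTop x)).exists
  obtain ⟨y, hy, hyp⟩ := intermediate_value_Icc' ht2
    (fun t _ => (u1 t).continuousAt.continuousWithinAt) ⟨ht1.le, hge⟩
  have y0 : 0 ≤ y := hx.trans hy.1
  have h1 := En_anti ha hu (mem_Ici.2 le_rfl) y0 y0
  unfold En at h1
  rw [hu.2.1, hyp] at h1
  have h2 : (a - 2 * b) / 4 ≤ Gnl a b (u 0) := by
    have : Gnl a b (π / 2) = (a - 2 * b) / 4 := by unfold Gnl; rw [sin_pi_div_two]; ring
    have := sq_nonneg (deriv u y)
    linarith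
  have h3 : cos (u 0) = 0 := by
    by_contra hc
    have hc2 : 0 < cos (u 0) ^ 2 := by positivity
    have hs := sin_sq_add_cos_sq (u 0)
    have hs2 := sq_nonneg (sin (u 0))
    unfold Gnl at h2
    set X := sin (u 0) ^ 2
    have hX1 : X < 1 := by linarith
    have : 0 < X * (a * X - 2 * b) := by linarith
    have : 0 < a * X - 2 * b := pos_of_mul_pos_right this hs2
    nlinarith
  have h4 : Fnl a b (u 0) = 0 := by rw [Fnl_eq ha, h3]; ring
  have hconst : IsRadialSol (m+1) a b (fun _ => u 0) := by
    refine ⟨contDiff_const, by simp, ?_⟩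
    intro r _
    simp [h4]
  have heq := ivp hb hab hu hconst rfl
  have : Tendsto u atTop (𝓝 (u 0)) := by
    apply tendsto_const_nhds.congr'
    filter_upwards [eventually_ge_atTop 0] with t ht
    exact (heq ht).symm
  have := tendsto_nhds_unique this hl
  linarith [hp 0 le_rfl]

lemma al_lt_of_G (hb : 0 < b) (hab : 2 * b < a) {x : ℝ} (h0 : 0 < x) (h1 : x < π / 2)
    (hG : 0 ≤ Gnl a b x) : al a b < x := by
  obtain ⟨al0, al1, al2⟩ := al_mem hb hab
  have ha0 : 0 < a := by linarith
  have s0 : 0 < sin x := sin_pos_of_pos_of_lt_pi h0 (by linarith [pi_pos])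
  have : 0 ≤ a * sin x ^ 2 - 2 * b := by
    unfold Gnl at hG
    by_contra! hc
    have : sin x ^ 2 / 4 * (a * sin x ^ 2 - 2 * b) < 0 := mul_neg_of_pos_of_neg (by positivity) hc
    linarith
  by_contra! hc
  rcases hc.eq_or_lt with he | hlt
  · rw [he, al2] at this
    have : a * (b / a) = b := by field_simp
    linarith
  · linarith [X_lt hb hab h0 hlt]

lemma dd0 (hu : IsRadialSol (m+1) a b u) : deriv (deriv u) 0 = -(Fnl a b (u 0) / (m + 1)) := by
  obtain ⟨u1, u2, u2c, u3⟩ := sol_d hu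
  have h1 : Tendsto (fun t => t⁻¹ * deriv u t) (𝓝[>] 0) (𝓝 (deriv (deriv u) 0)) := by
    have := (u2 0).tendsto_slope_zero_right
    simpa [hu.2.1] using this
  have h2 : Tendsto (deriv (deriv u)) (𝓝[>] 0) (𝓝 (deriv (deriv u) 0)) :=
    (u2c.tendsto 0).mono_left nhdsWithin_le_nhds
  have h3 : Tendsto (fun t => Fnl a b (u t)) (𝓝[>] 0) (𝓝 (Fnl a b (u 0))) :=
    ((cont_Fnl a b).continuousAt.comp (u1 0).continuousAt).tendsto.mono_left nhdsWithin_le_nhds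
  have h4 := (h2.add (h1.const_mul (m:ℝ))).add h3
  have h5 : Tendsto (fun t => deriv (deriv u) t + m * (t⁻¹ * deriv u t) + Fnl a b (u t)) (𝓝[>] 0) (𝓝 0) := by
    apply tendsto_const_nhds.congr'
    filter_upwards [self_mem_nhdsWithin] with t ht
    rw [u3 t ht]; ring
  have := tendsto_nhds_unique h4 h5
  field_simp
  linarith

lemma du_neg (hb : 0 < b) (hab : 2 * b < a) (hu : IsRadialSol (m+1) a b u)
    (hp : ∀ r, 0 ≤ r → 0 < u r) (hl : Tendsto u atTop (𝓝 0)) (hl' : Tendsto (deriv u) atTop (𝓝 0)) :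
    al a b < u 0 ∧ ∀ x, 0 < x → deriv u x < 0 := by
  have ha : a ≠ 0 := by linarith
  obtain ⟨u1, u2, u2c, u3⟩ := sol_d hu
  have hal : ∀ x, 0 ≤ x → deriv u x = 0 → al a b < u x := by
    intro x hx hd
    apply al_lt_of_G hb hab (hp x hx) (lt_half_pi hb hab hu hp hl hx)
    have := En_nonneg ha hu hl hl' hx
    unfold En at this
    rw [hd] at this
    linarith
  have h0 := hal 0 le_rfl hu.2.1
  refine ⟨h0, ?_⟩
  have F0 := F_pos hb hab h0 (lt_half_pi hb hab hu hp hl le_rfl)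
  intro x hx
  by_contra! hge
  have h1 : Tendsto (fun t => t⁻¹ * deriv u t) (𝓝[>] 0) (𝓝 (deriv (deriv u) 0)) := by
    have := (u2 0).tendsto_slope_zero_right
    simpa [hu.2.1] using this
  have hneg : deriv (deriv u) 0 < 0 := by
    rw [dd0 hu]
    have : 0 < Fnl a b (u 0) / (m + 1) := by positivity
    linarith
  obtain ⟨c, hc, hcx⟩ := ((h1.eventually_lt_const hneg).and (Ioo_mem_nhdsGT hx)).exists
  have c0 : 0 < c := hcx.1
  have hc' : deriv u c < 0 := by
    by_contra! hh
    have : 0 ≤ c⁻¹ * deriv u c := by positivity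
    linarith
  obtain ⟨y, hy, hy0, hyp⟩ := first_zero (g := fun t => -deriv u t) hcx.2
    (fun t _ => (u2 t).neg.continuousAt.continuousWithinAt) (by linarith) (by linarith)
  have y0 : 0 < y := c0.trans hy.1
  have h2 := deriv_left hy.1 (u2 y).neg hy0 (fun t ht => hyp t ⟨ht.1.le, ht.2⟩)
  have hdy : deriv u y = 0 := by linarith
  have := F_pos hb hab (hal y y0.le hdy) (lt_half_pi hb hab hu hp hl y0.le)
  rw [u3 y y0, hdy] at h2
  linarith

lemma to_prof (hb : 0 < b) (hab : 2 * b < a) (hu : IsRadialSol (m+1) a b u)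
    (hp : ∀ r, 0 ≤ r → 0 < u r) (hl : Tendsto u atTop (𝓝 0)) (hl' : Tendsto (deriv u) atTop (𝓝 0)) :
    ∃ r p : ℝ → ℝ, Prof m a b (u 0) r p := by
  have ha : a ≠ 0 := by linarith
  obtain ⟨u1, u2, u2c, u3⟩ := sol_d hu
  obtain ⟨h0, hneg⟩ := du_neg hb hab hu hp hl hl'
  have hpi := lt_half_pi hb hab hu hp hl le_rfl
  have F0 := F_pos hb hab h0 hpi
  have hanti : StrictAntiOn u (Ici 0) := by
    apply strictAntiOn_of_deriv_neg (convex_Ici _)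
    · intro t _; exact (u1 t).continuousAt.continuousWithinAt
    · intro t ht; rw [interior_Ici] at ht; exact hneg t ht
  obtain ⟨-, R, hR⟩ := inv_exists (s := Ioi 0) isOpen_Ioi ordConnected_Ioi (fun t _ => u1 t)
    (fun t ht => hneg t ht)
  have hsurj : ∀ y ∈ Ioo 0 (u 0), y ∈ u '' Ioi 0 := by
    intro y hy
    obtain ⟨t, ht1, ht2⟩ := ((hl.eventually_lt_const hy.1).and (eventually_ge_atTop 0)).exists
    have := intermediate_value_Ioo' ht2 (f := u) (fun t _ => (u1 t).continuousAt.continuousWithinAt)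
    exact image_mono (fun z hz => hz.1) (this ⟨ht1, hy.2⟩)
  have hR1 : ∀ y ∈ Ioo 0 (u 0), 0 < R y := fun y hy => (hR y (hsurj y hy)).1
  have hR2 : ∀ y ∈ Ioo 0 (u 0), u (R y) = y := fun y hy => (hR y (hsurj y hy)).2.1
  have hR3 : ∀ y ∈ Ioo 0 (u 0), HasDerivAt R (deriv u (R y))⁻¹ y := fun y hy => (hR y (hsurj y hy)).2.2
  have u00 := hp 0 le_rfl
  have Rtop : Tendsto R (𝓝[<] (u 0)) (𝓝[>] 0) := by
    apply tendsto_nhdsWithin_of_tendsto_nhds_of_eventually_within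
    · rw [tendsto_order]
      constructor
      · intro z hz
        filter_upwards [Ioo_mem_nhdsLT u00] with y hy
        exact hz.trans (hR1 y hy)
      · intro z hz
        have hz0 : (0:ℝ) < z := hz
        filter_upwards [Ioo_mem_nhdsLT (hanti (mem_Ici.2 le_rfl) hz0.le hz0)] with y hy
        have hy' : y ∈ Ioo 0 (u 0) := ⟨(hp z hz0.le).trans hy.1, hy.2⟩
        by_contra! hc
        have := hanti.antitoneOn (mem_Ici.2 hz0.le) (mem_Ici.2 (hR1 y hy').le) hc
        rw [hR2 y hy'] at this
        linarith [hy.1]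
    · filter_upwards [Ioo_mem_nhdsLT u00] with y hy
      exact hR1 y hy
  have Rbot : Tendsto R (𝓝[>] 0) atTop := by
    rw [tendsto_atTop]
    intro T
    set z := max T 1
    have z0 : 0 < z := lt_max_of_lt_right one_pos
    filter_upwards [Ioo_mem_nhdsGT (hp z z0.le)] with y hy
    have hy' : y ∈ Ioo 0 (u 0) := ⟨hy.1, hy.2.trans (hanti (mem_Ici.2 le_rfl) (mem_Ici.2 z0.le) z0)⟩
    refine (le_max_left T 1).trans ?_
    by_contra! hc
    have := hanti (mem_Ici.2 (hR1 y hy').le) (mem_Ici.2 z0.le) hc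
    rw [hR2 y hy'] at this
    linarith [hy.2]
  refine ⟨R, fun y => -deriv u (R y), h0, hpi, hR1, fun y hy => by linarith [hneg _ (hR1 y hy)],
    ?_, ?_, Rtop.mono_right nhdsWithin_le_nhds, ?_, ?_, Rbot, ?_⟩
  · intro y hy
    refine (hR3 y hy).congr_deriv ?_
    rw [one_div, inv_neg, neg_neg]
  · intro y hy
    refine ((u2 (R y)).comp y (hR3 y hy)).neg.congr_deriv ?_
    rw [u3 _ (hR1 y hy), hR2 y hy]
    have := (hR1 y hy).ne'
    have := (hneg _ (hR1 y hy)).ne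
    field_simp
    ring
  · have := ((u2 0).continuousAt.tendsto.comp (Rtop.mono_right nhdsWithin_le_nhds)).neg
    rw [hu.2.1, neg_zero] at this
    exact this
  · have h1 : Tendsto (fun t => t⁻¹ * deriv u t) (𝓝[>] 0) (𝓝 (deriv (deriv u) 0)) := by
      have := (u2 0).tendsto_slope_zero_right
      simpa [hu.2.1] using this
    rw [dd0 hu] at h1
    have h2 := (h1.comp Rtop).neg
    rw [neg_neg] at h2
    have h3 : Tendsto (Fnl a b) (𝓝[<] (u 0)) (𝓝 (Fnl a b (u 0))) :=
      ((cont_Fnl a b).tendsto _).mono_left nhdsWithin_le_nhds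
    have hne : Fnl a b (u 0) / (m + 1) ≠ 0 := by positivity
    have h4 := h3.div h2 hne
    have e : Fnl a b (u 0) / (Fnl a b (u 0) / (m + 1)) = m + 1 := by field_simp
    rw [e] at h4
    refine h4.congr' ?_
    filter_upwards [Ioo_mem_nhdsLT u00] with y hy
    have := (hR1 y hy).ne'
    have := (hneg _ (hR1 y hy)).ne
    simp only [Pi.div_apply, Function.comp_apply]
    field_simp
  · have := (hl'.comp Rbot).neg
    rw [neg_zero] at this
    exact this

end
end RGS

theorem uniqueness_of_radial_ground_state (d : ℕ) (hd : 1 ≤ d) (a b : ℝ)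
    (hb : 0 < b) (hab : 2 * b < a)
    (Q : ℝ → ℝ) (hQ : IsRadialSol d a b Q)
    (hQpos : ∀ r : ℝ, 0 ≤ r → 0 < Q r)
    (hQdec : StrictAntiOn Q (Set.Ici 0))
    (hQlim : Tendsto Q atTop (nhds 0))
    (hQlim' : Tendsto (deriv Q) atTop (nhds 0))
    (u : ℝ → ℝ) (hu : IsRadialSol d a b u)
    (hupos : ∀ r : ℝ, 0 ≤ r → 0 < u r)
    (hulim : Tendsto u atTop (nhds 0))
    (hulim' : Tendsto (deriv u) atTop (nhds 0)) :
    Set.EqOn u Q (Set.Ici 0) := by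
  obtain ⟨m, rfl⟩ : ∃ m, d = m + 1 := ⟨d - 1, by omega⟩
  apply RGS.ivp hb hab hu hQ
  rcases Nat.eq_zero_or_pos m with rfl | hm
  · have ha : a ≠ 0 := by linarith
    have key : ∀ v : ℝ → ℝ, IsRadialSol (0+1) a b v → (∀ r : ℝ, 0 ≤ r → 0 < v r) →
        Tendsto v atTop (nhds 0) → Tendsto (deriv v) atTop (nhds 0) →
        0 < v 0 ∧ v 0 < π / 2 ∧ 0 < sin (v 0) ∧ a * sin (v 0) ^ 2 = 2 * b := by
      intro v hv hvp hvl hvl'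
      have h1 := RGS.En_zero ha hv hvl hvl'
      have h2 := RGS.lt_half_pi hb hab hv hvp hvl le_rfl
      have h3 := hvp 0 le_rfl
      have s0 : 0 < sin (v 0) := sin_pos_of_pos_of_lt_pi h3 (by linarith [pi_pos])
      refine ⟨h3, h2, s0, ?_⟩
      unfold RGS.Gnl at h1
      rcases mul_eq_zero.1 h1 with h | h
      · have : 0 < sin (v 0) ^ 2 / 4 := by positivity
        linarith
      · linarith
    obtain ⟨p1, p2, p3, p4⟩ := key u hu hupos hulim hulim'
    obtain ⟨q1, q2, q3, q4⟩ := key Q hQ hQpos hQlim hQlim'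
    have e : sin (u 0) ^ 2 = sin (Q 0) ^ 2 := mul_left_cancel₀ ha (p4.trans q4.symm)
    have e2 := (pow_left_inj₀ p3.le q3.le two_ne_zero).1 e
    exact injOn_sin ⟨by linarith, by linarith⟩ ⟨by linarith, by linarith⟩ e2
  · obtain ⟨r, p, h⟩ := RGS.to_prof hb hab hu hupos hulim hulim'
    obtain ⟨s, q, k⟩ := RGS.to_prof hb hab hQ hQpos hQlim hQlim'
    exact le_antisymm (not_lt.1 (h.not_lt hm hb hab k)) (not_lt.1 (k.not_lt hm hb hab h))
end
end
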